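/- arXiv:2102.03871 — 2 statements merged into one kernel-verified Lean document; each statement's English description precedes it below -/
import Mathlib

section
/- Let j be a positive integer and set k := ⌈log₂(j(j+1))⌉ + 7. Let M^{(1)}, …, M^{(k)} be weight sequences satisfying (m^{(i)}_ℓ)^{1/ℓ} → ∞ for all 1 ≤ i ≤ k, such that there exists B ≥ 1 with Γ̄_{m^{(2)}}(B·t) ≤ Γ̲_{m^{(1)}}(t) for all t > 0, and mg(M^{(i)}, M^{(i+1)}) < ∞ for all 2 ≤ i ≤ k−1. Let f : [-1,1] → ℂ. (Roumieu case) If f^j and f^{j+1} are restrictions to [-1,1] of C^∞ functions g, h on (-1,1) with sup_{x,ℓ} |g^{(ℓ)}(x)|/(σ^ℓ·M^{(1)}_ℓ) < ∞ and sup_{x,ℓ} |h^{(ℓ)}(x)|/(σ^ℓ·M^{(1)}_ℓ) < ∞ for some σ > 0, then f is of class E^{M^{(k)}} (Roumieu) on (-1,1). (Beurling case) If the above bounds on g and h hold for every σ > 0 (with constants allowed to depend on σ), then f is of class E^{(M^{(k)})} (Beurling) on (-1,1). -/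
open Filter Set Asymptotics MeasureTheory

noncomputable section

/-- `M` is a weight sequence: `M 0 = 1`, positive, `M 1 ≥ 1`, log-convex and
`M k ^ (1/k) → ∞`. -/
def IsWeightSeq (M : ℕ → ℝ) : Prop :=
  M 0 = 1 ∧ (∀ k, 0 < M k) ∧ 1 ≤ M 1 ∧
    (∀ k : ℕ, 1 ≤ k → M k ^ 2 ≤ M (k - 1) * M (k + 1)) ∧
    Tendsto (fun k : ℕ => M k ^ (1 / (k : ℝ))) atTop atTop

/-- The sequence `m k = M k / k!`. -/
def mseq (M : ℕ → ℝ) : ℕ → ℝ := fun k => M k / (Nat.factorial k : ℝ)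

/-- Log-convexity of a sequence. -/
def LogConvexSeq (m : ℕ → ℝ) : Prop := ∀ k : ℕ, 1 ≤ k → m k ^ 2 ≤ m (k - 1) * m (k + 1)

/-- `m k ^ (1/k) → ∞`. -/
def RootTendsToInfty (m : ℕ → ℝ) : Prop :=
  Tendsto (fun k : ℕ => m k ^ (1 / (k : ℝ))) atTop atTop

/-- Moderate growth of a sequence. -/
def ModerateGrowth (M : ℕ → ℝ) : Prop :=
  ∃ C : ℝ, 0 < C ∧ ∀ j k : ℕ, M (j + k) ≤ C ^ (j + k) * M j * M k

/-- Derivation closedness of a sequence. -/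
def DerivClosed (M : ℕ → ℝ) : Prop :=
  ∃ C : ℝ, 0 < C ∧ ∀ k : ℕ, M (k + 1) ≤ C ^ (k + 1) * M k

/-- Non-quasianalyticity: `∑_{k≥1} M (k-1) / M k = ∑_{k≥1} 1/μ_k < ∞`. -/
def NonQuasianalytic (M : ℕ → ℝ) : Prop := Summable fun k : ℕ => M k / M (k + 1)

/-- Quasianalyticity: `∑_{k≥1} 1/μ_k = ∞`. -/
def Quasianalytic (M : ℕ → ℝ) : Prop := ¬ NonQuasianalytic M

/-- The associated function `h_m (t) = inf_k m k * t ^ k`. -/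
def hFun (m : ℕ → ℝ) (t : ℝ) : ℝ := ⨅ k : ℕ, m k * t ^ k

/-- `Γ̄_m (t) = min {k | h_m t = m k * t ^ k}`. -/
def GammaBar (m : ℕ → ℝ) (t : ℝ) : ℕ := sInf {k : ℕ | hFun m t = m k * t ^ k}

/-- `Γ̲_m (t) = min {k | m (k+1) / m k ≥ 1 / t}`. -/
def GammaLow (m : ℕ → ℝ) (t : ℝ) : ℕ := sInf {k : ℕ | 1 / t ≤ m (k + 1) / m k}

/-- The set whose supremum is `mg (M, N)`. -/
def mgSet (M N : ℕ → ℝ) : Set ℝ :=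
  {x | ∃ j k : ℕ, 1 ≤ j + k ∧ x = (M (j + k) / (N j * N k)) ^ (1 / (j + k : ℝ))}

/-- `mg (M, N) = sup_{j+k ≥ 1} (M (j+k) / (N j * N k)) ^ (1/(j+k))`. -/
def mg (M N : ℕ → ℝ) : ℝ := sSup (mgSet M N)

/-- `mg (M, N) < ∞`. -/
def MgFinite (M N : ℕ → ℝ) : Prop := BddAbove (mgSet M N)

/-- A weight sequence is regular: `m k ^ (1/k) → ∞`, derivation closed, and
`Γ̄_m (C t) ≤ Γ̲_m t` for some `C ≥ 1`. -/
def RegularWS (M : ℕ → ℝ) : Prop :=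
  RootTendsToInfty (mseq M) ∧ DerivClosed M ∧
    ∃ C : ℝ, 1 ≤ C ∧ ∀ t : ℝ, 0 < t → GammaBar (mseq M) (C * t) ≤ GammaLow (mseq M) t

/-- `f` is of class `E^{M}` (Roumieu) on the open set `U`. -/
def RoumieuOn {E : Type*} [NormedAddCommGroup E] [NormedSpace ℝ E]
    (M : ℕ → ℝ) (f : E → ℂ) (U : Set E) : Prop :=
  ContDiffOn ℝ (⊤ : ℕ∞) f U ∧
    ∀ V : Set E, IsOpen V → IsCompact (closure V) → closure V ⊆ U →
      ∃ C σ : ℝ, 0 < C ∧ 0 < σ ∧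
        ∀ x ∈ V, ∀ k : ℕ, ‖iteratedFDerivWithin ℝ k f U x‖ ≤ C * σ ^ k * M k

/-- `f` is of class `E^{(M)}` (Beurling) on the open set `U`. -/
def BeurlingOn {E : Type*} [NormedAddCommGroup E] [NormedSpace ℝ E]
    (M : ℕ → ℝ) (f : E → ℂ) (U : Set E) : Prop :=
  ContDiffOn ℝ (⊤ : ℕ∞) f U ∧
    ∀ V : Set E, IsOpen V → IsCompact (closure V) → closure V ⊆ U →
      ∀ σ : ℝ, 0 < σ → ∃ C : ℝ, 0 < C ∧
        ∀ x ∈ V, ∀ k : ℕ, ‖iteratedFDerivWithin ℝ k f U x‖ ≤ C * σ ^ k * M k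

/-- A weight matrix: a nonempty, pointwise totally ordered family of weight sequences. -/
def IsWeightMatrix (W : Set (ℕ → ℝ)) : Prop :=
  W.Nonempty ∧ (∀ M ∈ W, IsWeightSeq M) ∧
    ∀ M ∈ W, ∀ N ∈ W, (∀ k, M k ≤ N k) ∨ (∀ k, N k ≤ M k)

/-- R-regularity of a weight matrix. -/
def RRegular (W : Set (ℕ → ℝ)) : Prop :=
  (∀ M ∈ W, RootTendsToInfty (mseq M)) ∧
    (∀ M ∈ W, ∃ N ∈ W, ∃ C : ℝ, 1 ≤ C ∧ ∀ j : ℕ, M (j + 1) ≤ C ^ (j + 1) * N j) ∧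
    (∀ M ∈ W, ∃ N ∈ W, ∃ C : ℝ, 1 ≤ C ∧
      ∀ t : ℝ, 0 < t → GammaBar (mseq N) (C * t) ≤ GammaLow (mseq M) t)

/-- B-regularity of a weight matrix. -/
def BRegular (W : Set (ℕ → ℝ)) : Prop :=
  (∀ M ∈ W, RootTendsToInfty (mseq M)) ∧
    (∀ M ∈ W, ∃ N ∈ W, ∃ C : ℝ, 1 ≤ C ∧ ∀ j : ℕ, N (j + 1) ≤ C ^ j * M j) ∧
    (∀ M ∈ W, ∃ N ∈ W, ∃ C : ℝ, 1 ≤ C ∧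
      ∀ t : ℝ, 0 < t → GammaBar (mseq M) (C * t) ≤ GammaLow (mseq N) t)

/-- R-moderate growth of a weight matrix. -/
def RModerateGrowth (W : Set (ℕ → ℝ)) : Prop := ∀ M ∈ W, ∃ N ∈ W, MgFinite M N

/-- B-moderate growth of a weight matrix. -/
def BModerateGrowth (W : Set (ℕ → ℝ)) : Prop := ∀ M ∈ W, ∃ N ∈ W, MgFinite N M

/-- `f` is of class `E^{W}` (Roumieu, weight matrix) on the open set `U`. -/
def MatrixRoumieuOn {E : Type*} [NormedAddCommGroup E] [NormedSpace ℝ E]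
    (W : Set (ℕ → ℝ)) (f : E → ℂ) (U : Set E) : Prop :=
  ContDiffOn ℝ (⊤ : ℕ∞) f U ∧
    ∀ V : Set E, IsOpen V → IsCompact (closure V) → closure V ⊆ U →
      ∃ M ∈ W, ∃ C σ : ℝ, 0 < C ∧ 0 < σ ∧
        ∀ x ∈ V, ∀ k : ℕ, ‖iteratedFDerivWithin ℝ k f U x‖ ≤ C * σ ^ k * M k

/-- `f` is of class `E^{(W)}` (Beurling, weight matrix) on the open set `U`. -/
def MatrixBeurlingOn {E : Type*} [NormedAddCommGroup E] [NormedSpace ℝ E]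
    (W : Set (ℕ → ℝ)) (f : E → ℂ) (U : Set E) : Prop :=
  ContDiffOn ℝ (⊤ : ℕ∞) f U ∧
    ∀ V : Set E, IsOpen V → IsCompact (closure V) → closure V ⊆ U →
      ∀ M ∈ W, ∀ σ : ℝ, 0 < σ → ∃ C : ℝ, 0 < C ∧
        ∀ x ∈ V, ∀ k : ℕ, ‖iteratedFDerivWithin ℝ k f U x‖ ≤ C * σ ^ k * M k

/-- `ω` is a weight function. -/
def IsWeightFunction (ω : ℝ → ℝ) : Prop :=
  ContinuousOn ω (Ici 0) ∧ MonotoneOn ω (Ici 0) ∧ (∀ t ∈ Ici (0 : ℝ), 0 ≤ ω t) ∧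
    ((fun t => ω (2 * t)) =O[atTop] ω) ∧ (ω =o[atTop] fun t : ℝ => t) ∧
    ((fun t => Real.log t) =o[atTop] ω) ∧ ConvexOn ℝ (Ici 0) fun t => ω (Real.exp t)

/-- The Young conjugate `φ*_ω (s) = sup_{t ≥ 0} (s t - ω (e^t))`. -/
def phiStar (ω : ℝ → ℝ) (s : ℝ) : ℝ := sSup ((fun t => s * t - ω (Real.exp t)) '' Ici 0)

/-- Non-quasianalyticity of a weight function. -/
def NonQuasianalyticW (ω : ℝ → ℝ) : Prop := IntegrableOn (fun t => ω t / t ^ 2) (Ici 1)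

/-- `f` is of class `E^{ω}` (Roumieu) on the open set `U`. -/
def OmegaRoumieuOn {E : Type*} [NormedAddCommGroup E] [NormedSpace ℝ E]
    (ω : ℝ → ℝ) (f : E → ℂ) (U : Set E) : Prop :=
  ContDiffOn ℝ (⊤ : ℕ∞) f U ∧
    ∀ V : Set E, IsOpen V → IsCompact (closure V) → closure V ⊆ U →
      ∃ C ρ : ℝ, 0 < C ∧ 0 < ρ ∧
        ∀ x ∈ V, ∀ k : ℕ,
          ‖iteratedFDerivWithin ℝ k f U x‖ ≤ C * Real.exp (phiStar ω (ρ * k) / ρ)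

/-- `f` is of class `E^{(ω)}` (Beurling) on the open set `U`. -/
def OmegaBeurlingOn {E : Type*} [NormedAddCommGroup E] [NormedSpace ℝ E]
    (ω : ℝ → ℝ) (f : E → ℂ) (U : Set E) : Prop :=
  ContDiffOn ℝ (⊤ : ℕ∞) f U ∧
    ∀ V : Set E, IsOpen V → IsCompact (closure V) → closure V ⊆ U →
      ∀ ρ : ℝ, 0 < ρ → ∃ C : ℝ, 0 < C ∧
        ∀ x ∈ V, ∀ k : ℕ,
          ‖iteratedFDerivWithin ℝ k f U x‖ ≤ C * Real.exp (phiStar ω (ρ * k) / ρ)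

/-- The open ellipse `Ω_ε` with vertices `± cosh ε` and co-vertices `± i sinh ε`. -/
def OmegaE (ε : ℝ) : Set ℂ :=
  {z : ℂ | (z.re / Real.cosh ε) ^ 2 + (z.im / Real.sinh ε) ^ 2 < 1}

/-- The sequence space `Λ^{M}`. -/
def Lambda (M : ℕ → ℝ) : Set (ℕ → ℂ) :=
  {c | ∃ ρ : ℝ, 0 < ρ ∧ ∃ C : ℝ, ∀ k, ‖c k‖ ≤ C * ρ ^ k * M k}

/-- `L(M)`: all non-quasianalytic weight sequences `N ≥ M` with `n = N/k!` log-convex. -/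
def LM (M : ℕ → ℝ) : Set (ℕ → ℝ) :=
  {N | IsWeightSeq N ∧ NonQuasianalytic N ∧ (∀ k, M k ≤ N k) ∧ LogConvexSeq (mseq N)}

/-- A quasianalytic weight sequence `M` is intersectable if `Λ^{M} = ⋂_{N ∈ L(M)} Λ^{N}`. -/
def Intersectable (M : ℕ → ℝ) : Prop := Lambda M = ⋂ N ∈ LM M, Lambda N




open Complex.HadamardThreeLines in
/-- Two constants lemma (unit scale). -/
lemma two_const_unit (G : ℂ → ℂ) (K e : ℝ) (hG : DifferentiableOn ℂ G (Metric.ball 0 2))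
    (hK : ∀ z ∈ Metric.ball (0:ℂ) 2, ‖G z‖ ≤ K)
    (he0 : 0 ≤ e) (heK : e ≤ K)
    (he : ∀ y : ℝ, |y| ≤ 1 → ‖G y‖ ≤ e) (z : ℂ) (hz : ‖z‖ ≤ 1 / 2) :
    ‖G z‖ ≤ Real.sqrt (K * e) := by
  have hcosh : ∀ s : ℂ, s.re ∈ Icc (0:ℝ) 1 → Complex.cosh s ∈ Metric.ball (0:ℂ) 2 := by
    intro s hs
    rw [mem_ball_zero_iff]
    have h1 : ‖Complex.cosh s‖ ≤ Real.cosh s.re := by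
      rw [Complex.cosh, norm_div, Real.cosh_eq]
      have := norm_add_le (Complex.exp s) (Complex.exp (-s))
      rw [Complex.norm_exp, Complex.norm_exp, Complex.neg_re] at this
      simp only [Complex.norm_ofNat]
      linarith
    have h2 : Real.cosh s.re ≤ Real.cosh 1 := by
      rw [Real.cosh_le_cosh, abs_of_nonneg hs.1, abs_one]; exact hs.2
    have h3 : Real.cosh 1 < 2 := by
      rw [Real.cosh_eq]
      have a := Real.exp_one_lt_d9
      have b : Real.exp (-1) < 1 := by
        rw [Real.exp_lt_one_iff]; norm_num
      linarith
    linarith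
  obtain ⟨s0, hs0⟩ := Complex.cos_surjective z
  -- a point with cosh s = z and re s ≥ 0
  obtain ⟨s, hs, hsre⟩ : ∃ s : ℂ, Complex.cosh s = z ∧ 0 ≤ s.re := by
    have h1 : Complex.cosh (s0 * Complex.I) = z := by rw [Complex.cosh_mul_I, hs0]
    rcases le_total 0 (s0 * Complex.I).re with h | h
    · exact ⟨_, h1, h⟩
    · exact ⟨-(s0 * Complex.I), by rw [Complex.cosh_neg, h1], by simpa using h⟩
  have hre : s.re ≤ 1 / 2 := by
    by_contra hcon
    push Not at hcon
    have h1 : Real.sinh s.re ≤ ‖Complex.cosh s‖ := by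
      rw [Complex.cosh, norm_div, Real.sinh_eq]
      have := norm_sub_norm_le (Complex.exp s) (-Complex.exp (-s))
      rw [norm_neg, sub_neg_eq_add, Complex.norm_exp, Complex.norm_exp, Complex.neg_re] at this
      simp only [Complex.norm_ofNat]
      linarith
    have h2 : s.re < Real.sinh s.re := Real.self_lt_sinh_iff.2 (by linarith)
    rw [hs] at h1
    linarith
  have hmem : s ∈ verticalClosedStrip 0 1 := by
    simp only [verticalClosedStrip, mem_preimage, mem_Icc]
    exact ⟨hsre, by linarith⟩
  have hd : DifferentiableOn ℂ (fun s => G (Complex.cosh s)) (verticalClosedStrip 0 1) := by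
    intro w hw
    have hw' := hcosh w hw
    have := (hG.differentiableAt (Metric.isOpen_ball.mem_nhds hw')).comp w
      (Complex.differentiable_cosh w)
    exact this.differentiableWithinAt
  have hcl : closure (verticalStrip 0 1) ⊆ verticalClosedStrip 0 1 := by
    apply closure_minimal
    · intro w hw
      exact Ioo_subset_Icc_self hw
    · exact isClosed_Icc.preimage Complex.continuous_re
  have key := norm_le_interp_of_mem_verticalClosedStrip₀₁' (fun s => G (Complex.cosh s)) (a := e)
    (b := K) hmem ((hd.mono hcl).diffContOnCl) ?_ ?_ ?_
  · simp only [hs] at key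
    refine key.trans ?_
    have hKn : 0 ≤ K := he0.trans heK
    rcases he0.eq_or_lt with h0 | h0
    · rw [← h0, Real.zero_rpow (by linarith)]
      simp
    · have hK0 : 0 < K := h0.trans_le heK
      rw [Real.sqrt_eq_rpow, Real.mul_rpow hKn he0, mul_comm]
      have e1 : e ^ (1 - s.re) = e ^ (1/2:ℝ) * e ^ (1/2 - s.re) := by
        rw [← Real.rpow_add h0]; congr 1; ring
      have e2 : K ^ (1/2:ℝ) = K ^ s.re * K ^ (1/2 - s.re) := by
        rw [← Real.rpow_add hK0]; congr 1; ring
      rw [e1, e2]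
      have : e ^ (1/2 - s.re) ≤ K ^ (1/2 - s.re) :=
        Real.rpow_le_rpow he0 heK (by linarith)
      have p1 : 0 ≤ K ^ s.re := by positivity
      have p2 : 0 ≤ e ^ (1/2:ℝ) := by positivity
      have := mul_le_mul_of_nonneg_left this (mul_nonneg p1 p2)
      nlinarith
  · refine ⟨K, ?_⟩
    rintro _ ⟨w, hw, rfl⟩
    exact hK _ (hcosh w hw)
  · intro w hw
    simp only [mem_preimage, mem_singleton_iff] at hw
    have : Complex.cosh w = ((Real.cos w.im : ℝ) : ℂ) := by
      have : w = (w.im : ℂ) * Complex.I := by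
        apply Complex.ext <;> simp [hw]
      rw [this, Complex.cosh_mul_I]; simp
    rw [this]
    exact he _ (Real.abs_cos_le_one _)
  · intro w hw
    simp only [mem_preimage, mem_singleton_iff] at hw
    exact hK _ (hcosh w (by rw [hw]; simp))

/-- Two constants lemma, scaled. -/
lemma two_const (G : ℂ → ℂ) (x c K e : ℝ) (hc : 0 < c)
    (hG : DifferentiableOn ℂ G (Metric.ball (x:ℂ) (2 * c)))
    (hK : ∀ z ∈ Metric.ball (x:ℂ) (2 * c), ‖G z‖ ≤ K)
    (he0 : 0 ≤ e) (heK : e ≤ K)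
    (he : ∀ y : ℝ, |y - x| ≤ c → ‖G y‖ ≤ e) (z : ℂ) (hz : ‖z - x‖ ≤ c / 2) :
    ‖G z‖ ≤ Real.sqrt (K * e) := by
  have hmaps : MapsTo (fun w : ℂ => (x:ℂ) + c * w) (Metric.ball 0 2) (Metric.ball (x:ℂ) (2 * c)) := by
    intro w hw
    rw [mem_ball_zero_iff] at hw
    simp only [Metric.mem_ball, dist_eq_norm, add_sub_cancel_left, norm_mul, Complex.norm_real,
      Real.norm_eq_abs, abs_of_pos hc]
    nlinarith
  have hc' : (c:ℂ) ≠ 0 := by exact_mod_cast hc.ne'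
  have key := two_const_unit (fun w => G (x + c * w)) K e (hG.comp (by fun_prop) hmaps)
    (fun w hw => hK _ (hmaps hw)) he0 heK ?_ ((z - x) / c) ?_
  · have : (x:ℂ) + c * ((z - x) / c) = z := by field_simp; ring
    simpa only [this] using key
  · intro y hy
    have := he (x + c * y) (by
      rw [add_sub_cancel_left, abs_mul, abs_of_pos hc]; nlinarith)
    push_cast at this
    exact this
  · rw [norm_div, Complex.norm_real, Real.norm_eq_abs, abs_of_pos hc, div_le_iff₀ hc]
    linarith


/-- Comparison of derivatives of two holomorphic functions both close to `f` on the reals. -/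
lemma cmp_deriv (f : ℝ → ℂ) (G₁ G₂ : ℂ → ℂ) (y r K e₁ e₂ : ℝ) (hr : 0 < r)
    (h1 : DifferentiableOn ℂ G₁ (Metric.ball (y:ℂ) (r / 2)))
    (h2 : DifferentiableOn ℂ G₂ (Metric.ball (y:ℂ) (r / 2)))
    (hK1 : ∀ z ∈ Metric.ball (y:ℂ) (r / 2), ‖G₁ z‖ ≤ K)
    (hK2 : ∀ z ∈ Metric.ball (y:ℂ) (r / 2), ‖G₂ z‖ ≤ K)
    (he1 : ∀ s : ℝ, |s - y| < r / 2 → ‖G₁ s - f s‖ ≤ e₁)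
    (he2 : ∀ s : ℝ, |s - y| < r / 2 → ‖G₂ s - f s‖ ≤ e₂)
    (h10 : 0 ≤ e₁) (h20 : 0 ≤ e₂) (h1K : e₁ ≤ K) (h2K : e₂ ≤ K) (a : ℕ) :
    ‖iteratedDeriv a G₁ y - iteratedDeriv a G₂ y‖ ≤
      a.factorial * (8 / r) ^ a * Real.sqrt (2 * K * (e₁ + e₂)) := by
  have hball : Metric.ball (y:ℂ) (r / 2) ∈ nhds (y:ℂ) := Metric.ball_mem_nhds _ (by linarith)
  have hd : DifferentiableOn ℂ (G₁ - G₂) (Metric.ball (y:ℂ) (r / 2)) := h1.sub h2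
  have hb := two_const (G₁ - G₂) y (r / 4) (2 * K) (e₁ + e₂) (by linarith)
    (by convert hd using 2; ring)
    (fun z hz => by
      have hz' : z ∈ Metric.ball (y:ℂ) (r / 2) := by convert hz using 2; ring
      have := norm_sub_le (G₁ z) (G₂ z)
      simp only [Pi.sub_apply]
      linarith [hK1 z hz', hK2 z hz'])
    (by linarith) (by linarith)
    (fun s hs => by
      have a1 := he1 s (by linarith)
      have a2 := he2 s (by linarith)
      have : (G₁ - G₂) s = (G₁ s - f s) - (G₂ s - f s) := by simp
      rw [this]
      exact (norm_sub_le _ _).trans (by linarith))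
  have hc1 : ContDiffAt ℂ a G₁ y := (h1.analyticAt hball).contDiffAt
  have hc2 : ContDiffAt ℂ a G₂ y := (h2.analyticAt hball).contDiffAt
  rw [← iteratedDeriv_sub hc1 hc2]
  have hsub : Metric.closedBall (y:ℂ) (r / 8) ⊆ Metric.ball (y:ℂ) (r / 2) :=
    Metric.closedBall_subset_ball (by linarith)
  have := Complex.norm_iteratedDeriv_le_of_forall_mem_sphere_norm_le (c := (y:ℂ)) (R := r / 8)
    (C := Real.sqrt (2 * K * (e₁ + e₂))) (f := G₁ - G₂) a (by linarith)
    ((hd.mono (Metric.closure_ball_subset_closedBall.trans hsub)).diffContOnCl)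
    (fun z hz => hb z (by
      rw [mem_sphere_iff_norm] at hz; linarith))
  refine this.trans (le_of_eq ?_)
  have : (8 / r) = (r / 8)⁻¹ := by rw [inv_div]
  rw [this, inv_pow]
  field_simp

/-- a second order Taylor estimate on the reals -/
lemma second_order (H₀ H₁ H₂ : ℝ → ℂ) (x x' B : ℝ)
    (h0 : ∀ s ∈ uIcc x x', HasDerivAt H₀ (H₁ s) s)
    (h1 : ∀ s ∈ uIcc x x', HasDerivAt H₁ (H₂ s) s)
    (hB : ∀ s ∈ uIcc x x', ‖H₂ s‖ ≤ B) :
    ‖H₀ x' - H₀ x - H₁ x * (x' - x)‖ ≤ B * |x' - x| ^ 2 := by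
  have hx : x ∈ uIcc x x' := left_mem_uIcc
  have hx' : x' ∈ uIcc x x' := right_mem_uIcc
  have hB0 : 0 ≤ B := (norm_nonneg _).trans (hB x hx)
  have hconv : Convex ℝ (uIcc x x') := convex_uIcc x x'
  have k1 : ∀ s ∈ uIcc x x', ‖H₁ s - H₁ x‖ ≤ B * |x' - x| := by
    intro s hs
    have := hconv.norm_image_sub_le_of_norm_hasDerivWithin_le
      (fun t ht => (h1 t ht).hasDerivWithinAt) hB hx hs
    refine this.trans ?_
    have hh : |s - x| ≤ |x' - x| := by
      exact abs_sub_left_of_mem_uIcc hs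
    rw [Real.norm_eq_abs]
    exact mul_le_mul_of_nonneg_left hh hB0
  have k2 := hconv.norm_image_sub_le_of_norm_hasDerivWithin_le
    (f := fun s : ℝ => H₀ s - H₁ x * s) (f' := fun s => H₁ s - H₁ x)
    (fun t ht => by
      have := ((h0 t ht).fun_sub (((hasDerivAt_id t).ofReal_comp).const_mul (H₁ x)))
      simpa using this.hasDerivWithinAt) k1 hx hx'
  have : H₀ x' - H₀ x - H₁ x * (x' - x) = H₀ x' - H₁ x * x' - (H₀ x - H₁ x * x) := by ring
  rw [this]
  refine k2.trans (le_of_eq ?_)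
  rw [Real.norm_eq_abs]; ring

lemma smooth_of_chain (f : ℝ → ℂ) (F : ℕ → ℝ → ℂ) (J : Set ℝ) (hJ : IsOpen J)
    (h0 : ∀ x ∈ J, F 0 x = f x) (hF : ∀ a, ∀ x ∈ J, HasDerivAt (F a) (F (a + 1) x) x) :
    ContDiffOn ℝ (⊤ : ℕ∞) f J ∧ ∀ a, ∀ x ∈ J, iteratedDeriv a f x = F a x := by
  have key : ∀ a, ∀ x ∈ J, iteratedDeriv a f x = F a x := by
    intro a
    induction a with
    | zero => intro x hx; rw [iteratedDeriv_zero, h0 x hx]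
    | succ a ih =>
      intro x hx
      rw [iteratedDeriv_succ]
      have : iteratedDeriv a f =ᶠ[nhds x] F a :=
        Filter.eventually_of_mem (hJ.mem_nhds hx) ih
      rw [this.deriv_eq, (hF a x hx).deriv]
  refine ⟨?_, key⟩
  apply contDiffOn_of_differentiableOn_deriv
  intro m _ x hx
  have : iteratedDerivWithin m f J =ᶠ[nhds x] F m :=
    Filter.eventually_of_mem (hJ.mem_nhds hx) (fun y hy => by
      rw [iteratedDerivWithin_of_isOpen hJ hy, key m y hy])
  exact (this.differentiableAt_iff.2 (hF m x hx).differentiableAt).differentiableWithinAt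


lemma hasDerivAt_of_quadratic (F : ℝ → ℂ) (F' : ℂ) (x Q δ : ℝ) (hδ : 0 < δ)
    (h : ∀ x', |x' - x| < δ → ‖F x' - F x - F' * (x' - x)‖ ≤ Q * |x' - x| ^ 2) :
    HasDerivAt F F' x := by
  rw [hasDerivAt_iff_isLittleO]
  have h1 : (fun x' => F x' - F x - (x' - x) • F') =O[nhds x] (fun x' => (x' - x) ^ 2) := by
    apply Asymptotics.IsBigO.of_bound Q
    filter_upwards [Metric.ball_mem_nhds x hδ] with x' hx'
    have := h x' (by rwa [Metric.mem_ball, Real.dist_eq] at hx')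
    rw [norm_pow, Real.norm_eq_abs]
    convert this using 3
    rw [Complex.real_smul]; push_cast; ring
  refine h1.trans_isLittleO ?_
  have h2 : (fun x' : ℝ => (x' - x)) =o[nhds x] (fun _ => (1 : ℝ)) := by
    rw [Asymptotics.isLittleO_one_iff]
    have : Tendsto (fun x' : ℝ => x' - x) (nhds x) (nhds (x - x)) :=
      (continuous_id.sub continuous_const).tendsto x
    simpa using this
  have := h2.mul_isBigO (Asymptotics.isBigO_refl (fun x' : ℝ => x' - x) (nhds x))
  simpa [pow_two] using this

lemma sqrt_aux (K e₁ e₂ E : ℝ) (hK : 0 ≤ K) (hE : 0 ≤ E) (h1 : e₁ ≤ E ^ 2) (h2 : e₂ ≤ E ^ 2) :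
    Real.sqrt (2 * K * (e₁ + e₂)) ≤ 2 * Real.sqrt K * E := by
  have : 2 * K * (e₁ + e₂) ≤ (2 * Real.sqrt K * E) ^ 2 := by
    rw [mul_pow, mul_pow, Real.sq_sqrt hK]
    nlinarith
  calc Real.sqrt (2 * K * (e₁ + e₂)) ≤ Real.sqrt ((2 * Real.sqrt K * E) ^ 2) :=
        Real.sqrt_le_sqrt this
    _ = _ := Real.sqrt_sq (by positivity)

lemma exists_scale (ℓ0 d : ℝ) (hd : 0 < d) (h : d ≤ ℓ0 / 2) :
    ∃ i : ℕ, d ≤ ℓ0 / 2 ^ i / 2 ∧ ℓ0 / 2 ^ i ≤ 4 * d := by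
  have h1 : 1 ≤ ℓ0 / (2 * d) := by
    rw [le_div_iff₀ (by positivity)]; linarith
  obtain ⟨i, hi1, hi2⟩ := exists_nat_pow_near h1 (one_lt_two)
  refine ⟨i, ?_, ?_⟩
  · rw [le_div_iff₀ (by positivity)] at hi1
    rw [div_div, le_div_iff₀ (by positivity)]; linarith
  · rw [div_lt_iff₀ (by positivity)] at hi2
    rw [div_le_iff₀ (by positivity)]
    rw [pow_succ] at hi2; nlinarith

lemma assembly (f : ℝ → ℂ) (L ℓ0 K C D : ℝ) (hℓ0 : 0 < ℓ0) (hK : 0 < K) (hC : 0 < C) (hD : 0 < D)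
    (w : ℕ → ℝ) (hw : ∀ a, 0 < w a) (e : ℕ → ℝ) (he0 : ∀ i, 0 ≤ e i) (heK : ∀ i, e i ≤ K)
    (H1 : ∀ (i : ℕ) (x : ℝ), |x| < L → ∃ G : ℂ → ℂ,
      DifferentiableOn ℂ G (Metric.ball (x:ℂ) (ℓ0 / 2 ^ i)) ∧
      (∀ z ∈ Metric.ball (x:ℂ) (ℓ0 / 2 ^ i), ‖G z‖ ≤ K) ∧
      ∀ y : ℝ, |y - x| < ℓ0 / 2 ^ i → ‖G y - f y‖ ≤ e i)
    (H2 : ∀ i a : ℕ, e i ≤ (C * (1 / 2) ^ i * (w a * (D * (ℓ0 / 2 ^ i)) ^ a)) ^ 2) :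
    ContDiffOn ℝ (⊤ : ℕ∞) f {x | |x| < L} ∧ ∀ (a : ℕ) (x : ℝ), |x| < L →
      ‖iteratedDeriv a f x‖ ≤ a.factorial * (2 / ℓ0) ^ a * K +
        4 * Real.sqrt K * C * a.factorial * w a * (8 * D) ^ a := by
  set ℓ : ℕ → ℝ := fun i => ℓ0 / 2 ^ i with hℓ
  have hℓpos : ∀ i, 0 < ℓ i := fun i => by simp only [hℓ]; positivity
  have hℓs : ∀ i, ℓ (i + 1) = ℓ i / 2 := fun i => by simp only [hℓ, pow_succ]; field_simp
  have hℓle : ∀ i, ℓ i ≤ ℓ0 := fun i => by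
    simp only [hℓ]
    exact div_le_self hℓ0.le (one_le_pow₀ (by norm_num))
  choose! G hGd hGK hGe using H1
  set J : Set ℝ := {x | |x| < L} with hJ
  have hJo : IsOpen J := isOpen_lt continuous_abs continuous_const
  set E : ℕ → ℕ → ℝ := fun i a => C * (1 / 2) ^ i * (w a * (D * ℓ i) ^ a) with hE
  have hE0 : ∀ i a, 0 ≤ E i a := fun i a => by
    have := hw a; have := hℓpos i; simp only [hE]; positivity
  have hEs : ∀ i a, E (i + 1) a ≤ E i a := fun i a => by
    have := hw a; have := hℓpos i
    simp only [hE, hℓs]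
    have q1 : ((1:ℝ) / 2) ^ (i + 1) ≤ (1 / 2) ^ i :=
      pow_le_pow_of_le_one (by norm_num) (by norm_num) (by omega)
    have q2 : ℓ i / 2 ≤ ℓ i := by linarith
    gcongr
  have he1 : ∀ i a, e i ≤ E i a ^ 2 := fun i a => H2 i a
  have he2 : ∀ i a, e (i + 1) ≤ E i a ^ 2 := fun i a =>
    (H2 (i + 1) a).trans (pow_le_pow_left₀ (hE0 (i + 1) a) (hEs i a) 2)
  have hKs : 0 ≤ Real.sqrt K := Real.sqrt_nonneg K
  -- constants
  set A : ℕ → ℝ := fun a => 2 * Real.sqrt K * C * a.factorial * w a * (8 * D) ^ a with hA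
  set R : ℕ → ℝ := fun a => 2 * Real.sqrt K * C * a.factorial * w (a + 2) * 8 ^ a * D ^ (a + 2)
    with hR
  have hR0 : ∀ a, 0 ≤ R a := fun a => by have := hw (a + 2); simp only [hR]; positivity
  have hA0 : ∀ a, 0 ≤ A a := fun a => by have := hw a; simp only [hA]; positivity
  have TA : ∀ i a (e₁ e₂ : ℝ), (∀ b, e₁ ≤ E i b ^ 2) → (∀ b, e₂ ≤ E i b ^ 2) →
      a.factorial * (8 / ℓ i) ^ a * Real.sqrt (2 * K * (e₁ + e₂)) ≤ A a * (1 / 2) ^ i := by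
    intro i a e₁ e₂ h1 h2
    have h3 := sqrt_aux K e₁ e₂ (E i a) hK.le (hE0 i a) (h1 a) (h2 a)
    have hp := hℓpos i
    calc _ ≤ a.factorial * (8 / ℓ i) ^ a * (2 * Real.sqrt K * E i a) := by gcongr
      _ = _ := by
        simp only [hE, hA, mul_pow, div_pow]
        field_simp
  have TR : ∀ i a (e₁ e₂ : ℝ), (∀ b, e₁ ≤ E i b ^ 2) → (∀ b, e₂ ≤ E i b ^ 2) →
      a.factorial * (8 / ℓ i) ^ a * Real.sqrt (2 * K * (e₁ + e₂)) ≤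
        R a * (ℓ i) ^ 2 * (1 / 2) ^ i := by
    intro i a e₁ e₂ h1 h2
    have h3 := sqrt_aux K e₁ e₂ (E i (a + 2)) hK.le (hE0 i (a + 2)) (h1 (a + 2)) (h2 (a + 2))
    have hp := hℓpos i
    calc _ ≤ a.factorial * (8 / ℓ i) ^ a * (2 * Real.sqrt K * E i (a + 2)) := by gcongr
      _ = _ := by
        simp only [hE, hR, mul_pow, div_pow]
        field_simp
        ring
  -- comparison between levels
  have cmp1 : ∀ i a x, x ∈ J → ‖iteratedDeriv a (G i x) x - iteratedDeriv a (G (i + 1) x) x‖ ≤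
      a.factorial * (8 / ℓ i) ^ a * Real.sqrt (2 * K * (e i + e (i + 1))) := by
    intro i a x hx
    have hp := hℓpos i
    have hsub : Metric.ball (x:ℂ) (ℓ i / 2) ⊆ Metric.ball (x:ℂ) (ℓ i) :=
      Metric.ball_subset_ball (by linarith)
    have hsub' : Metric.ball (x:ℂ) (ℓ i / 2) ⊆ Metric.ball (x:ℂ) (ℓ (i + 1)) := by
      rw [hℓs]
    exact cmp_deriv f (G i x) (G (i + 1) x) x (ℓ i) K (e i) (e (i + 1)) hp
      ((hGd i x hx).mono hsub) ((hGd (i + 1) x hx).mono hsub')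
      (fun z hz => hGK i x hx z (hsub hz)) (fun z hz => hGK (i + 1) x hx z (hsub' hz))
      (fun s hs => hGe i x hx s (by show _ < ℓ i; linarith))
      (fun s hs => hGe (i + 1) x hx s (by show _ < ℓ (i + 1); rw [hℓs]; linarith))
      (he0 i) (he0 _) (heK i) (heK _) a
  have cmp2 : ∀ i a x y, x ∈ J → y ∈ J → |y - x| ≤ ℓ i / 2 →
      ‖iteratedDeriv a (G i x) y - iteratedDeriv a (G i y) y‖ ≤
      a.factorial * (8 / ℓ i) ^ a * Real.sqrt (2 * K * (e i + e i)) := by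
    intro i a x y hx hy hxy
    have hp := hℓpos i
    have hsub : Metric.ball (y:ℂ) (ℓ i / 2) ⊆ Metric.ball (y:ℂ) (ℓ i) :=
      Metric.ball_subset_ball (by linarith)
    have hd : dist (y:ℂ) (x:ℂ) = |y - x| := by
      rw [Complex.dist_eq, ← Complex.ofReal_sub, Complex.norm_real, Real.norm_eq_abs]
    have hsub' : Metric.ball (y:ℂ) (ℓ i / 2) ⊆ Metric.ball (x:ℂ) (ℓ i) := by
      apply Metric.ball_subset_ball'
      rw [hd]; linarith
    exact cmp_deriv f (G i x) (G i y) y (ℓ i) K (e i) (e i) hp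
      ((hGd i x hx).mono hsub') ((hGd i y hy).mono hsub)
      (fun z hz => hGK i x hx z (hsub' hz)) (fun z hz => hGK i y hy z (hsub hz))
      (fun s hs => hGe i x hx s (by
        show _ < ℓ i
        have := abs_sub_le s y x
        linarith))
      (fun s hs => hGe i y hy s (by show _ < ℓ i; linarith))
      (he0 i) (he0 _) (heK i) (heK _) a
  have stepA : ∀ a x, x ∈ J → ∀ i, dist (iteratedDeriv a (G i x) x)
      (iteratedDeriv a (G (i + 1) x) x) ≤ A a * (1 / 2) ^ i := by
    intro a x hx i
    rw [dist_eq_norm]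
    exact (cmp1 i a x hx).trans (TA i a _ _ (he1 i) (he2 i))
  have stepR : ∀ a x, x ∈ J → ∀ i, dist (iteratedDeriv a (G i x) x)
      (iteratedDeriv a (G (i + 1) x) x) ≤ R a * ℓ0 ^ 2 * (1 / 8) ^ i := by
    intro a x hx i
    rw [dist_eq_norm]
    refine (cmp1 i a x hx).trans ((TR i a _ _ (he1 i) (he2 i)).trans (le_of_eq ?_))
    simp only [hℓ, div_pow, one_pow]
    have : (8:ℝ) ^ i = (2 ^ i) ^ 2 * 2 ^ i := by
      rw [show (8:ℝ) = 2 * 2 * 2 by norm_num, mul_pow, mul_pow]; ring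
    rw [this]; field_simp
  have hlim : ∀ a x, x ∈ J → ∃ c, Tendsto (fun i => iteratedDeriv a (G i x) (x:ℂ)) atTop (nhds c) :=
    fun a x hx => cauchySeq_tendsto_of_complete
      (cauchySeq_of_le_geometric (1 / 2) (A a) (by norm_num) (stepA a x hx))
  choose! F hF using hlim
  have tailR : ∀ a x, x ∈ J → ∀ i, ‖iteratedDeriv a (G i x) x - F a x‖ ≤ 2 * R a * ℓ i ^ 2 := by
    intro a x hx i
    have := dist_le_of_le_geometric_of_tendsto (1 / 8) (R a * ℓ0 ^ 2) (by norm_num)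
      (stepR a x hx) (hF a x hx) i
    rw [dist_eq_norm] at this
    refine this.trans ?_
    have h8 : ((1:ℝ) / 8) ^ i ≤ (1 / 4) ^ i := by gcongr; norm_num
    have h4 : ℓ i ^ 2 = ℓ0 ^ 2 * (1 / 4) ^ i := by
      simp only [hℓ, div_pow, one_pow]
      rw [← pow_mul, mul_comm i 2, pow_mul]; norm_num; field_simp
    rw [h4]
    have : 0 ≤ R a * ℓ0 ^ 2 := mul_nonneg (hR0 a) (by positivity)
    have h9 : R a * ℓ0 ^ 2 * (1 / 8) ^ i ≤ R a * ℓ0 ^ 2 * (1 / 4) ^ i := by gcongr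
    have h10 : 0 ≤ R a * ℓ0 ^ 2 * (1 / 8) ^ i := by positivity
    rw [div_le_iff₀ (by norm_num)]
    nlinarith
  have bndF : ∀ a x, x ∈ J → ‖F a x‖ ≤ a.factorial * (2 / ℓ0) ^ a * K + 2 * A a := by
    intro a x hx
    have h1 := dist_le_of_le_geometric_of_tendsto₀ (1 / 2) (A a) (by norm_num)
      (stepA a x hx) (hF a x hx)
    have h2 : ‖iteratedDeriv a (G 0 x) x‖ ≤ a.factorial * (2 / ℓ0) ^ a * K := by
      have hsub : Metric.closedBall (x:ℂ) (ℓ0 / 2) ⊆ Metric.ball (x:ℂ) (ℓ 0) := by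
        apply Metric.closedBall_subset_ball; simp only [hℓ]; norm_num; exact hℓ0
      have := Complex.norm_iteratedDeriv_le_of_forall_mem_sphere_norm_le (c := (x:ℂ))
        (R := ℓ0 / 2) (C := K) (f := G 0 x) a (by linarith)
        (((hGd 0 x hx).mono (Metric.closure_ball_subset_closedBall.trans hsub)).diffContOnCl)
        (fun z hz => hGK 0 x hx z (hsub (Metric.sphere_subset_closedBall hz)))
      refine this.trans (le_of_eq ?_)
      rw [show (2 / ℓ0) = (ℓ0 / 2)⁻¹ by rw [inv_div], inv_pow]; field_simp
    rw [dist_comm, dist_eq_norm] at h1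
    have h3 : ‖F a x‖ ≤ ‖F a x - iteratedDeriv a (G 0 x) x‖ + ‖iteratedDeriv a (G 0 x) x‖ := by
      simpa using norm_add_le (F a x - iteratedDeriv a (G 0 x) x) (iteratedDeriv a (G 0 x) x)
    have h4 : A a / (1 - 1 / 2) = 2 * A a := by ring
    linarith
  have near : ∀ a i x y, x ∈ J → y ∈ J → |y - x| ≤ ℓ i / 2 →
      ‖iteratedDeriv a (G i x) y - F a y‖ ≤ 3 * R a * ℓ i ^ 2 := by
    intro a i x y hx hy hxy
    have h1 := (cmp2 i a x y hx hy hxy).trans (TR i a _ _ (he1 i) (he1 i))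
    have h2 := tailR a y hy i
    have h3 : R a * ℓ i ^ 2 * (1 / 2) ^ i ≤ R a * ℓ i ^ 2 := by
      apply mul_le_of_le_one_right (mul_nonneg (hR0 a) (by positivity))
      exact pow_le_one₀ (by norm_num) (by norm_num)
    have h4 := norm_add_le (iteratedDeriv a (G i x) y - iteratedDeriv a (G i y) y)
      (iteratedDeriv a (G i y) y - F a y)
    rw [sub_add_sub_cancel] at h4
    linarith
  have F0 : ∀ x ∈ J, F 0 x = f x := by
    intro x hx
    have h1 := hF 0 x hx
    simp only [iteratedDeriv_zero] at h1
    refine tendsto_nhds_unique h1 ?_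
    rw [tendsto_iff_norm_sub_tendsto_zero]
    have h2 : Tendsto (fun i : ℕ => (C * (1 / 2 : ℝ) ^ i * (w 0 * 1)) ^ 2) atTop (nhds 0) := by
      have h3 : Tendsto (fun i : ℕ => (1 / 2 : ℝ) ^ i) atTop (nhds 0) :=
        tendsto_pow_atTop_nhds_zero_of_lt_one (by norm_num) (by norm_num)
      have := ((h3.const_mul C).mul_const (w 0 * 1)).pow 2
      simpa using this
    refine squeeze_zero (fun i => norm_nonneg _) (fun i => ?_) h2
    have := hGe i x hx x (by simp only [sub_self, abs_zero]; exact hℓpos i)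
    refine this.trans ((H2 i 0).trans (le_of_eq ?_))
    simp
  have hderiv : ∀ a, ∀ x ∈ J, HasDerivAt (F a) (F (a + 1) x) x := by
    intro a x hx
    obtain ⟨δ, hδ, hball⟩ := Metric.isOpen_iff.1 hJo x hx
    set B : ℝ := ((a+2).factorial * (2 / ℓ0) ^ (a+2) * K + 2 * A (a+2)) + 3 * R (a+2) * ℓ0 ^ 2
      with hB
    apply hasDerivAt_of_quadratic (F a) (F (a + 1) x) x
      (6 * R a * 16 + B + 3 * R (a + 1) * 16 * (ℓ0 / 2)) (min δ (ℓ0 / 2))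
      (lt_min hδ (by linarith))
    intro x' hx'
    have hx'1 : |x' - x| < δ := lt_of_lt_of_le hx' (min_le_left _ _)
    have hx'2 : |x' - x| < ℓ0 / 2 := lt_of_lt_of_le hx' (min_le_right _ _)
    by_cases hxx : x' = x
    · subst hxx; simp
    have hd : 0 < |x' - x| := abs_pos.2 (sub_ne_zero.2 hxx)
    obtain ⟨i, hi1, hi2⟩ := exists_scale ℓ0 _ hd hx'2.le
    change |x' - x| ≤ ℓ i / 2 at hi1
    change ℓ i ≤ _ at hi2
    have hp := hℓpos i
    have hseg : ∀ s ∈ uIcc x x', |s - x| ≤ |x' - x| := fun s hs => abs_sub_left_of_mem_uIcc hs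
    have hsJ : ∀ s ∈ uIcc x x', s ∈ J := fun s hs => hball (by
      rw [Metric.mem_ball, Real.dist_eq]; exact lt_of_le_of_lt (hseg s hs) hx'1)
    have hx'J : x' ∈ J := hsJ x' right_mem_uIcc
    have hdiff : ∀ b, ∀ s ∈ uIcc x x', HasDerivAt (fun s : ℝ => iteratedDeriv b (G i x) (s:ℂ))
        (iteratedDeriv (b + 1) (G i x) (s:ℂ)) s := by
      intro b s hs
      have hm : (s:ℂ) ∈ Metric.ball (x:ℂ) (ℓ i) := by
        rw [Metric.mem_ball, Complex.dist_eq, ← Complex.ofReal_sub, Complex.norm_real,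
          Real.norm_eq_abs]
        linarith [hseg s hs]
      have han : AnalyticAt ℂ (G i x) s :=
        (hGd i x hx).analyticAt (Metric.isOpen_ball.mem_nhds hm)
      have : AnalyticAt ℂ (iteratedDeriv b (G i x)) s := by
        rw [iteratedDeriv_eq_iterate]; exact han.iterated_deriv b
      have h := this.differentiableAt.hasDerivAt
      rw [← iteratedDeriv_succ] at h
      exact h.comp_ofReal
    have so := second_order (fun s : ℝ => iteratedDeriv a (G i x) (s:ℂ))
      (fun s : ℝ => iteratedDeriv (a + 1) (G i x) (s:ℂ))
      (fun s : ℝ => iteratedDeriv (a + 2) (G i x) (s:ℂ)) x x' B (hdiff a) (hdiff (a + 1))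
      (fun s hs => by
        have h1 := near (a + 2) i x s hx (hsJ s hs) ((hseg s hs).trans hi1)
        have h2 := bndF (a + 2) s (hsJ s hs)
        have h3 : ‖iteratedDeriv (a + 2) (G i x) (s:ℂ)‖ ≤
          ‖iteratedDeriv (a + 2) (G i x) (s:ℂ) - F (a + 2) s‖ + ‖F (a + 2) s‖ := by
          simpa using norm_add_le (iteratedDeriv (a + 2) (G i x) (s:ℂ) - F (a + 2) s) (F (a + 2) s)
        have h4 : 3 * R (a + 2) * ℓ i ^ 2 ≤ 3 * R (a + 2) * ℓ0 ^ 2 := by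
          have := hR0 (a + 2); have := hℓle i; gcongr
        simp only [hB]
        linarith)
    have n1 := near a i x x' hx hx'J hi1
    have n2 := near a i x x hx hx (by simp; linarith)
    have n3 := near (a + 1) i x x hx hx (by simp; linarith)
    have heq : F a x' - F a x - F (a + 1) x * (x' - x) =
        (iteratedDeriv a (G i x) x' - iteratedDeriv a (G i x) x -
          iteratedDeriv (a + 1) (G i x) x * (x' - x)) -
        (iteratedDeriv a (G i x) x' - F a x') + (iteratedDeriv a (G i x) x - F a x) +
        (iteratedDeriv (a + 1) (G i x) x - F (a + 1) x) * (x' - x) := by ring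
    have n4 : ‖(iteratedDeriv (a + 1) (G i x) x - F (a + 1) x) * (x' - x)‖ ≤
        3 * R (a + 1) * ℓ i ^ 2 * |x' - x| := by
      rw [norm_mul, ← Complex.ofReal_sub, Complex.norm_real, Real.norm_eq_abs]
      gcongr
    have n5 : ‖F a x' - F a x - F (a + 1) x * (x' - x)‖ ≤ B * |x' - x| ^ 2 +
        3 * R a * ℓ i ^ 2 + 3 * R a * ℓ i ^ 2 + 3 * R (a + 1) * ℓ i ^ 2 * |x' - x| := by
      rw [heq]
      refine (norm_add_le _ _).trans (add_le_add ((norm_add_le _ _).trans (add_le_add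
        ((norm_sub_le _ _).trans (add_le_add so n1)) n2)) n4)
    have hsq : ℓ i ^ 2 ≤ 16 * |x' - x| ^ 2 := by nlinarith
    have m1 : 3 * R a * ℓ i ^ 2 ≤ 3 * R a * (16 * |x' - x| ^ 2) := by
      have := hR0 a; gcongr
    have m2 : 3 * R (a + 1) * ℓ i ^ 2 * |x' - x| ≤
        3 * R (a + 1) * (16 * |x' - x| ^ 2) * (ℓ0 / 2) := by
      have := hR0 (a + 1); gcongr
    refine n5.trans ?_
    nlinarith
  obtain ⟨r1, r2⟩ := smooth_of_chain f F J hJo F0 hderiv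
  refine ⟨r1, fun a x hx => ?_⟩
  rw [r2 a x hx]
  refine (bndF a x hx).trans (le_of_eq ?_)
  simp only [hA]; ring


/-- the operator `∂/∂ζ̄` -/
def dbar (φ : ℂ → ℂ) (ζ : ℂ) : ℂ := (fderiv ℝ φ ζ 1 + Complex.I * fderiv ℝ φ ζ Complex.I) / 2

lemma pompeiu_zero (ψ : ℂ → ℂ) (hψ : ContDiff ℝ 1 ψ) (hs : HasCompactSupport ψ) :
    ∫ ζ : ℂ, ζ⁻¹ * dbar ψ ζ = -(Real.pi : ℂ) * ψ 0 := by
  rw [← Complex.integral_comp_polarCoord_symm]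
  have hD : Continuous (fderiv ℝ ψ) := hψ.continuous_fderiv one_ne_zero
  obtain ⟨R, hR⟩ := hs.isCompact.isBounded.subset_ball (0:ℂ)
  set E : ℝ → ℂ := fun θ => Complex.exp (θ * Complex.I) with hE
  have hEc : Continuous E := by simp only [hE]; fun_prop
  have hEn : ∀ θ, ‖E θ‖ = 1 := fun θ => Complex.norm_exp_ofReal_mul_I θ
  have hE0 : ∀ θ, E θ ≠ 0 := fun θ => Complex.exp_ne_zero _
  have hEcs : ∀ θ, E θ = Real.cos θ + Real.sin θ * Complex.I := fun θ => by
    simp only [hE, Complex.exp_mul_I]; push_cast; rfl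
  set g1 : ℝ × ℝ → ℂ := fun p => fderiv ℝ ψ (p.1 * E p.2) (E p.2) with hg1
  set g2 : ℝ × ℝ → ℂ := fun p => fderiv ℝ ψ (p.1 * E p.2) (Complex.I * E p.2) with hg2
  have c1 : Continuous g1 := by
    simp only [hg1]
    have h1 : Continuous (fun p : ℝ × ℝ => fderiv ℝ ψ (p.1 * E p.2)) := by fun_prop
    have h2 : Continuous (fun p : ℝ × ℝ => E p.2) := by fun_prop
    exact h1.clm_apply h2
  have c2 : Continuous g2 := by
    simp only [hg2]
    have h1 : Continuous (fun p : ℝ × ℝ => fderiv ℝ ψ (p.1 * E p.2)) := by fun_prop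
    have h2 : Continuous (fun p : ℝ × ℝ => Complex.I * E p.2) := by fun_prop
    exact h1.clm_apply h2
  have zfd : ∀ ζ : ℂ, R ≤ ‖ζ‖ → fderiv ℝ ψ ζ = 0 := by
    intro ζ hζ
    by_contra hne
    have : ζ ∈ tsupport ψ := support_fderiv_subset ℝ (Function.mem_support.2 hne)
    have := hR this
    rw [mem_ball_zero_iff] at this
    linarith
  have z1 : ∀ p : ℝ × ℝ, R ≤ |p.1| → g1 p = 0 ∧ g2 p = 0 := by
    intro p hp
    have : fderiv ℝ ψ (p.1 * E p.2) = 0 := zfd _ (by rw [norm_mul, hEn]; simpa using hp)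
    simp [hg1, hg2, this]
  set S : Set (ℝ × ℝ) := Ioi (0:ℝ) ×ˢ Ioo (-Real.pi) Real.pi with hS
  have int : ∀ g : ℝ × ℝ → ℂ, Continuous g → (∀ p : ℝ × ℝ, R ≤ |p.1| → g p = 0) →
      IntegrableOn g S := by
    intro g hg hz
    have h1 : IntegrableOn g (Icc 0 R ×ˢ Icc (-Real.pi) Real.pi) :=
      hg.continuousOn.integrableOn_compact (isCompact_Icc.prod isCompact_Icc)
    refine (h1.of_forall_sdiff_eq_zero (s := Icc 0 R ×ˢ Icc (-Real.pi) Real.pi) (t := S)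
      (measurableSet_Ioi.prod measurableSet_Ioo) ?_)
    rintro p ⟨hp1, hp2⟩
    apply hz
    by_contra hlt
    push Not at hlt
    apply hp2
    simp only [hS, mem_prod, mem_Ioi, mem_Ioo] at hp1
    rw [abs_of_pos hp1.1] at hlt
    exact ⟨⟨hp1.1.le, hlt.le⟩, ⟨hp1.2.1.le, hp1.2.2.le⟩⟩
  have i1 := int g1 c1 (fun p hp => (z1 p hp).1)
  have i2 := int g2 c2 (fun p hp => (z1 p hp).2)
  have step : ∫ p in polarCoord.target, p.1 • ((Complex.polarCoord.symm p)⁻¹ *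
      dbar ψ (Complex.polarCoord.symm p)) =
      ∫ p in S, ((1/2 : ℂ) * g1 p + (Complex.I / 2) * g2 p) := by
    rw [polarCoord_target]
    apply setIntegral_congr_fun (measurableSet_Ioi.prod measurableSet_Ioo)
    rintro ⟨r, θ⟩ hp
    have hr : (0:ℝ) < r := hp.1
    have hr' : (r:ℂ) ≠ 0 := by exact_mod_cast hr.ne'
    have e1 : Complex.polarCoord.symm (r, θ) = r * E θ := by
      rw [Complex.polarCoord_symm_apply, hEcs]
    simp only [e1, hg1, hg2, dbar]
    set D := fderiv ℝ ψ (r * E θ) with hDD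
    have d1 : D (E θ) = Real.cos θ * D 1 + Real.sin θ * D Complex.I := by
      rw [hEcs]
      have : (Real.cos θ + Real.sin θ * Complex.I : ℂ) =
        Real.cos θ • (1:ℂ) + Real.sin θ • Complex.I := by simp
      rw [this, map_add, map_smul, map_smul]; simp
    have d2 : D (Complex.I * E θ) = -Real.sin θ * D 1 + Real.cos θ * D Complex.I := by
      rw [hEcs]
      have : (Complex.I * (Real.cos θ + Real.sin θ * Complex.I) : ℂ) =
        (-Real.sin θ) • (1:ℂ) + Real.cos θ • Complex.I := by
        simp only [Complex.real_smul]; push_cast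
        linear_combination (Complex.sin θ) * Complex.I_sq
      rw [this, map_add, map_smul, map_smul]; simp
    rw [d1, d2, Complex.real_smul]
    have inv : (r:ℂ) * (r * E θ)⁻¹ = Real.cos θ - Real.sin θ * Complex.I := by
      rw [mul_inv, ← mul_assoc, mul_inv_cancel₀ hr', one_mul]
      apply inv_eq_of_mul_eq_one_left
      rw [hEcs]
      have := Complex.sin_sq_add_cos_sq θ
      push_cast
      linear_combination this - (Complex.sin θ)^2 * Complex.I_sq
    rw [← mul_assoc, inv]
    linear_combination (-(Real.sin θ) * D Complex.I / 2) * Complex.I_sq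
  rw [step, integral_add (i1.const_mul _) (i2.const_mul _), integral_const_mul, integral_const_mul]
  have hdiff : ∀ ζ, HasFDerivAt ψ (fderiv ℝ ψ ζ) ζ :=
    fun ζ => (hψ.differentiable one_ne_zero ζ).hasFDerivAt
  have I2 : ∫ p in S, g2 p = 0 := by
    rw [hS, Measure.volume_eq_prod, setIntegral_prod _ (by rw [← Measure.volume_eq_prod]; exact i2)]
    apply integral_eq_zero_of_ae
    filter_upwards [ae_restrict_mem measurableSet_Ioi] with r hr
    have hr0 : (0:ℝ) < r := hr
    have hd : ∀ θ : ℝ, HasDerivAt (fun θ : ℝ => ψ (r * E θ)) (r * g2 (r, θ)) θ := by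
      intro θ
      have h1 : HasDerivAt E (E θ * Complex.I) θ := by
        have : HasDerivAt (fun θ : ℝ => (θ:ℂ) * Complex.I) (1 * Complex.I) θ :=
          (Complex.ofRealCLM.hasDerivAt (x := θ)).mul_const Complex.I
        simpa using this.cexp
      have h2 := (hdiff (r * E θ)).comp_hasDerivAt θ (h1.const_mul (r:ℂ))
      have : (r:ℂ) * (E θ * Complex.I) = r • (Complex.I * E θ) := by
        rw [Complex.real_smul]; ring
      rw [this, map_smul, Complex.real_smul] at h2
      exact h2
    have hc : Continuous (fun θ : ℝ => (r:ℂ) * g2 (r, θ)) := by fun_prop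
    have := intervalIntegral.integral_eq_sub_of_hasDerivAt (a := -Real.pi) (b := Real.pi)
      (fun θ _ => hd θ) (hc.intervalIntegrable _ _)
    rw [intervalIntegral.integral_of_le (by linarith [Real.pi_pos]), integral_Ioc_eq_integral_Ioo,
      integral_const_mul] at this
    have e : E Real.pi = E (-Real.pi) := by rw [hEcs, hEcs]; simp
    rw [e, sub_self] at this
    have hr' : (r:ℂ) ≠ 0 := by exact_mod_cast hr0.ne'
    simpa [hr'] using this
  have I1 : ∫ p in S, g1 p = -(2 * Real.pi) * ψ 0 := by
    have hi : IntegrableOn g1 S (volume.prod volume) := by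
      rw [← Measure.volume_eq_prod]; exact i1
    rw [hS, Measure.volume_eq_prod, ← setIntegral_prod_swap, setIntegral_prod (fun z : ℝ × ℝ => g1 z.swap) hi.swap]
    have inner : ∀ θ : ℝ, ∫ r in Ioi (0:ℝ), g1 (r, θ) = - ψ 0 := by
      intro θ
      have hd : ∀ r : ℝ, HasDerivAt (fun r : ℝ => ψ (r * E θ)) (g1 (r, θ)) r := by
        intro r
        have h1 : HasDerivAt (fun r : ℝ => (r:ℂ) * E θ) (1 * E θ) r :=
          (Complex.ofRealCLM.hasDerivAt (x := r)).mul_const (E θ)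
        have h2 := (hdiff (r * E θ)).comp_hasDerivAt r h1
        rw [one_mul] at h2
        exact h2
      have hcs : HasCompactSupport (fun r : ℝ => ψ (r * E θ)) := by
        apply HasCompactSupport.intro (K := Metric.closedBall 0 R) (isCompact_closedBall _ _)
        intro r hr
        rw [mem_closedBall_zero_iff, Real.norm_eq_abs, not_le] at hr
        by_contra hne
        have := hR (subset_tsupport _ (Function.mem_support.2 hne))
        rw [mem_ball_zero_iff, norm_mul, hEn] at this
        simp at this
        linarith
      have := hcs.integral_Ioi_deriv_eq (b := 0) (by
        have : ContDiff ℝ 1 (fun r : ℝ => (r:ℂ) * E θ) :=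
          Complex.ofRealCLM.contDiff.mul contDiff_const
        exact hψ.comp this)
      simp only [(hd _).deriv] at this
      simpa using this
    simp only [Prod.swap, inner]
    rw [setIntegral_const]
    simp only [Measure.real, Real.volume_Ioo]
    rw [ENNReal.toReal_ofReal (by linarith [Real.pi_pos]), Complex.real_smul]
    push_cast; ring
  rw [I1, I2]
  ring

lemma pompeiu (φ : ℂ → ℂ) (hφ : ContDiff ℝ 1 φ) (hs : HasCompactSupport φ) (z : ℂ) :
    ∫ ζ : ℂ, (ζ - z)⁻¹ * dbar φ ζ = -(Real.pi : ℂ) * φ z := by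
  have h := pompeiu_zero (fun ζ => φ (ζ + z)) (hφ.comp (contDiff_id.add contDiff_const))
    (hs.comp_homeomorph (Homeomorph.addRight z))
  rw [zero_add] at h
  rw [← h, ← integral_add_right_eq_self _ z]
  congr 1
  ext ζ
  simp only [dbar, fderiv_comp_add_right, add_sub_cancel_right]


lemma rpow_young (x y s : ℝ) (hx : 0 ≤ x) (hy : 0 ≤ y) (hs : 0 < s) (hs1 : s < 1) :
    x ^ (1 - s) * y ≤ x ^ (2 - s) + y ^ (2 - s) := by
  have e : ∀ t : ℝ, 0 ≤ t → t ^ (2 - s) = t ^ (1 - s) * t := by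
    intro t ht
    rw [show (2 - s) = (1 - s) + 1 by ring, Real.rpow_add_one' ht (by linarith)]
  rcases le_total x y with h | h
  · have : x ^ (1 - s) * y ≤ y ^ (1 - s) * y := by
      have := Real.rpow_le_rpow hx h (show 0 ≤ 1 - s by linarith)
      gcongr
    rw [← e y hy] at this
    have := Real.rpow_nonneg hx (2 - s)
    linarith
  · have : x ^ (1 - s) * y ≤ x ^ (1 - s) * x := by
      have := Real.rpow_nonneg hx (1 - s)
      gcongr
    rw [← e x hx] at this
    have := Real.rpow_nonneg hy (2 - s)
    linarith

/-- truncated singular kernel -/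
def kker (s : ℝ) (c ζ : ℂ) : ℝ := (Metric.ball c 1).indicator (fun ζ => (‖ζ - c‖⁻¹) ^ (2 - s)) ζ

lemma kker_nonneg (s : ℝ) (c ζ : ℂ) : 0 ≤ kker s c ζ := by
  unfold kker
  apply indicator_nonneg
  intro x _
  positivity

lemma kker_integrable_zero (s : ℝ) (hs : 0 < s) : Integrable (kker s 0) := by
  unfold kker
  rw [integrable_indicator_iff Metric.isOpen_ball.measurableSet]
  apply integrableOn_ball_of_norm_le_rpow (μ := volume) (C := 1) (α := 2 - s) (r := 1)
  · rw [Complex.finrank_real_complex]; push_cast; linarith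
  · apply ae_of_all
    intro x
    rw [one_mul, sub_zero, Real.norm_of_nonneg (by positivity), Real.rpow_neg (norm_nonneg _),
      Real.inv_rpow (norm_nonneg _)]
  · apply Measurable.aestronglyMeasurable
    fun_prop
  · rw [Complex.finrank_real_complex]; norm_num

lemma kker_trans (s : ℝ) (c : ℂ) : kker s c = fun ζ => kker s 0 (ζ - c) := by
  ext ζ
  unfold kker
  simp only [indicator, Metric.mem_ball, dist_eq_norm, sub_zero]

lemma kker_integrable (s : ℝ) (hs : 0 < s) (c : ℂ) : Integrable (kker s c) := by
  rw [kker_trans]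
  exact (kker_integrable_zero s hs).comp_sub_right c

lemma kker_integral (s : ℝ) (c : ℂ) : ∫ ζ, kker s c ζ = ∫ ζ, kker s 0 ζ := by
  rw [kker_trans]
  exact integral_sub_right_eq_self _ c

lemma kker_bound (s : ℝ) (hs1 : s < 1) (c ζ : ℂ) : (‖ζ - c‖⁻¹) ^ (2 - s) ≤ 1 + kker s c ζ := by
  unfold kker
  by_cases h : ζ ∈ Metric.ball c 1
  · rw [indicator_of_mem h]; linarith
  · rw [indicator_of_notMem h, add_zero]
    rw [Metric.mem_ball, dist_eq_norm, not_lt] at h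
    exact Real.rpow_le_one (by positivity) (inv_le_one_of_one_le₀ h) (by linarith)

lemma kker_bound1 (s : ℝ) (hs1 : s < 1) (c ζ : ℂ) : ‖ζ - c‖⁻¹ ≤ 1 + kker s c ζ := by
  by_cases h : 1 ≤ ‖ζ - c‖⁻¹
  · refine le_trans ?_ (kker_bound s hs1 c ζ)
    exact Real.self_le_rpow_of_one_le h (by linarith)
  · have := kker_nonneg s c ζ
    linarith

lemma kernel_sum (s : ℝ) (hs : 0 < s) (hs1 : s < 1) : ∃ κ : ℝ, 0 ≤ κ ∧ ∀ (z : ℂ) (m : Multiset ℂ),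
    ∃ g : ℂ → ℝ, Integrable g ∧ ∫ ζ, g ζ ≤ m.card * κ ∧ (∀ ζ, 0 ≤ g ζ) ∧
      ∀ ζ ∈ Metric.closedBall (0:ℂ) 1,
        ((m.map (fun a => ‖ζ - a‖⁻¹)).sum) ^ (1 - s) * ‖ζ - z‖⁻¹ ≤ g ζ := by
  set κ0 := ∫ ζ, kker s 0 ζ with hκ0
  have hκ00 : 0 ≤ κ0 := integral_nonneg (kker_nonneg s 0)
  set V : ℂ → ℝ := (Metric.closedBall (0:ℂ) 1).indicator (fun _ => (2:ℝ)) with hV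
  have hVi : Integrable V := by
    rw [hV, integrable_indicator_iff measurableSet_closedBall]
    exact continuousOn_const.integrableOn_compact (isCompact_closedBall (0:ℂ) 1)
  have hV0 : ∀ ζ, 0 ≤ V ζ := fun ζ => indicator_nonneg (fun _ _ => by norm_num) ζ
  refine ⟨(∫ ζ, V ζ) + 2 * κ0, add_nonneg (integral_nonneg hV0) (by linarith), ?_⟩
  intro z m
  induction m using Multiset.induction with
  | empty =>
    refine ⟨fun _ => 0, integrable_zero _ _ _, by simp, by simp, ?_⟩
    intro ζ _
    simp [Real.zero_rpow (show 1 - s ≠ 0 by linarith)]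
  | cons a m ih =>
    obtain ⟨g, g1, g2, g3, g4⟩ := ih
    refine ⟨fun ζ => g ζ + (V ζ + kker s a ζ + kker s z ζ),
      g1.add ((hVi.add (kker_integrable s hs a)).add (kker_integrable s hs z)), ?_, ?_, ?_⟩
    · have i1 : Integrable (fun ζ => V ζ + kker s a ζ) := hVi.add (kker_integrable s hs a)
      have i2 : Integrable (fun ζ => V ζ + kker s a ζ + kker s z ζ) :=
        i1.add (kker_integrable s hs z)
      have : ∫ ζ, (g ζ + (V ζ + kker s a ζ + kker s z ζ)) =
          (∫ ζ, g ζ) + ((∫ ζ, V ζ) + κ0 + κ0) := by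
        rw [integral_add g1 i2, integral_add i1 (kker_integrable s hs z),
          integral_add hVi (kker_integrable s hs a), kker_integral s a, kker_integral s z]
      refine this.le.trans ?_
      simp only [Multiset.card_cons]
      push_cast
      linarith
    · intro ζ
      have := g3 ζ; have := hV0 ζ; have := kker_nonneg s a ζ; have := kker_nonneg s z ζ
      linarith
    · intro ζ hζ
      have h1 := g4 ζ hζ
      have hVζ : V ζ = 2 := by rw [hV, indicator_of_mem hζ]
      rw [Multiset.map_cons, Multiset.sum_cons]
      have hm0 : 0 ≤ (m.map (fun a => ‖ζ - a‖⁻¹)).sum := by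
        apply Multiset.sum_nonneg
        intro x hx
        obtain ⟨b, _, rfl⟩ := Multiset.mem_map.1 hx
        positivity
      have h2 := Real.rpow_add_le_add_rpow (p := 1 - s) (show 0 ≤ ‖ζ - a‖⁻¹ by positivity) hm0
        (by linarith) (by linarith)
      have h3 := rpow_young (‖ζ - a‖⁻¹) (‖ζ - z‖⁻¹) s (by positivity) (by positivity) hs hs1
      have h4 := kker_bound s hs1 a ζ
      have h5 := kker_bound s hs1 z ζ
      have h6 : (‖ζ - a‖⁻¹ + (m.map (fun a => ‖ζ - a‖⁻¹)).sum) ^ (1 - s) * ‖ζ - z‖⁻¹ ≤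
        ((‖ζ - a‖⁻¹) ^ (1 - s) + ((m.map (fun a => ‖ζ - a‖⁻¹)).sum) ^ (1 - s)) * ‖ζ - z‖⁻¹ := by
        gcongr
      rw [add_mul] at h6
      linarith


lemma q_bound (j : ℕ) (hj : 1 ≤ j) (C1 ρ : ℝ) (hC1 : 1 ≤ C1) (hρ : 0 < ρ) (p q : ℂ)
    (h : ‖p ^ (j + 1) - q ^ j‖ ≤ C1 * ρ ^ (j + 1)) :
    ‖q‖ ≤ C1 * (‖p‖ + ρ) ^ (1 + 1 / (j:ℝ)) := by
  have hp := norm_nonneg p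
  set b := ‖p‖ + ρ with hb
  have hb0 : 0 < b := by positivity
  have h1 : ‖q‖ ^ j ≤ C1 * b ^ (j + 1) := by
    have h2 : ‖q ^ j‖ ≤ ‖p ^ (j + 1)‖ + ‖p ^ (j + 1) - q ^ j‖ := by
      have := norm_sub_le (p ^ (j + 1)) (p ^ (j + 1) - q ^ j)
      rwa [sub_sub_cancel] at this
    rw [norm_pow, norm_pow] at h2
    have h3 : ‖p‖ ^ (j + 1) + ρ ^ (j + 1) ≤ b ^ (j + 1) :=
      pow_add_pow_le hp hρ.le (by omega)
    have h4 : 0 ≤ ‖p‖ ^ (j + 1) := by positivity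
    nlinarith
  have h5 : (b ^ (1 + 1 / (j:ℝ))) ^ j = b ^ (j + 1) := by
    rw [← Real.rpow_natCast, ← Real.rpow_mul hb0.le, ← Real.rpow_natCast]
    congr 1
    have : (j:ℝ) ≠ 0 := by positivity
    push_cast; field_simp
  have h6 : ‖q‖ ^ j ≤ (C1 * b ^ (1 + 1 / (j:ℝ))) ^ j := by
    rw [mul_pow, h5]
    refine h1.trans ?_
    gcongr
    exact le_self_pow₀ hC1 (by omega)
  exact le_of_pow_le_pow_left₀ (by omega) (by positivity) h6

lemma dbar_bound (j : ℕ) (hj : 1 ≤ j) (C1 ρ K S : ℝ) (hC1 : 1 ≤ C1) (hρ : 0 < ρ) (hK : 1 ≤ K)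
    (hS : 0 ≤ S) (p q p' : ℂ)
    (h : ‖p ^ (j + 1) - q ^ j‖ ≤ C1 * ρ ^ (j + 1)) (hp' : ‖p'‖ ≤ K) (hpS : ‖p'‖ ≤ ‖p‖ * S) :
    ‖q‖ * ‖p'‖ * ρ ^ 2 / (‖p‖ ^ 2 + ρ ^ 2) ^ 2 ≤
      4 * C1 * K * ρ ^ (1 / (2 * (j:ℝ))) * S ^ (1 - 1 / (2 * (j:ℝ))) := by
  have hq := q_bound j hj C1 ρ hC1 hρ p q h
  have hp := norm_nonneg p
  set b := ‖p‖ + ρ with hb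
  have hb0 : 0 < b := by positivity
  set s := 1 / (2 * (j:ℝ)) with hs
  have hj' : (1:ℝ) ≤ j := by exact_mod_cast hj
  have hs0 : 0 < s := by positivity
  have hs1 : s ≤ 1 / 2 := by
    rw [hs]; apply one_div_le_one_div_of_le <;> linarith
  have h2s : 1 / (j:ℝ) = 2 * s := by rw [hs]; field_simp
  rw [h2s] at hq
  have hden : b ^ 2 / 2 ≤ ‖p‖ ^ 2 + ρ ^ 2 := by
    rw [hb]; nlinarith [sq_nonneg (‖p‖ - ρ)]
  have hden2 : b ^ 4 / 4 ≤ (‖p‖ ^ 2 + ρ ^ 2) ^ 2 := by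
    have := pow_le_pow_left₀ (by positivity) hden 2
    calc b ^ 4 / 4 = (b ^ 2 / 2) ^ 2 := by ring
      _ ≤ _ := this
  have hp'2 : ‖p'‖ ≤ (b * S) ^ (1 - s) * K := by
    have h1 : ‖p'‖ = ‖p'‖ ^ (1 - s) * ‖p'‖ ^ s := by
      rw [← Real.rpow_add' (norm_nonneg _) (by norm_num)]; simp
    rw [h1]
    have h2 : ‖p'‖ ≤ b * S := hpS.trans (by rw [hb]; gcongr; linarith)
    have h3 : ‖p'‖ ^ (1 - s) ≤ (b * S) ^ (1 - s) :=
      Real.rpow_le_rpow (norm_nonneg _) h2 (by linarith)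
    have h4 : ‖p'‖ ^ s ≤ K := by
      calc ‖p'‖ ^ s ≤ K ^ s := Real.rpow_le_rpow (norm_nonneg _) hp' hs0.le
        _ ≤ K ^ (1:ℝ) := Real.rpow_le_rpow_of_exponent_le hK (by linarith)
        _ = K := Real.rpow_one K
    gcongr
  rw [Real.mul_rpow hb0.le hS] at hp'2
  have hS' : 0 ≤ S ^ (1 - s) := by positivity
  calc ‖q‖ * ‖p'‖ * ρ ^ 2 / (‖p‖ ^ 2 + ρ ^ 2) ^ 2
      ≤ (C1 * b ^ (1 + 2 * s)) * (b ^ (1 - s) * S ^ (1 - s) * K) * ρ ^ 2 / (b ^ 4 / 4) := by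
        gcongr
    _ = 4 * C1 * K * S ^ (1 - s) * ρ ^ 2 * (b ^ (1 + 2 * s) * b ^ (1 - s) / b ^ 4) := by
        field_simp
    _ = 4 * C1 * K * S ^ (1 - s) * ρ ^ 2 * b ^ (s - 2) := by
        congr 1
        rw [← Real.rpow_natCast b 4, ← Real.rpow_add hb0, ← Real.rpow_sub hb0]
        congr 1; push_cast; ring
    _ ≤ 4 * C1 * K * S ^ (1 - s) * ρ ^ 2 * ρ ^ (s - 2) := by
        have : b ^ (s - 2) ≤ ρ ^ (s - 2) :=
          Real.rpow_le_rpow_of_nonpos hρ (by linarith) (by linarith)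
        gcongr
    _ = 4 * C1 * K * ρ ^ s * S ^ (1 - s) := by
        have : ρ ^ s = ρ ^ 2 * ρ ^ (s - 2) := by
          rw [← Real.rpow_natCast ρ 2, ← Real.rpow_add hρ]; congr 1; push_cast; ring
        rw [this]; ring

/-- the quotient approximation -/
def uval (ρ : ℝ) (p q : ℂ) : ℂ :=
  q * (starRingEnd ℂ p) * (p * (starRingEnd ℂ p) + (ρ:ℂ) ^ 2)⁻¹

lemma den_eq (ρ : ℝ) (p : ℂ) :
    p * (starRingEnd ℂ p) + (ρ:ℂ) ^ 2 = ((‖p‖ ^ 2 + ρ ^ 2 : ℝ) : ℂ) := by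
  rw [Complex.mul_conj, Complex.normSq_eq_norm_sq]; push_cast; ring

lemma den_ne (ρ : ℝ) (hρ : 0 < ρ) (p : ℂ) : p * (starRingEnd ℂ p) + (ρ:ℂ) ^ 2 ≠ 0 := by
  rw [den_eq]
  have : 0 < ‖p‖ ^ 2 + ρ ^ 2 := by positivity
  exact_mod_cast this.ne'

lemma uval_norm (ρ : ℝ) (p q : ℂ) : ‖uval ρ p q‖ = ‖q‖ * ‖p‖ / (‖p‖ ^ 2 + ρ ^ 2) := by
  unfold uval
  rw [den_eq, norm_mul, norm_mul, norm_inv, Complex.norm_real, RCLike.norm_conj,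
    Real.norm_of_nonneg (by positivity), div_eq_mul_inv]

lemma uval_bound (j : ℕ) (hj : 1 ≤ j) (C1 ρ K : ℝ) (hC1 : 1 ≤ C1) (hρ : 0 < ρ) (hρ1 : ρ ≤ 1)
    (p q : ℂ) (hp : ‖p‖ ≤ K)
    (h : ‖p ^ (j + 1) - q ^ j‖ ≤ C1 * ρ ^ (j + 1)) :
    ‖uval ρ p q‖ ≤ 2 * C1 * (K + 1) := by
  rw [uval_norm]
  have hq := q_bound j hj C1 ρ hC1 hρ p q h
  have hp0 := norm_nonneg p
  set b := ‖p‖ + ρ with hb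
  have hb0 : 0 < b := by positivity
  have hj' : (1:ℝ) ≤ j := by exact_mod_cast hj
  have hden : b ^ 2 / 2 ≤ ‖p‖ ^ 2 + ρ ^ 2 := by
    rw [hb]; nlinarith [sq_nonneg (‖p‖ - ρ)]
  have hbK : b ≤ K + 1 := by rw [hb]; linarith
  have h1 : b ^ (1 / (j:ℝ)) ≤ K + 1 := by
    calc b ^ (1 / (j:ℝ)) ≤ (K + 1) ^ (1 / (j:ℝ)) := Real.rpow_le_rpow hb0.le hbK (by positivity)
      _ ≤ (K + 1) ^ (1:ℝ) := Real.rpow_le_rpow_of_exponent_le (by linarith)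
          (by rw [div_le_one (by linarith)]; exact hj')
      _ = K + 1 := Real.rpow_one _
  have hpb : ‖p‖ ≤ b := by rw [hb]; linarith
  calc ‖q‖ * ‖p‖ / (‖p‖ ^ 2 + ρ ^ 2) ≤ (C1 * b ^ (1 + 1 / (j:ℝ))) * b / (b ^ 2 / 2) := by
        gcongr
    _ = 2 * C1 * b ^ (1 / (j:ℝ)) := by
        rw [Real.rpow_add hb0, Real.rpow_one]; field_simp
    _ ≤ _ := by gcongr

/-- Wirtinger derivatives -/
def HasW (φ : ℂ → ℂ) (a b ζ : ℂ) : Prop :=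
  HasFDerivAt (𝕜 := ℝ) φ (a • (ContinuousLinearMap.id ℝ ℂ) +
    b • (Complex.conjCLE : ℂ →L[ℝ] ℂ)) ζ

lemma HasW.dbar_eq {φ : ℂ → ℂ} {a b ζ : ℂ} (h : HasW φ a b ζ) : dbar φ ζ = b := by
  unfold dbar
  rw [HasFDerivAt.fderiv h]
  simp
  linear_combination (a - b) / 2 * Complex.I_sq

lemma HasW.mul {φ ψ : ℂ → ℂ} {a b c d ζ : ℂ} (h : HasW φ a b ζ) (h' : HasW ψ c d ζ) :
    HasW (fun z => φ z * ψ z) (φ ζ * c + ψ ζ * a) (φ ζ * d + ψ ζ * b) ζ := by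
  unfold HasW at *
  have := HasFDerivAt.fun_mul h h'
  refine this.congr_fderiv ?_
  ext v
  simp
  ring

lemma HasW.conj {φ : ℂ → ℂ} {a b ζ : ℂ} (h : HasW φ a b ζ) :
    HasW (fun z => starRingEnd ℂ (φ z)) (starRingEnd ℂ b) (starRingEnd ℂ a) ζ := by
  unfold HasW at *
  have := (Complex.conjCLE : ℂ →L[ℝ] ℂ).hasFDerivAt.comp ζ h
  refine this.congr_fderiv ?_
  ext v
  simp
  ring

lemma HasW.holo {φ : ℂ → ℂ} {a ζ : ℂ} (h : HasDerivAt φ a ζ) : HasW φ a 0 ζ := by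
  unfold HasW
  have := h.hasFDerivAt.restrictScalars ℝ
  refine this.congr_fderiv ?_
  ext v
  simp
  try ring

lemma HasW.add_const {φ : ℂ → ℂ} {a b ζ : ℂ} (h : HasW φ a b ζ) (c : ℂ) :
    HasW (fun z => φ z + c) a b ζ := by
  unfold HasW at *
  exact HasFDerivAt.add_const c h

lemma HasW.inv {φ : ℂ → ℂ} {a b ζ : ℂ} (h : HasW φ a b ζ) (hne : φ ζ ≠ 0) :
    HasW (fun z => (φ z)⁻¹) (-(φ ζ ^ 2)⁻¹ * a) (-(φ ζ ^ 2)⁻¹ * b) ζ := by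
  unfold HasW at *
  have h1 := ((hasDerivAt_inv hne).hasFDerivAt.restrictScalars ℝ).comp ζ h
  refine h1.congr_fderiv ?_
  ext v
  simp
  ring

lemma uval_dbar (ρ : ℝ) (hρ : 0 < ρ) (P Q : Polynomial ℂ) (ζ : ℂ) :
    dbar (fun z => uval ρ (P.eval z) (Q.eval z)) ζ =
      Q.eval ζ * starRingEnd ℂ (P.derivative.eval ζ) * (ρ:ℂ) ^ 2 *
        ((P.eval ζ * (starRingEnd ℂ (P.eval ζ)) + (ρ:ℂ) ^ 2) ^ 2)⁻¹ := by
  have hP : HasW (fun z => P.eval z) (P.derivative.eval ζ) 0 ζ := HasW.holo (P.hasDerivAt ζ)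
  have hQ : HasW (fun z => Q.eval z) (Q.derivative.eval ζ) 0 ζ := HasW.holo (Q.hasDerivAt ζ)
  have hne := den_ne ρ hρ (P.eval ζ)
  have := ((hQ.mul hP.conj).mul (((hP.mul hP.conj).add_const ((ρ:ℂ) ^ 2)).inv hne)).dbar_eq
  unfold uval
  rw [this]
  field_simp
  simp
  try ring

lemma uval_contDiff (ρ : ℝ) (hρ : 0 < ρ) (P Q : Polynomial ℂ) :
    ContDiff ℝ 1 (fun z => uval ρ (P.eval z) (Q.eval z)) := by
  unfold uval
  have hP : ContDiff ℝ 1 (fun z : ℂ => P.eval z) :=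
    (P.contDiff_aeval (𝕜 := ℂ) (R := ℂ) 1 |>.restrict_scalars ℝ)
  have hQ : ContDiff ℝ 1 (fun z : ℂ => Q.eval z) :=
    (Q.contDiff_aeval (𝕜 := ℂ) (R := ℂ) 1 |>.restrict_scalars ℝ)
  have hc : ContDiff ℝ 1 (fun z : ℂ => starRingEnd ℂ (P.eval z)) :=
    (Complex.conjCLE : ℂ →L[ℝ] ℂ).contDiff.comp hP
  exact (hQ.mul hc).mul (((hP.mul hc).add contDiff_const).inv (fun z => den_ne ρ hρ _))

lemma log_deriv_bound (P : Polynomial ℂ) (ζ : ℂ) (h : P = 0 ∨ P.eval ζ ≠ 0) :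
    ‖P.derivative.eval ζ‖ ≤ ‖P.eval ζ‖ * (P.roots.map (fun a => ‖ζ - a‖⁻¹)).sum := by
  rcases h with h | h
  · simp [h]
  · have h1 := (IsAlgClosed.splits P).eval_derivative_div_eval_of_ne_zero h
    rw [div_eq_iff h] at h1
    rw [h1, norm_mul, mul_comm]
    gcongr
    refine (norm_multiset_sum_le _).trans (le_of_eq ?_)
    rw [Multiset.map_map]
    congr 1
    apply Multiset.map_congr rfl
    intro x _
    simp


lemma cauchy_kernel_integrable (v : ℂ → ℂ) (hv : Continuous v) (hs : HasCompactSupport v) (z : ℂ) :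
    Integrable (fun ζ : ℂ => (ζ - z)⁻¹ * v ζ) := by
  obtain ⟨B, hB⟩ := hs.exists_bound_of_continuous hv
  have hvi : Integrable v := hv.integrable_of_hasCompactSupport hs
  have hk := kker_integrable (1/2) (by norm_num) z
  have hg : Integrable (fun ζ => ‖v ζ‖ + B * kker (1/2) z ζ) := hvi.norm.add (hk.const_mul B)
  refine hg.mono' ?_ (ae_of_all _ fun ζ => ?_)
  · have : Measurable (fun ζ : ℂ => (ζ - z)⁻¹ * v ζ) := by
      have := hv.measurable
      fun_prop
    exact this.aestronglyMeasurable
  · rw [norm_mul, norm_inv]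
    have h1 := kker_bound1 (1/2) (by norm_num) z ζ
    have h2 := kker_nonneg (1/2) z ζ
    have h3 := hB ζ
    have h4 := norm_nonneg (v ζ)
    nlinarith

lemma far_ineq {z ζ : ℂ} (hz : ‖z‖ < 1 / 4) (hζ : ¬ ‖ζ‖ < 1 / 2) : 1 / 4 ≤ ‖ζ - z‖ := by
  have := norm_sub_norm_le ζ z
  linarith

lemma cauchy_transform_diff (v : ℂ → ℂ) (hv : Continuous v) (hs : HasCompactSupport v)
    (h0 : ∀ ζ, ‖ζ‖ < 1 / 2 → v ζ = 0) :
    DifferentiableOn ℂ (fun z => ∫ ζ : ℂ, (ζ - z)⁻¹ * v ζ) (Metric.ball 0 (1/4)) := by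
  intro z hz
  have hvi : Integrable v := hv.integrable_of_hasCompactSupport hs
  have hm := hv.measurable
  have key := hasDerivAt_integral_of_dominated_loc_of_deriv_le (μ := (volume : Measure ℂ))
    (F := fun (z : ℂ) (ζ : ℂ) => (ζ - z)⁻¹ * v ζ) (x₀ := z)
    (F' := fun (z : ℂ) (ζ : ℂ) => ((ζ - z) ^ 2)⁻¹ * v ζ) (bound := fun ζ => 16 * ‖v ζ‖)
    (s := Metric.ball 0 (1/4)) (Metric.isOpen_ball.mem_nhds hz)
    (Eventually.of_forall fun x => (by fun_prop : Measurable _).aestronglyMeasurable)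
    (cauchy_kernel_integrable v hv hs z)
    ((by fun_prop : Measurable _).aestronglyMeasurable)
    (ae_of_all _ fun ζ x hx => by
      by_cases h : ‖ζ‖ < 1 / 2
      · simp [h0 ζ h]
      · have := far_ineq (mem_ball_zero_iff.1 hx) h
        rw [norm_mul, norm_inv, norm_pow]
        have h1 : (‖ζ - x‖ ^ 2)⁻¹ ≤ 16 := by
          apply inv_le_of_inv_le₀ (by norm_num)
          nlinarith
        gcongr)
    (hvi.norm.const_mul 16)
    (ae_of_all _ fun ζ x hx => by
      by_cases h : ‖ζ‖ < 1 / 2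
      · simp only [h0 ζ h, mul_zero]; exact hasDerivAt_const x 0
      · have h2 := far_ineq (mem_ball_zero_iff.1 hx) h
        have hne : ζ - x ≠ 0 := by
          intro h3; rw [h3, norm_zero] at h2; linarith
        have := (((hasDerivAt_id x).const_sub ζ).fun_inv hne).mul_const (v ζ)
        refine this.congr_deriv ?_
        simp [div_eq_mul_inv])
  exact key.2.differentiableAt.differentiableWithinAt

lemma cauchy_transform_bound (v : ℂ → ℂ) (hv : Continuous v) (hs : HasCompactSupport v)
    (h0 : ∀ ζ, ‖ζ‖ < 1 / 2 → v ζ = 0) (z : ℂ) (hz : ‖z‖ < 1 / 4) :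
    ‖∫ ζ : ℂ, (ζ - z)⁻¹ * v ζ‖ ≤ 4 * ∫ ζ, ‖v ζ‖ := by
  have hvi : Integrable v := hv.integrable_of_hasCompactSupport hs
  rw [← integral_const_mul]
  apply norm_integral_le_of_norm_le (hvi.norm.const_mul 4)
  refine ae_of_all _ fun ζ => ?_
  by_cases h : ‖ζ‖ < 1 / 2
  · simp [h0 ζ h]
  · have := far_ineq hz h
    rw [norm_mul, norm_inv]
    have h1 : ‖ζ - z‖⁻¹ ≤ 4 := by
      apply inv_le_of_inv_le₀ (by norm_num)
      linarith
    gcongr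

lemma dbar_continuous (φ : ℂ → ℂ) (h : ContDiff ℝ 1 φ) : Continuous (dbar φ) := by
  unfold dbar
  have hD : Continuous (fderiv ℝ φ) := h.continuous_fderiv one_ne_zero
  fun_prop

lemma dbar_mul (φ ψ : ℂ → ℂ) (h : ContDiff ℝ 1 φ) (h' : ContDiff ℝ 1 ψ) (ζ : ℂ) :
    dbar (fun z => φ z * ψ z) ζ = φ ζ * dbar ψ ζ + ψ ζ * dbar φ ζ := by
  unfold dbar
  rw [fderiv_fun_mul (h.differentiable one_ne_zero ζ) (h'.differentiable one_ne_zero ζ)]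
  simp
  ring

lemma dbar_eq_zero_of_eventually (φ : ℂ → ℂ) (c ζ : ℂ) (h : φ =ᶠ[nhds ζ] fun _ => c) :
    dbar φ ζ = 0 := by
  unfold dbar
  rw [h.fderiv_eq]
  simp

/-- the cut-off function -/
def chib : ContDiffBump (0:ℂ) := ⟨1/2, 1, by norm_num, by norm_num⟩
/-- the complex valued cut-off function -/
def chi (ζ : ℂ) : ℂ := (chib ζ : ℂ)

lemma chi_contDiff : ContDiff ℝ 1 chi := Complex.ofRealCLM.contDiff.comp chib.contDiff
lemma chi_norm (ζ : ℂ) : ‖chi ζ‖ ≤ 1 := by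
  unfold chi
  rw [Complex.norm_real, Real.norm_of_nonneg chib.nonneg]
  exact chib.le_one
lemma chi_one (ζ : ℂ) (h : ‖ζ‖ ≤ 1 / 2) : chi ζ = 1 := by
  unfold chi
  rw [chib.one_of_mem_closedBall (by simpa [chib] using h)]; simp
lemma chi_zero (ζ : ℂ) (h : 1 ≤ ‖ζ‖) : chi ζ = 0 := by
  unfold chi
  rw [chib.zero_of_le_dist (by simpa [chib] using h)]; simp
lemma chi_support : HasCompactSupport chi :=
  HasCompactSupport.intro (isCompact_closedBall (0:ℂ) 1) (fun x hx => chi_zero x (by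
    rw [mem_closedBall_zero_iff, not_le] at hx; exact hx.le))
lemma dbar_chi_near (ζ : ℂ) (h : ‖ζ‖ < 1 / 2) : dbar chi ζ = 0 := by
  apply dbar_eq_zero_of_eventually chi 1
  filter_upwards [Metric.isOpen_ball.mem_nhds (mem_ball_zero_iff.2 h)] with x hx
  exact chi_one x (mem_ball_zero_iff.1 hx).le
lemma dbar_chi_far (ζ : ℂ) (h : 1 < ‖ζ‖) : dbar chi ζ = 0 := by
  apply dbar_eq_zero_of_eventually chi 0
  filter_upwards [(isOpen_lt continuous_const continuous_norm).mem_nhds h] with x hx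
  exact chi_zero x (le_of_lt hx)

lemma lemmaB (j : ℕ) (hj : 1 ≤ j) (K C1 : ℝ) (hK : 1 ≤ K) (hC1 : 1 ≤ C1) :
    ∃ C : ℝ, 0 < C ∧ ∀ (P Q : Polynomial ℂ) (ρ : ℝ), 0 < ρ → ρ ≤ 1 →
      (∀ ζ ∈ Metric.closedBall (0:ℂ) 1, ‖P.eval ζ‖ ≤ K) →
      (∀ ζ ∈ Metric.closedBall (0:ℂ) 1, ‖P.derivative.eval ζ‖ ≤ K) →
      (∀ ζ ∈ Metric.closedBall (0:ℂ) 1,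
        ‖P.eval ζ ^ (j + 1) - Q.eval ζ ^ j‖ ≤ C1 * ρ ^ (j + 1)) →
      ∃ F : ℂ → ℂ, DifferentiableOn ℂ F (Metric.ball 0 (1/4)) ∧
        (∀ z ∈ Metric.ball (0:ℂ) (1/4), ‖F z‖ ≤ C) ∧
        ∀ z ∈ Metric.ball (0:ℂ) (1/4), ‖F z - uval ρ (P.eval z) (Q.eval z)‖ ≤
          C * P.natDegree * ρ ^ (1 / (2 * (j:ℝ))) := by
  have hj' : (1:ℝ) ≤ j := by exact_mod_cast hj
  set s := 1 / (2 * (j:ℝ)) with hs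
  have hs0 : 0 < s := by positivity
  have hs1 : s ≤ 1 / 2 := by
    rw [hs]; apply one_div_le_one_div_of_le <;> linarith
  obtain ⟨κ, hκ, hker⟩ := kernel_sum s hs0 (by linarith)
  set X := ∫ ζ, ‖dbar chi ζ‖ with hX
  have hX0 : 0 ≤ X := integral_nonneg (fun _ => norm_nonneg _)
  have hcdb : Continuous (dbar chi) := dbar_continuous chi chi_contDiff
  have hsdb : HasCompactSupport (dbar chi) :=
    HasCompactSupport.intro (isCompact_closedBall (0:ℂ) 1) (fun x hx => dbar_chi_far x (by
      rw [mem_closedBall_zero_iff, not_le] at hx; exact hx))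
  have hpi := Real.pi_pos
  have hpi1 : ‖(-(Real.pi:ℂ)⁻¹)‖ ≤ 1 := by
    rw [norm_neg, norm_inv, Complex.norm_real, Real.norm_of_nonneg hpi.le]
    exact inv_le_one_of_one_le₀ (by linarith [Real.pi_gt_three])
  refine ⟨4 * (2 * C1 * (K + 1) * X) + 4 * C1 * K * κ + 1, by positivity, ?_⟩
  intro P Q ρ hρ hρ1 hP hP' hPQ
  set u : ℂ → ℂ := fun z => uval ρ (P.eval z) (Q.eval z) with hu
  have huc : ContDiff ℝ 1 u := uval_contDiff ρ hρ P Q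
  have hub : ∀ ζ ∈ Metric.closedBall (0:ℂ) 1, ‖u ζ‖ ≤ 2 * C1 * (K + 1) := fun ζ hζ =>
    uval_bound j hj C1 ρ K hC1 hρ hρ1 _ _ (hP ζ hζ) (hPQ ζ hζ)
  set v : ℂ → ℂ := fun ζ => u ζ * dbar chi ζ with hv
  have hvc : Continuous v := huc.continuous.mul hcdb
  have hvs : HasCompactSupport v := hsdb.mul_left
  have hv0 : ∀ ζ, ‖ζ‖ < 1 / 2 → v ζ = 0 := fun ζ h => by simp [hv, dbar_chi_near ζ h]
  have hvn : ∫ ζ, ‖v ζ‖ ≤ 2 * C1 * (K + 1) * X := by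
    rw [hX, ← integral_const_mul]
    apply integral_mono (hvc.integrable_of_hasCompactSupport hvs).norm
      ((hcdb.integrable_of_hasCompactSupport hsdb).norm.const_mul _)
    intro ζ
    by_cases h : 1 < ‖ζ‖
    · simp [hv, dbar_chi_far ζ h]
    · simp only [hv, norm_mul]
      have := hub ζ (by rw [mem_closedBall_zero_iff]; linarith)
      gcongr
  set v2 : ℂ → ℂ := fun ζ => chi ζ * dbar u ζ with hv2
  have hv2c : Continuous v2 := chi_contDiff.continuous.mul (dbar_continuous u huc)
  have hv2s : HasCompactSupport v2 := chi_support.mul_right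
  refine ⟨fun z => (-(Real.pi:ℂ)⁻¹) * ∫ ζ : ℂ, (ζ - z)⁻¹ * v ζ,
    (cauchy_transform_diff v hvc hvs hv0).const_mul _, ?_, ?_⟩
  · intro z hz
    have h1 := cauchy_transform_bound v hvc hvs hv0 z (mem_ball_zero_iff.1 hz)
    rw [norm_mul]
    have h2 : 0 ≤ ‖∫ ζ : ℂ, (ζ - z)⁻¹ * v ζ‖ := norm_nonneg _
    have h3 : 0 ≤ 4 * C1 * K * κ := by positivity
    nlinarith
  · intro z hz
    have hz' := mem_ball_zero_iff.1 hz
    have hpo := pompeiu (fun ζ => chi ζ * u ζ) (chi_contDiff.mul huc) chi_support.mul_right z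
    have hsplit : ∫ ζ : ℂ, (ζ - z)⁻¹ * dbar (fun ζ => chi ζ * u ζ) ζ =
        (∫ ζ : ℂ, (ζ - z)⁻¹ * v2 ζ) + ∫ ζ : ℂ, (ζ - z)⁻¹ * v ζ := by
      rw [← integral_add (cauchy_kernel_integrable v2 hv2c hv2s z)
        (cauchy_kernel_integrable v hvc hvs z)]
      congr 1
      ext ζ
      rw [dbar_mul chi u chi_contDiff huc]
      simp only [hv, hv2]; ring
    rw [hsplit, chi_one z (by linarith), one_mul] at hpo
    have hpine : (Real.pi:ℂ) ≠ 0 := by exact_mod_cast hpi.ne'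
    have hFu : (-(Real.pi:ℂ)⁻¹) * (∫ ζ : ℂ, (ζ - z)⁻¹ * v ζ) - u z =
        -((-(Real.pi:ℂ)⁻¹) * ∫ ζ : ℂ, (ζ - z)⁻¹ * v2 ζ) := by
      have h1 : u z = (-(Real.pi:ℂ)⁻¹) * (-(Real.pi:ℂ) * u z) := by field_simp
      rw [h1, ← hpo]; ring
    change ‖(-(Real.pi:ℂ)⁻¹) * (∫ ζ : ℂ, (ζ - z)⁻¹ * v ζ) - u z‖ ≤ _
    rw [hFu, norm_neg, norm_mul]
    obtain ⟨g, gi, gκ, g0, gb⟩ := hker z P.roots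
    have hbound : ‖∫ ζ : ℂ, (ζ - z)⁻¹ * v2 ζ‖ ≤ ∫ ζ, (4 * C1 * K * ρ ^ s) * g ζ := by
      apply norm_integral_le_of_norm_le (gi.const_mul _)
      have hae : ∀ᵐ ζ : ℂ, P = 0 ∨ P.eval ζ ≠ 0 := by
        by_cases hP0 : P = 0
        · exact ae_of_all _ fun ζ => Or.inl hP0
        · have hfin : ({ζ : ℂ | P.eval ζ = 0}).Finite := by
            refine (P.roots.toFinset.finite_toSet).subset ?_
            intro ζ hζ
            simpa [hP0] using hζ
          have := hfin.measure_zero (volume : Measure ℂ)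
          filter_upwards [compl_mem_ae_iff.2 this] with ζ hζ
          exact Or.inr hζ
      filter_upwards [hae] with ζ hζ
      by_cases h1 : 1 < ‖ζ‖
      · simp only [hv2, chi_zero ζ h1.le, zero_mul, mul_zero, norm_zero]
        have := g0 ζ
        positivity
      · have hm : ζ ∈ Metric.closedBall (0:ℂ) 1 := by rw [mem_closedBall_zero_iff]; linarith
        have hS : 0 ≤ (P.roots.map (fun a => ‖ζ - a‖⁻¹)).sum := by
          apply Multiset.sum_nonneg
          intro x hx
          obtain ⟨b, _, rfl⟩ := Multiset.mem_map.1 hx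
          positivity
        have h2 := dbar_bound j hj C1 ρ K _ hC1 hρ hK hS (P.eval ζ) (Q.eval ζ)
          (P.derivative.eval ζ) (hPQ ζ hm) (hP' ζ hm) (log_deriv_bound P ζ hζ)
        rw [← hs] at h2
        have h3 : ‖dbar u ζ‖ ≤ 4 * C1 * K * ρ ^ s *
            ((P.roots.map (fun a => ‖ζ - a‖⁻¹)).sum) ^ (1 - s) := by
          refine le_trans (le_of_eq ?_) h2
          rw [hu, uval_dbar ρ hρ, den_eq]
          rw [norm_mul, norm_mul, norm_mul, norm_inv, norm_pow, norm_pow, RCLike.norm_conj,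
            Complex.norm_real, Complex.norm_real, Real.norm_of_nonneg hρ.le,
            Real.norm_of_nonneg (by positivity), div_eq_mul_inv]
        have h4 := gb ζ hm
        simp only [hv2]
        rw [norm_mul, norm_mul, norm_inv]
        calc ‖ζ - z‖⁻¹ * (‖chi ζ‖ * ‖dbar u ζ‖)
            ≤ ‖ζ - z‖⁻¹ * (1 * (4 * C1 * K * ρ ^ s *
              ((P.roots.map (fun a => ‖ζ - a‖⁻¹)).sum) ^ (1 - s))) := by
              have := chi_norm ζ
              gcongr
          _ = (4 * C1 * K * ρ ^ s) *
              (((P.roots.map (fun a => ‖ζ - a‖⁻¹)).sum) ^ (1 - s) * ‖ζ - z‖⁻¹) := by ring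
          _ ≤ _ := by gcongr
    rw [integral_const_mul] at hbound
    have hcard : (P.roots.card : ℝ) ≤ P.natDegree := by exact_mod_cast P.card_roots'
    have hρs : 0 < ρ ^ s := by positivity
    calc ‖(-(Real.pi:ℂ)⁻¹)‖ * ‖∫ ζ : ℂ, (ζ - z)⁻¹ * v2 ζ‖
        ≤ 1 * (4 * C1 * K * ρ ^ s * (P.natDegree * κ)) := by
          gcongr
          refine hbound.trans ?_
          gcongr
          exact gκ.trans (by gcongr)
      _ = (4 * C1 * K * κ) * P.natDegree * ρ ^ s := by ring
      _ ≤ _ := by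
          have : 0 ≤ 4 * (2 * C1 * (K + 1) * X) := by positivity
          gcongr
          linarith


lemma norm_pow_sub_pow_le_aux (a b : ℂ) (R : ℝ) (hR : 1 ≤ R) (ha : ‖a‖ ≤ R) (hb : ‖b‖ ≤ R) (n : ℕ) :
    ‖a ^ n - b ^ n‖ ≤ n * R ^ n * ‖a - b‖ := by
  induction n with
  | zero => simp
  | succ n ih =>
    have e : a ^ (n + 1) - b ^ (n + 1) = (a ^ n - b ^ n) * a + b ^ n * (a - b) := by ring
    rw [e]
    refine (norm_add_le _ _).trans ?_
    rw [norm_mul, norm_mul, norm_pow]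
    have h1 : ‖a ^ n - b ^ n‖ * ‖a‖ ≤ (n * R ^ n * ‖a - b‖) * R := by gcongr
    have h2 : ‖b‖ ^ n * ‖a - b‖ ≤ R ^ (n + 1) * ‖a - b‖ := by
      have : ‖b‖ ^ n ≤ R ^ (n + 1) := (pow_le_pow_left₀ (norm_nonneg _) hb n).trans
        (pow_le_pow_right₀ hR (by omega))
      gcongr
    push_cast
    calc _ ≤ (n * R ^ n * ‖a - b‖) * R + R ^ (n + 1) * ‖a - b‖ := add_le_add h1 h2
      _ = _ := by ring

lemma uval_near (j : ℕ) (hj : 1 ≤ j) (ρ η Φ : ℝ) (hρ : 0 < ρ) (hη : 0 ≤ η)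
    (φ p q : ℂ) (hφ : ‖φ‖ ≤ Φ) (hp : ‖p - φ ^ j‖ ≤ η) (hq : ‖q - φ ^ (j + 1)‖ ≤ η) :
    ‖uval ρ p q - φ‖ ≤ 4 * ρ ^ (1 / (j:ℝ)) + (1 + 2 * Φ) * η / ρ := by
  have hφ0 := norm_nonneg φ
  have hp0 := norm_nonneg p
  have hΦ : 0 ≤ Φ := hφ0.trans hφ
  have hj' : (1:ℝ) ≤ j := by exact_mod_cast hj
  set κ := ρ ^ (1 / (j:ℝ)) with hκ
  have hκ0 : 0 < κ := by positivity
  have hκj : κ ^ j = ρ := by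
    rw [hκ, ← Real.rpow_natCast, ← Real.rpow_mul hρ.le]
    rw [one_div, inv_mul_cancel₀ (by positivity), Real.rpow_one]
  have hD : 0 < ‖p‖ ^ 2 + ρ ^ 2 := by positivity
  have e : uval ρ p q - φ = ((q - φ ^ (j+1)) - φ * (p - φ ^ j)) * (starRingEnd ℂ p) *
      (p * (starRingEnd ℂ p) + (ρ:ℂ) ^ 2)⁻¹ -
      φ * (ρ:ℂ) ^ 2 * (p * (starRingEnd ℂ p) + (ρ:ℂ) ^ 2)⁻¹ := by
    have h1 := mul_inv_cancel₀ (den_ne ρ hρ p)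
    unfold uval
    linear_combination φ * h1
  rw [e, den_eq]
  refine (norm_sub_le _ _).trans ?_
  rw [norm_mul, norm_mul, norm_mul, norm_mul, norm_inv, Complex.norm_real, RCLike.norm_conj,
    norm_pow, Complex.norm_real, Real.norm_of_nonneg hD.le, Real.norm_of_nonneg hρ.le]
  have t1 : ‖(q - φ ^ (j+1)) - φ * (p - φ ^ j)‖ ≤ (1 + Φ) * η := by
    refine (norm_sub_le _ _).trans ?_
    rw [norm_mul]
    have : ‖φ‖ * ‖p - φ ^ j‖ ≤ Φ * η := by gcongr
    linarith
  have t2 : ‖p‖ * (‖p‖ ^ 2 + ρ ^ 2)⁻¹ ≤ 1 / ρ := by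
    rw [← div_eq_mul_inv, div_le_div_iff₀ hD hρ]
    nlinarith [sq_nonneg (‖p‖ - ρ)]
  have t3 : ‖φ‖ * ρ ^ 2 * (‖p‖ ^ 2 + ρ ^ 2)⁻¹ ≤ 4 * κ + Φ * η / ρ := by
    have hrat : ρ ^ 2 * (‖p‖ ^ 2 + ρ ^ 2)⁻¹ ≤ 1 := by
      rw [← div_eq_mul_inv, div_le_one hD]; nlinarith
    have hrat0 : 0 ≤ ρ ^ 2 * (‖p‖ ^ 2 + ρ ^ 2)⁻¹ := by positivity
    have hq0 : 0 ≤ Φ * η / ρ := by positivity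
    by_cases c1 : ‖φ‖ ≤ 2 * κ
    · rw [mul_assoc]
      nlinarith
    · push Not at c1
      by_cases c2 : η ≤ ρ
      · have h1 : 2 * ρ ≤ ‖φ‖ ^ j := by
          calc 2 * ρ ≤ 2 ^ j * κ ^ j := by
                rw [hκj]; gcongr; exact le_self_pow₀ (by norm_num) (by omega)
            _ = (2 * κ) ^ j := by rw [mul_pow]
            _ ≤ _ := by gcongr
        have h2 : ‖φ‖ ^ j ≤ ‖p‖ + η := by
          have := norm_sub_norm_le (φ ^ j) p
          rw [norm_pow, norm_sub_rev] at this
          linarith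
        have h3 : ‖φ‖ ^ j ≤ 2 * ‖p‖ := by linarith
        have h4 : κ ^ (2 * j - 1) ≤ ‖φ‖ ^ (2 * j - 1) := by gcongr; linarith
        have h5 : ‖φ‖ * ρ ^ 2 ≤ κ * (‖φ‖ ^ j) ^ 2 := by
          have e1 : ρ ^ 2 = κ ^ (2 * j - 1) * κ := by
            rw [← hκj, ← pow_succ, ← pow_mul]; congr 1; omega
          have e2 : (‖φ‖ ^ j) ^ 2 = ‖φ‖ ^ (2 * j - 1) * ‖φ‖ := by
            rw [← pow_succ, ← pow_mul]; congr 1; omega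
          rw [e1, e2]
          calc ‖φ‖ * (κ ^ (2 * j - 1) * κ) = (κ * ‖φ‖) * κ ^ (2 * j - 1) := by ring
            _ ≤ (κ * ‖φ‖) * ‖φ‖ ^ (2 * j - 1) := by gcongr
            _ = _ := by ring
        have h6 : ‖φ‖ * ρ ^ 2 * (‖p‖ ^ 2 + ρ ^ 2)⁻¹ ≤ 4 * κ := by
          rw [← div_eq_mul_inv, div_le_iff₀ hD]
          have h7 : (‖φ‖ ^ j) ^ 2 ≤ (2 * ‖p‖) ^ 2 := by gcongr
          have h8 : κ * (‖φ‖ ^ j) ^ 2 ≤ κ * (2 * ‖p‖) ^ 2 := by gcongr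
          have h9 : 0 ≤ κ * ρ ^ 2 := by positivity
          nlinarith
        linarith
      · push Not at c2
        have h1 : Φ ≤ Φ * η / ρ := by
          rw [le_div_iff₀ hρ]; gcongr
        rw [mul_assoc]
        nlinarith
  have t4 : ‖(q - φ ^ (j+1)) - φ * (p - φ ^ j)‖ * ‖p‖ * (‖p‖ ^ 2 + ρ ^ 2)⁻¹ ≤
      (1 + Φ) * η * (1 / ρ) := by
    rw [mul_assoc]
    gcongr
  calc _ ≤ (1 + Φ) * η * (1 / ρ) + (4 * κ + Φ * η / ρ) := add_le_add t4 t3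
    _ = _ := by field_simp; ring

/-- polynomial with given coefficients -/
def polyOf (c : ℕ → ℂ) (p : ℕ) : Polynomial ℂ := ∑ k ∈ Finset.range p, Polynomial.monomial k (c k)

lemma polyOf_eval (c : ℕ → ℂ) (p : ℕ) (z : ℂ) :
    (polyOf c p).eval z = ∑ k ∈ Finset.range p, c k * z ^ k := by
  simp [polyOf, Polynomial.eval_finsetSum]

lemma polyOf_natDegree (c : ℕ → ℂ) (p : ℕ) : (polyOf c p).natDegree ≤ p := by
  unfold polyOf
  apply Polynomial.natDegree_sum_le_of_forall_le
  intro k hk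
  refine (Polynomial.natDegree_monomial_le _).trans ?_
  exact (Finset.mem_range.1 hk).le

lemma polyOf_bound (c : ℕ → ℂ) (p : ℕ) (A : ℝ) (hA : 0 ≤ A)
    (h : ∀ k < p, ‖c k‖ * 4 ^ k ≤ A * (1 / 2) ^ k) (z : ℂ) (hz : ‖z‖ ≤ 4) :
    ‖(polyOf c p).eval z‖ ≤ 2 * A := by
  rw [polyOf_eval]
  refine (norm_sum_le _ _).trans ?_
  calc ∑ k ∈ Finset.range p, ‖c k * z ^ k‖ ≤ ∑ k ∈ Finset.range p, A * (1 / 2) ^ k := by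
        apply Finset.sum_le_sum
        intro k hk
        rw [norm_mul, norm_pow]
        refine le_trans ?_ (h k (Finset.mem_range.1 hk))
        gcongr
    _ = A * ∑ k ∈ Finset.range p, (1 / 2 : ℝ) ^ k := by rw [Finset.mul_sum]
    _ ≤ A * 2 := by
        gcongr
        exact sum_geometric_two_le p
    _ = 2 * A := by ring

lemma local_approx (j : ℕ) (hj : 1 ≤ j) (A : ℝ) (hA : 1 ≤ A) :
    ∃ C : ℝ, 0 < C ∧ ∀ (f : ℝ → ℂ) (x l : ℝ) (p : ℕ) (δ : ℝ) (cg ch : ℕ → ℂ),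
      0 < l → 0 < δ → δ ≤ 1 →
      (∀ k < p, ‖cg k‖ * 4 ^ k ≤ A * (1 / 2) ^ k) →
      (∀ k < p, ‖ch k‖ * 4 ^ k ≤ A * (1 / 2) ^ k) →
      (∀ y : ℝ, |y| ≤ 2 → ‖f (x + l * y)‖ ≤ A) →
      (∀ y : ℝ, |y| ≤ 2 →
        ‖∑ k ∈ Finset.range p, cg k * (y:ℂ) ^ k - f (x + l * y) ^ j‖ ≤ A * δ) →
      (∀ y : ℝ, |y| ≤ 2 →
        ‖∑ k ∈ Finset.range p, ch k * (y:ℂ) ^ k - f (x + l * y) ^ (j + 1)‖ ≤ A * δ) →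
      ∃ G : ℂ → ℂ, DifferentiableOn ℂ G (Metric.ball (x:ℂ) (l / 4)) ∧
        (∀ z ∈ Metric.ball (x:ℂ) (l / 4), ‖G z‖ ≤ C) ∧
        ∀ y : ℝ, |y - x| < l / 4 →
          ‖G y - f y‖ ≤ C * (1 + p) * δ ^ (1 / (4 * (j:ℝ) * (j + 1))) := by
  have hj' : (1:ℝ) ≤ j := by exact_mod_cast hj
  set R : ℝ := (2 * A) ^ (j + 1) with hR
  have hA2 : 1 ≤ 2 * A := by linarith
  have hR1 : 1 ≤ R := one_le_pow₀ hA2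
  have hAR : 2 * A ≤ R := le_self_pow₀ hA2 (by omega)
  set K' : ℝ := 2 * (j + 1) * R ^ (j + 1) * A with hK'
  have hRj : 1 ≤ R ^ (j + 1) := one_le_pow₀ hR1
  have hRA : R ^ (j + 1) ≤ R ^ (j + 1) * A := le_mul_of_one_le_right (by positivity) hA
  have hK'2 : 2 * R ^ (j + 1) ≤ K' := by
    rw [hK']
    have : 0 ≤ R ^ (j + 1) * A := by positivity
    nlinarith
  have hK'1 : 1 ≤ K' := by linarith
  obtain ⟨C, hC, hB⟩ := lemmaB j hj (2 * A) K' hA2 hK'1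
  refine ⟨C + 4 + (1 + 2 * A) * A, by positivity, ?_⟩
  intro f x l p δ cg ch hl hδ hδ1 hcg hch hf hg hh
  set P := polyOf cg p with hP
  set Q := polyOf ch p with hQ
  have bP : ∀ z : ℂ, ‖z‖ ≤ 4 → ‖P.eval z‖ ≤ 2 * A := polyOf_bound cg p A (by linarith) hcg
  have bQ : ∀ z : ℂ, ‖z‖ ≤ 4 → ‖Q.eval z‖ ≤ 2 * A := polyOf_bound ch p A (by linarith) hch
  set τ := 1 / (4 * (j:ℝ) * (j + 1)) with hτ
  set ρ := δ ^ (1 / (2 * ((j:ℝ) + 1))) with hρd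
  have hρ : 0 < ρ := by positivity
  have hρ1 : ρ ≤ 1 := Real.rpow_le_one hδ.le hδ1 (by positivity)
  have hρp : ρ ^ (j + 1) = Real.sqrt δ := by
    rw [Real.sqrt_eq_rpow, hρd, ← Real.rpow_natCast, ← Real.rpow_mul hδ.le]
    congr 1; push_cast; field_simp
  have two := two_const (fun z => P.eval z ^ (j + 1) - Q.eval z ^ j) 0 2 K' (K' * δ) (by norm_num)
    (((P.differentiable.pow (j + 1)).sub (Q.differentiable.pow j)).differentiableOn)
    (fun z hz => by
      have hz4 : ‖z‖ ≤ 4 := by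
        rw [Complex.ofReal_zero, mem_ball_zero_iff] at hz; linarith
      refine (norm_sub_le _ _).trans ?_
      rw [norm_pow, norm_pow]
      have h1 : ‖P.eval z‖ ^ (j + 1) ≤ R ^ (j + 1) := by
        have := (bP z hz4).trans hAR
        gcongr
      have h2 : ‖Q.eval z‖ ^ j ≤ R ^ (j + 1) :=
        (pow_le_pow_left₀ (norm_nonneg _) ((bQ z hz4).trans hAR) j).trans
          (pow_le_pow_right₀ hR1 (by omega))
      linarith)
    (by positivity) (mul_le_of_le_one_right (by linarith) hδ1)
    (fun y hy => by
      rw [sub_zero] at hy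
      have hy4 : ‖(y:ℂ)‖ ≤ 4 := by rw [Complex.norm_real, Real.norm_eq_abs]; linarith
      have hfy := hf y hy
      have g1 := hg y hy
      have g2 := hh y hy
      rw [← polyOf_eval] at g1 g2
      set φ := f (x + l * y)
      have n1 : ‖φ ^ j‖ ≤ R := by
        rw [norm_pow]
        exact (pow_le_pow_left₀ (norm_nonneg _) (hfy.trans (by linarith)) j).trans
          (pow_le_pow_right₀ hA2 (by omega))
      have n2 : ‖φ ^ (j + 1)‖ ≤ R := by
        rw [norm_pow]
        exact (pow_le_pow_left₀ (norm_nonneg _) (hfy.trans (by linarith)) (j + 1))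
      have d1 := norm_pow_sub_pow_le_aux (P.eval (y:ℂ)) (φ ^ j) R hR1 ((bP _ hy4).trans hAR) n1
        (j + 1)
      have d2 := norm_pow_sub_pow_le_aux (Q.eval (y:ℂ)) (φ ^ (j + 1)) R hR1
        ((bQ _ hy4).trans hAR) n2 j
      have e : P.eval (y:ℂ) ^ (j + 1) - Q.eval (y:ℂ) ^ j =
        (P.eval (y:ℂ) ^ (j + 1) - (φ ^ j) ^ (j + 1)) -
        (Q.eval (y:ℂ) ^ j - (φ ^ (j + 1)) ^ j) := by ring
      show ‖P.eval (y:ℂ) ^ (j + 1) - Q.eval (y:ℂ) ^ j‖ ≤ _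
      rw [e]
      refine (norm_sub_le _ _).trans ?_
      have d1' : ‖P.eval (y:ℂ) ^ (j + 1) - (φ ^ j) ^ (j + 1)‖ ≤
          (j + 1) * R ^ (j + 1) * (A * δ) := by
        refine d1.trans ?_
        push_cast
        gcongr
      have d2' : ‖Q.eval (y:ℂ) ^ j - (φ ^ (j + 1)) ^ j‖ ≤ (j + 1) * R ^ (j + 1) * (A * δ) := by
        refine d2.trans ?_
        have : R ^ j ≤ R ^ (j + 1) := pow_le_pow_right₀ hR1 (by omega)
        have : (j:ℝ) ≤ j + 1 := by linarith
        gcongr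
      calc _ ≤ (j + 1) * R ^ (j + 1) * (A * δ) + (j + 1) * R ^ (j + 1) * (A * δ) :=
            add_le_add d1' d2'
        _ = K' * δ := by rw [hK']; ring)
  have hsq : Real.sqrt (K' * (K' * δ)) = K' * Real.sqrt δ := by
    rw [← mul_assoc, Real.sqrt_mul (by positivity), Real.sqrt_mul_self (by linarith)]
  rw [hsq] at two
  obtain ⟨F, F1, F2, F3⟩ := hB P Q ρ hρ hρ1
    (fun ζ hζ => bP ζ (by rw [mem_closedBall_zero_iff] at hζ; linarith))
    (fun ζ hζ => by
      rw [mem_closedBall_zero_iff] at hζ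
      have := Complex.norm_deriv_le_of_forall_mem_sphere_norm_le (c := ζ) (R := 1) (C := 2 * A)
        (f := fun z => P.eval z) one_pos P.differentiable.diffContOnCl
        (fun z hz => bP z (by
          rw [mem_sphere_iff_norm] at hz
          have := norm_sub_norm_le z ζ
          linarith))
      rw [Polynomial.deriv] at this
      simpa using this)
    (fun ζ hζ => by
      rw [hρp]
      rw [mem_closedBall_zero_iff] at hζ
      exact two ζ (by simpa using hζ))
  have hl' : (l:ℂ) ≠ 0 := by exact_mod_cast hl.ne'
  have hmaps : ∀ z ∈ Metric.ball (x:ℂ) (l / 4), (z - x) / l ∈ Metric.ball (0:ℂ) (1 / 4) := by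
    intro z hz
    rw [mem_ball_iff_norm] at hz
    rw [mem_ball_zero_iff, norm_div, Complex.norm_real, Real.norm_of_nonneg hl.le, div_lt_iff₀ hl]
    linarith
  refine ⟨fun z => F ((z - x) / l), ?_, ?_, ?_⟩
  · refine F1.comp ?_ hmaps
    exact ((differentiable_id.sub_const _).div_const _).differentiableOn
  · intro z hz
    refine (F2 _ (hmaps z hz)).trans ?_
    have : 0 ≤ (1 + 2 * A) * A := by positivity
    linarith
  · intro y hy
    have hym : (y:ℂ) ∈ Metric.ball (x:ℂ) (l / 4) := by
      rw [mem_ball_iff_norm, ← Complex.ofReal_sub, Complex.norm_real]; exact hy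
    set w : ℝ := (y - x) / l with hw
    have hwc : ((y:ℂ) - x) / l = (w:ℂ) := by rw [hw]; push_cast; rfl
    have hwm := hmaps _ hym
    rw [hwc] at hwm
    have hxw : x + l * w = y := by rw [hw]; field_simp; ring
    have hw2 : |w| ≤ 2 := by
      rw [mem_ball_zero_iff, Complex.norm_real, Real.norm_eq_abs] at hwm; linarith
    have f3 := F3 _ hwm
    have g1 := hg w hw2
    have g2 := hh w hw2
    have hfw := hf w hw2
    rw [← polyOf_eval, hxw] at g1 g2
    rw [hxw] at hfw
    have un := uval_near j hj ρ (A * δ) A hρ (by positivity) (f y) _ _ hfw g1 g2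
    simp only
    rw [hwc]
    have hτ0 : 0 < τ := by positivity
    have δτ : 0 < δ ^ τ := by positivity
    have r1 : ρ ^ (1 / (2 * (j:ℝ))) = δ ^ τ := by
      rw [hρd, ← Real.rpow_mul hδ.le]; congr 1; rw [hτ]; field_simp; try norm_num
    have r2 : ρ ^ (1 / (j:ℝ)) ≤ δ ^ τ := by
      rw [← r1]
      apply Real.rpow_le_rpow_of_exponent_ge hρ hρ1
      apply one_div_le_one_div_of_le <;> linarith
    have r3 : δ / ρ ≤ δ ^ τ := by
      rw [hρd]
      nth_rewrite 1 [← Real.rpow_one δ]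
      rw [← Real.rpow_sub hδ]
      apply Real.rpow_le_rpow_of_exponent_ge hδ hδ1
      have a1 : 1 / (2 * ((j:ℝ) + 1)) ≤ 1 / 4 := by
        apply one_div_le_one_div_of_le <;> linarith
      have a2 : τ ≤ 1 / 8 := by
        rw [hτ]; apply one_div_le_one_div_of_le <;> nlinarith
      linarith
    have hdeg : (P.natDegree : ℝ) ≤ p := by exact_mod_cast polyOf_natDegree cg p
    rw [r1] at f3
    have q1 : C * P.natDegree * δ ^ τ ≤ C * p * δ ^ τ := by gcongr
    have q2 : (1 + 2 * A) * (A * δ) / ρ ≤ (1 + 2 * A) * A * δ ^ τ := by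
      calc _ = (1 + 2 * A) * A * (δ / ρ) := by ring
        _ ≤ _ := by gcongr
    have tri := norm_add_le (F w - uval ρ (P.eval (w:ℂ)) (Q.eval (w:ℂ)))
      (uval ρ (P.eval (w:ℂ)) (Q.eval (w:ℂ)) - f y)
    rw [sub_add_sub_cancel] at tri
    have q3 : 0 ≤ (C + 4 + (1 + 2 * A) * A) * p * δ ^ τ := by positivity
    have q4 : C * p * δ ^ τ ≤ (C + 4 + (1 + 2 * A) * A) * p * δ ^ τ := by
      gcongr
      have : 0 ≤ (1 + 2 * A) * A := by positivity
      linarith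
    have q5 : 0 ≤ C * δ ^ τ := by positivity
    have q6 : (C + 4 + (1 + 2 * A) * A) * (1 + p) * δ ^ τ =
      C * δ ^ τ + 4 * δ ^ τ + (1 + 2 * A) * A * δ ^ τ + (C + 4 + (1 + 2 * A) * A) * p * δ ^ τ := by
      ring
    rw [q6]
    have q7 : 4 * ρ ^ (1 / (j:ℝ)) ≤ 4 * δ ^ τ := by linarith
    exact tri.trans (by linarith)


lemma hFun_attained (m : ℕ → ℝ) (hm : ∀ k, 0 < m k) (hr : RootTendsToInfty m) (t : ℝ) (ht : 0 < t) :
    hFun m t = m (GammaBar m t) * t ^ (GammaBar m t) := by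
  have htend : Tendsto (fun k : ℕ => m k * t ^ k) cofinite atTop := by
    rw [Nat.cofinite_eq_atTop]
    have h2 : Tendsto (fun k : ℕ => (2:ℝ) ^ k) atTop atTop :=
      tendsto_pow_atTop_atTop_of_one_lt (by norm_num)
    refine tendsto_atTop_mono' _ ?_ h2
    have h3 := hr.eventually_ge_atTop (2 / t)
    filter_upwards [h3, eventually_gt_atTop 0] with k hk hk0
    have hk0' : (k:ℝ) ≠ 0 := by exact_mod_cast hk0.ne'
    have h4 : (2 / t) ^ k ≤ m k := by
      calc (2 / t) ^ k ≤ (m k ^ (1 / (k:ℝ))) ^ k := by gcongr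
        _ = m k := by
          rw [← Real.rpow_natCast, ← Real.rpow_mul (hm k).le, one_div, inv_mul_cancel₀ hk0',
            Real.rpow_one]
    calc (2:ℝ) ^ k = (2 / t) ^ k * t ^ k := by rw [← mul_pow, div_mul_cancel₀ _ ht.ne']
      _ ≤ _ := by gcongr
  obtain ⟨k0, hk0⟩ := htend.exists_forall_le
  have hne : {k : ℕ | hFun m t = m k * t ^ k}.Nonempty := by
    refine ⟨k0, ?_⟩
    show (⨅ k : ℕ, m k * t ^ k) = _
    apply le_antisymm
    · exact ciInf_le ⟨m k0 * t ^ k0, by rintro _ ⟨k, rfl⟩; exact hk0 k⟩ k0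
    · exact le_ciInf hk0
  exact Nat.sInf_mem hne

lemma hFun_le (m : ℕ → ℝ) (hm : ∀ k, 0 < m k) (t : ℝ) (ht : 0 < t) (a : ℕ) :
    hFun m t ≤ m a * t ^ a := by
  refine ciInf_le ⟨0, ?_⟩ a
  rintro _ ⟨k, rfl⟩
  have := hm k
  positivity

lemma ratio_chain (m : ℕ → ℝ) (hm : ∀ k, 0 < m k) (μ : ℝ) (hμ : 0 < μ) (p n : ℕ)
    (h : ∀ i, p ≤ i → i < p + n → m (i + 1) / m i ≤ μ) : m (p + n) ≤ m p * μ ^ n := by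
  induction n with
  | zero => simp
  | succ n ih =>
    have h1 := ih (fun i hi hi2 => h i hi (by omega))
    have h2 := h (p + n) (by omega) (by omega)
    rw [div_le_iff₀ (hm _)] at h2
    calc m (p + (n + 1)) ≤ μ * m (p + n) := h2
      _ ≤ μ * (m p * μ ^ n) := by gcongr
      _ = _ := by ring

lemma seq_N0 (m1 m2 : ℕ → ℝ) (h1 : ∀ k, 0 < m1 k) (h2 : ∀ k, 0 < m2 k) (h10 : m1 0 = 1)
    (h20 : m2 0 = 1) (hr : RootTendsToInfty m2) (B : ℝ) (hB : 1 ≤ B)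
    (hG : ∀ t : ℝ, 0 < t → GammaBar m2 (B * t) ≤ GammaLow m1 t) (k : ℕ) :
    m1 k ≤ B ^ k * m2 k := by
  induction k using Nat.strong_induction_on with
  | _ k ih =>
    rcases Nat.eq_zero_or_pos k with rfl | hk
    · simp [h10, h20]
    · obtain ⟨i0, hi0, hmax⟩ := Finset.exists_max_image (Finset.range k)
        (fun i => m1 (i + 1) / m1 i) ⟨0, Finset.mem_range.2 hk⟩
      rw [Finset.mem_range] at hi0
      set μ := m1 (i0 + 1) / m1 i0 with hμ
      have hμ0 : 0 < μ := div_pos (h1 _) (h1 _)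
      have hlow : GammaLow m1 (1 / μ) ≤ i0 := by
        apply Nat.sInf_le
        show 1 / (1 / μ) ≤ _
        rw [one_div_one_div]
      have hpG := hG (1 / μ) (by positivity)
      have hBt : 0 < B * (1 / μ) := by positivity
      have hatt := hFun_attained m2 h2 hr _ hBt
      have hle := hFun_le m2 h2 _ hBt k
      rw [hatt] at hle
      set p := GammaBar m2 (B * (1 / μ)) with hp
      have hpk : p < k := by omega
      obtain ⟨n, rfl⟩ := Nat.exists_eq_add_of_lt hpk
      have hr1 := ratio_chain m1 h1 μ hμ0 p (n + 1) (fun i _ hi2 => hmax i (Finset.mem_range.2 (by omega)))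
      have hihp := ih p hpk
      have e1 : p + n + 1 = p + (n + 1) := by omega
      rw [e1] at hle ⊢
      have key : m2 p * B ^ p * μ ^ (n + 1) ≤ m2 (p + (n + 1)) * B ^ (p + (n + 1)) := by
        have := mul_le_mul_of_nonneg_right hle (by positivity : 0 ≤ μ ^ (p + (n + 1)))
        have e2 : m2 p * (B * (1 / μ)) ^ p * μ ^ (p + (n + 1)) = m2 p * B ^ p * μ ^ (n + 1) := by
          rw [mul_pow, pow_add μ, one_div, inv_pow]; field_simp
        have e3 : m2 (p + (n + 1)) * (B * (1 / μ)) ^ (p + (n + 1)) * μ ^ (p + (n + 1)) =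
            m2 (p + (n + 1)) * B ^ (p + (n + 1)) := by
          rw [mul_pow, one_div, inv_pow]; field_simp
        rw [e2, e3] at this
        exact this
      calc m1 (p + (n + 1)) ≤ m1 p * μ ^ (n + 1) := hr1
        _ ≤ (B ^ p * m2 p) * μ ^ (n + 1) := by gcongr
        _ = m2 p * B ^ p * μ ^ (n + 1) := by ring
        _ ≤ _ := key
        _ = _ := by ring

lemma seq_key (m1 m2 : ℕ → ℝ) (h1 : ∀ k, 0 < m1 k) (h2 : ∀ k, 0 < m2 k) (h10 : m1 0 = 1)
    (h20 : m2 0 = 1) (hr : RootTendsToInfty m2) (B : ℝ) (hB : 1 ≤ B)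
    (hG : ∀ t : ℝ, 0 < t → GammaBar m2 (B * t) ≤ GammaLow m1 t) (t : ℝ) (ht : 0 < t) :
    ∃ p : ℕ, (∀ k ≤ p, m1 k * t ^ k ≤ 1) ∧ ∀ a, m1 p * t ^ p ≤ m2 a * (B * t) ^ a := by
  have hBt : 0 < B * t := by positivity
  refine ⟨GammaBar m2 (B * t), ?_, ?_⟩
  · intro k hk
    have := ratio_chain m1 h1 (1 / t) (by positivity) 0 k (fun i _ hi => by
      have hi' : i < GammaLow m1 t := by
        have := hG t ht
        omega
      have := Nat.notMem_of_lt_sInf hi'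
      simp only [mem_ofPred_eq, not_le] at this
      exact this.le)
    rw [zero_add, h10, one_mul] at this
    calc m1 k * t ^ k ≤ (1 / t) ^ k * t ^ k := by gcongr
      _ = 1 := by rw [← mul_pow, one_div, inv_mul_cancel₀ ht.ne', one_pow]
  · intro a
    have hatt := hFun_attained m2 h2 hr _ hBt
    have hle := hFun_le m2 h2 _ hBt a
    have := seq_N0 m1 m2 h1 h2 h10 h20 hr B hB hG (GammaBar m2 (B * t))
    rw [hatt] at hle
    refine le_trans ?_ hle
    rw [mul_pow]
    calc _ ≤ (B ^ (GammaBar m2 (B * t)) * m2 (GammaBar m2 (B * t))) * t ^ (GammaBar m2 (B * t)) := by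
          gcongr
      _ = _ := by ring

lemma mg_step (M N : ℕ → ℝ) (hM : ∀ k, 0 < M k) (hN : ∀ k, 0 < N k) (hM0 : M 0 = 1)
    (hN0 : N 0 = 1) (h : MgFinite M N) :
    ∃ C : ℝ, 1 ≤ C ∧ ∀ a, mseq M (2 * a) ≤ C ^ a * mseq N a ^ 2 := by
  obtain ⟨b, hb⟩ := h
  have hm1 : 1 ≤ max 1 b := le_max_left _ _
  refine ⟨(max 1 b) ^ 2, one_le_pow₀ hm1, ?_⟩
  have hmain : ∀ a, M (2 * a) ≤ ((max 1 b) ^ 2) ^ a * (N a) ^ 2 := by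
    intro a
    rcases Nat.eq_zero_or_pos a with rfl | ha
    · simp [hM0, hN0]
    have h1 : (M (a + a) / (N a * N a)) ^ (1 / ((a:ℝ) + a)) ≤ b := hb ⟨a, a, by omega, rfl⟩
    have hpos : 0 < M (a + a) / (N a * N a) := div_pos (hM _) (mul_pos (hN _) (hN _))
    have h2 : M (a + a) / (N a * N a) ≤ (max 1 b) ^ (a + a) := by
      have ha0 : ((a:ℝ) + a) ≠ 0 := by positivity
      calc M (a + a) / (N a * N a) = ((M (a + a) / (N a * N a)) ^ (1 / ((a:ℝ) + a))) ^ (a + a) := by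
            rw [← Real.rpow_natCast, ← Real.rpow_mul hpos.le]
            push_cast
            rw [one_div, inv_mul_cancel₀ ha0, Real.rpow_one]
        _ ≤ _ := by
            gcongr
            exact h1.trans (le_max_right _ _)
    rw [div_le_iff₀ (mul_pos (hN _) (hN _))] at h2
    rw [two_mul, ← pow_mul, sq, two_mul]
    exact h2
  intro a
  have hf : ((a.factorial : ℝ)) ^ 2 ≤ ((2 * a).factorial : ℝ) := by
    have := Nat.le_of_dvd (Nat.factorial_pos _) (Nat.factorial_mul_factorial_dvd_factorial_add a a)
    rw [sq, two_mul]
    exact_mod_cast this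
  have hfp : (0:ℝ) < (a.factorial : ℝ) ^ 2 := by positivity
  unfold mseq
  rw [div_pow, ← mul_div_assoc]
  exact div_le_div₀ (by positivity) (hmain a) hfp hf

lemma mg_chain (M : ℕ → ℕ → ℝ) (k : ℕ)
    (hpos : ∀ i : ℕ, 1 ≤ i → i ≤ k → (∀ a, 0 < M i a) ∧ M i 0 = 1)
    (hmg : ∀ i : ℕ, 2 ≤ i → i ≤ k - 1 → MgFinite (M i) (M (i + 1))) (n : ℕ) (hn : 2 + n ≤ k) :
    ∃ H : ℝ, 1 ≤ H ∧ ∀ a, mseq (M 2) (2 ^ n * a) ≤ H ^ a * mseq (M (2 + n)) a ^ (2 ^ n) := by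
  induction n with
  | zero => exact ⟨1, le_rfl, fun a => by simp⟩
  | succ n ih =>
    obtain ⟨H, hH, h1⟩ := ih (by omega)
    obtain ⟨p1, z1⟩ := hpos (2 + n) (by omega) (by omega)
    obtain ⟨p2, z2⟩ := hpos (2 + n + 1) (by omega) (by omega)
    obtain ⟨C, hC, h2⟩ := mg_step (M (2 + n)) (M (2 + n + 1)) p1 p2 z1 z2
      (hmg (2 + n) (by omega) (by omega))
    refine ⟨H ^ 2 * C ^ (2 ^ n), ?_, ?_⟩
    · exact one_le_mul_of_one_le_of_one_le (one_le_pow₀ hH) (one_le_pow₀ hC)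
    · intro a
      have e : 2 ^ (n + 1) * a = 2 ^ n * (2 * a) := by ring
      rw [e]
      have hnn : 0 ≤ mseq (M (2 + n)) (2 * a) := by
        have := p1 (2 * a)
        unfold mseq; positivity
      calc _ ≤ H ^ (2 * a) * mseq (M (2 + n)) (2 * a) ^ 2 ^ n := h1 (2 * a)
        _ ≤ H ^ (2 * a) * (C ^ a * mseq (M (2 + n + 1)) a ^ 2) ^ 2 ^ n := by
          gcongr
          exact h2 a
        _ = (H ^ 2 * C ^ 2 ^ n) ^ a * mseq (M (2 + (n + 1))) a ^ 2 ^ (n + 1) := by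
          rw [mul_pow, mul_pow, ← pow_mul, ← pow_mul, ← pow_mul, ← pow_mul, pow_succ,
            mul_comm a (2 ^ n), mul_comm 2 (2 ^ n), mul_assoc]
          rfl

lemma seq_main (k : ℕ) (hk : 2 ≤ k) (M : ℕ → ℕ → ℝ)
    (hws : ∀ i : ℕ, 1 ≤ i → i ≤ k → IsWeightSeq (M i))
    (hroot : ∀ i : ℕ, 1 ≤ i → i ≤ k → RootTendsToInfty (mseq (M i)))
    (hB : ∃ B : ℝ, 1 ≤ B ∧
      ∀ t : ℝ, 0 < t → GammaBar (mseq (M 2)) (B * t) ≤ GammaLow (mseq (M 1)) t)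
    (hmg : ∀ i : ℕ, 2 ≤ i → i ≤ k - 1 → MgFinite (M i) (M (i + 1))) :
    ∃ D : ℝ, 0 < D ∧ ∀ t : ℝ, 0 < t → ∃ p : ℕ, (∀ i ≤ p, mseq (M 1) i * t ^ i ≤ 1) ∧
      ∀ a, mseq (M 1) p * t ^ p ≤ (mseq (M k) a * (D * t) ^ a) ^ (2 ^ (k - 2)) := by
  obtain ⟨B, hB1, hG⟩ := hB
  have hpos : ∀ i : ℕ, 1 ≤ i → i ≤ k → (∀ a, 0 < M i a) ∧ M i 0 = 1 :=
    fun i h1 h2 => ⟨(hws i h1 h2).2.1, (hws i h1 h2).1⟩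
  have hmpos : ∀ i : ℕ, 1 ≤ i → i ≤ k → (∀ a, 0 < mseq (M i) a) ∧ mseq (M i) 0 = 1 := by
    intro i h1 h2
    obtain ⟨h3, h4⟩ := hpos i h1 h2
    refine ⟨fun a => ?_, ?_⟩
    · have := h3 a
      unfold mseq; positivity
    · simp [mseq, h4]
  obtain ⟨n, rfl⟩ := Nat.exists_eq_add_of_le hk
  obtain ⟨H, hH, hch⟩ := mg_chain M (2 + n) hpos hmg n le_rfl
  refine ⟨H * B, by positivity, ?_⟩
  intro t ht
  obtain ⟨a1, b1⟩ := hmpos 1 (by omega) (by omega)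
  obtain ⟨a2, b2⟩ := hmpos 2 (by omega) (by omega)
  obtain ⟨a3, b3⟩ := hmpos (2 + n) (by omega) (by omega)
  obtain ⟨p, hp1, hp2⟩ := seq_key _ _ a1 a2 b1 b2 (hroot 2 (by omega) (by omega)) B hB1 hG t ht
  refine ⟨p, hp1, fun a => ?_⟩
  have e : 2 + n - 2 = n := by omega
  rw [e]
  have hw := a3 a
  have hHa : H ^ a ≤ H ^ (2 ^ n * a) := pow_le_pow_right₀ hH (Nat.le_mul_of_pos_left _ (by positivity))
  calc _ ≤ mseq (M 2) (2 ^ n * a) * (B * t) ^ (2 ^ n * a) := hp2 _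
    _ ≤ (H ^ a * mseq (M (2 + n)) a ^ (2 ^ n)) * (B * t) ^ (2 ^ n * a) := by
      gcongr
      exact hch a
    _ ≤ (H ^ (2 ^ n * a) * mseq (M (2 + n)) a ^ (2 ^ n)) * (B * t) ^ (2 ^ n * a) := by
      gcongr
    _ = _ := by
      rw [mul_pow (mseq (M (2 + n)) a), ← pow_mul (H * B * t), mul_comm a (2 ^ n), mul_assoc H B t,
        mul_pow H]
      ring


lemma taylor_hasDeriv (g : ℕ → ℝ → ℂ) (S : Set ℝ)
    (hg : ∀ k, ∀ x ∈ S, HasDerivAt (g k) (g (k + 1) x) x) (y s : ℝ) (hs : s ∈ S) (n : ℕ) :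
    HasDerivAt (fun s : ℝ => ∑ k ∈ Finset.range (n + 1), g k s / (k.factorial : ℂ) * ((y:ℂ) - s) ^ k)
      (g (n + 1) s / (n.factorial : ℂ) * ((y:ℂ) - s) ^ n) s := by
  have hsub : HasDerivAt (fun s : ℝ => (y:ℂ) - s) (-1) s :=
    (Complex.ofRealCLM.hasDerivAt (x := s)).const_sub (y:ℂ)
  induction n with
  | zero => simpa using hg 0 s hs
  | succ n ih =>
    have h1 := ((hg (n + 1) s hs).div_const (((n + 1).factorial : ℂ))).mul (hsub.pow (n + 1))
    have h2 := ih.add h1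
    have hf1 : ((n.factorial : ℕ) : ℂ) ≠ 0 := by exact_mod_cast n.factorial_ne_zero
    have hn1 : ((n:ℂ) + 1) ≠ 0 := by exact_mod_cast n.succ_ne_zero
    refine (h2.congr_deriv ?_).congr_of_eventuallyEq (Filter.Eventually.of_forall fun u => ?_)
    · simp only [Nat.factorial_succ, Nat.cast_mul, Nat.cast_add, Nat.cast_one, Nat.add_sub_cancel]
      field_simp
      simp only [Pi.pow_apply]
      ring
    · simp [Finset.sum_range_succ]

lemma taylor_bound (g : ℕ → ℝ → ℂ) (S : Set ℝ) (hS : Convex ℝ S)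
    (hg : ∀ k, ∀ x ∈ S, HasDerivAt (g k) (g (k + 1) x) x) (x y : ℝ) (hx : x ∈ S) (hy : y ∈ S)
    (n : ℕ) (C : ℝ) (hC : ∀ z ∈ S, ‖g (n + 1) z‖ ≤ C) :
    ‖∑ k ∈ Finset.range (n + 1), g k x / (k.factorial : ℂ) * ((y:ℂ) - x) ^ k - g 0 y‖ ≤
      C / n.factorial * |y - x| ^ (n + 1) := by
  have hC0 : 0 ≤ C := (norm_nonneg _).trans (hC x hx)
  have hsub : uIcc y x ⊆ S := by
    rw [← segment_eq_uIcc]; exact hS.segment_subset hy hx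
  have := (convex_uIcc y x).norm_image_sub_le_of_norm_hasDerivWithin_le
    (f := fun s : ℝ => ∑ k ∈ Finset.range (n + 1), g k s / (k.factorial : ℂ) * ((y:ℂ) - s) ^ k)
    (f' := fun s => g (n + 1) s / (n.factorial : ℂ) * ((y:ℂ) - s) ^ n)
    (C := C / n.factorial * |y - x| ^ n) (x := y) (y := x)
    (fun s hs => (taylor_hasDeriv g S hg y s (hsub hs) n).hasDerivWithinAt)
    (fun s hs => by
      rw [norm_mul, norm_div, norm_pow, Complex.norm_natCast, ← Complex.ofReal_sub,
        Complex.norm_real, Real.norm_eq_abs]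
      have h1 := hC s (hsub hs)
      have h2 : |y - s| ≤ |y - x| := by
        rw [abs_sub_comm y s, abs_sub_comm y x]
        exact abs_sub_left_of_mem_uIcc hs
      gcongr)
    left_mem_uIcc right_mem_uIcc
  have e : ∑ k ∈ Finset.range (n + 1), g k y / (k.factorial : ℂ) * ((y:ℂ) - y) ^ k = g 0 y := by
    rw [Finset.sum_range_succ']
    simp
  simp only [e] at this
  refine this.trans (le_of_eq ?_)
  rw [Real.norm_eq_abs, abs_sub_comm x y]
  ring

/-- Taylor estimate in the normalized form used for the local approximation. -/
lemma taylor_local (g : ℕ → ℝ → ℂ) (A σ : ℝ) (m : ℕ → ℝ) (hA : 0 ≤ A) (hσ : 0 < σ)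
    (hm : ∀ k, 0 < m k) (hm0 : m 0 = 1)
    (hg : ∀ k, ∀ x ∈ Ioo (-1:ℝ) 1, HasDerivAt (g k) (g (k + 1) x) x)
    (hb : ∀ k, ∀ x ∈ Ioo (-1:ℝ) 1, ‖g k x‖ ≤ A * σ ^ k * (k.factorial * m k))
    (x l : ℝ) (hx : x ∈ Ioo (-1:ℝ) 1) (hl : 0 < l) (p : ℕ)
    (hp : ∀ i ≤ p, m i * (8 * σ * l) ^ i ≤ 1) :
    (∀ k < p, ‖g k x / (k.factorial : ℂ) * (l:ℂ) ^ k‖ * 4 ^ k ≤ A * (1 / 2) ^ k) ∧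
    ∀ y : ℝ, |y| ≤ 2 → x + l * y ∈ Ioo (-1:ℝ) 1 →
      ‖∑ k ∈ Finset.range p, (g k x / (k.factorial : ℂ) * (l:ℂ) ^ k) * (y:ℂ) ^ k - g 0 (x + l * y)‖ ≤
        A * (m p * (8 * σ * l) ^ p * (1 / 2) ^ p) := by
  constructor
  · intro k hk
    have h1 := hb k x hx
    have h2 := hp k hk.le
    have hmk := hm k
    have hfp : (0:ℝ) < k.factorial := by exact_mod_cast k.factorial_pos
    rw [norm_mul, norm_div, norm_pow, Complex.norm_natCast, Complex.norm_real,
      Real.norm_of_nonneg hl.le]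
    calc ‖g k x‖ / k.factorial * l ^ k * 4 ^ k
        ≤ (A * σ ^ k * (k.factorial * m k)) / k.factorial * l ^ k * 4 ^ k := by gcongr
      _ = A * (m k * (8 * σ * l) ^ k) * (1 / 2) ^ k := by
        have : (8 * σ * l) ^ k = σ ^ k * l ^ k * 4 ^ k * 2 ^ k := by
          rw [← mul_pow, ← mul_pow, ← mul_pow]; congr 1; ring
        rw [this, one_div, inv_pow]; field_simp
      _ ≤ A * 1 * (1 / 2) ^ k := by gcongr
      _ = _ := by ring
  · intro y hy hxy
    rcases p with _ | n
    · have := hb 0 (x + l * y) hxy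
      simpa [hm0] using this
    · have tb := taylor_bound g (Ioo (-1) 1) (convex_Ioo _ _) hg x (x + l * y) hx hxy n
        (A * σ ^ (n + 1) * ((n + 1).factorial * m (n + 1))) (hb (n + 1))
      have e1 : ∀ k, g k x / (k.factorial : ℂ) * (l:ℂ) ^ k * (y:ℂ) ^ k =
          g k x / (k.factorial : ℂ) * (((x + l * y : ℝ) : ℂ) - x) ^ k := by
        intro k
        rw [mul_assoc, ← mul_pow]; congr 2; push_cast; ring
      simp only [e1]
      refine tb.trans ?_
      have hmk := hm (n + 1)
      have e2 : |x + l * y - x| ≤ l * 2 := by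
        rw [add_sub_cancel_left, abs_mul, abs_of_pos hl]; gcongr
      have hn2 : ((n:ℝ) + 1) ≤ 2 ^ (n + 1) := by
        have : n + 1 < 2 ^ (n + 1) := Nat.lt_two_pow_self
        exact_mod_cast this.le
      have hfp : (0:ℝ) < n.factorial := by exact_mod_cast n.factorial_pos
      calc _ ≤ A * σ ^ (n + 1) * ((n + 1).factorial * m (n + 1)) / n.factorial * (l * 2) ^ (n + 1) := by
            gcongr
        _ = A * (m (n + 1) * (2 * σ * l) ^ (n + 1)) * (n + 1) := by
            rw [Nat.factorial_succ]; push_cast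
            have : (2 * σ * l) ^ (n + 1) = σ ^ (n + 1) * (l * 2) ^ (n + 1) := by
              rw [← mul_pow]; congr 1; ring
            rw [this]; field_simp
        _ ≤ A * (m (n + 1) * (2 * σ * l) ^ (n + 1)) * 2 ^ (n + 1) := by gcongr
        _ = _ := by
            have : (8 * σ * l) ^ (n + 1) = (2 * σ * l) ^ (n + 1) * 2 ^ (n + 1) * 2 ^ (n + 1) := by
              rw [← mul_pow, ← mul_pow]; congr 1; ring
            rw [this, one_div, inv_pow]; field_simp


lemma poly_exp_bound (s : ℝ) (hs : 0 < s) (p : ℕ) (δ : ℝ) (hδ : 0 < δ) (h : δ ≤ (1 / 2) ^ p) :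
    (1 + p) * δ ^ s ≤ 1 + 1 / (s * Real.log 2) := by
  have hl : 0 < Real.log 2 := Real.log_pos (by norm_num)
  set c := s * Real.log 2 with hc
  have hc0 : 0 < c := by positivity
  have h1 : δ ^ s ≤ Real.exp (-(c * p)) := by
    rw [Real.rpow_def_of_pos hδ]
    apply Real.exp_le_exp.2
    have h2 : Real.log δ ≤ -(p * Real.log 2) := by
      have := Real.log_le_log hδ h
      rw [Real.log_pow, one_div, Real.log_inv] at this
      linarith
    have := mul_le_mul_of_nonneg_right h2 hs.le
    rw [hc]; linarith
  have h3 : 1 + c * p ≤ Real.exp (c * p) := by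
    have := Real.add_one_le_exp (c * p); linarith
  have hp : (0:ℝ) ≤ p := Nat.cast_nonneg p
  have h4 : (1:ℝ) + p ≤ (1 + 1 / c) * (1 + c * p) := by
    have : (1 + 1 / c) * (1 + c * p) = 1 + c * p + 1 / c + p := by field_simp; ring
    rw [this]
    have : 0 ≤ c * p := by positivity
    have : 0 ≤ 1 / c := by positivity
    linarith
  calc (1 + p) * δ ^ s ≤ ((1 + 1 / c) * Real.exp (c * p)) * Real.exp (-(c * p)) := by
        gcongr
        exact h4.trans (by gcongr)
    _ = 1 + 1 / c := by rw [mul_assoc, ← Real.exp_add]; simp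

lemma propD (j : ℕ) (hj : 1 ≤ j) (q : ℕ) (hq : 32 * (j * (j + 1)) ≤ q) (m w : ℕ → ℝ)
    (hm : ∀ k, 0 < m k) (hm0 : m 0 = 1) (hw : ∀ k, 0 < w k) (D : ℝ) (hD : 0 < D)
    (hkey : ∀ t : ℝ, 0 < t → ∃ p : ℕ, (∀ i ≤ p, m i * t ^ i ≤ 1) ∧
      ∀ a, m p * t ^ p ≤ (w a * (D * t) ^ a) ^ q)
    (f : ℝ → ℂ) (g h : ℕ → ℝ → ℂ) (hg0 : ∀ x, g 0 x = f x ^ j) (hh0 : ∀ x, h 0 x = f x ^ (j + 1))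
    (hg : ∀ k, ∀ x ∈ Ioo (-1:ℝ) 1, HasDerivAt (g k) (g (k + 1) x) x)
    (hh : ∀ k, ∀ x ∈ Ioo (-1:ℝ) 1, HasDerivAt (h k) (h (k + 1) x) x)
    (A σ : ℝ) (hA : 1 ≤ A) (hσ : 0 < σ)
    (hbg : ∀ k, ∀ x ∈ Ioo (-1:ℝ) 1, ‖g k x‖ ≤ A * σ ^ k * (k.factorial * m k))
    (hbh : ∀ k, ∀ x ∈ Ioo (-1:ℝ) 1, ‖h k x‖ ≤ A * σ ^ k * (k.factorial * m k))
    (L : ℝ) (hL1 : L < 1) :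
    ∃ C0 ρ0 : ℝ, 0 < C0 ∧ 0 < ρ0 ∧ ContDiffOn ℝ (⊤ : ℕ∞) f {x | |x| < L} ∧
      ∀ (a : ℕ) (x : ℝ), |x| < L →
        ‖iteratedDeriv a f x‖ ≤ C0 * a.factorial * (ρ0 ^ a + w a * (256 * D * σ) ^ a) := by
  have hj' : (1:ℝ) ≤ j := by exact_mod_cast hj
  obtain ⟨C, hC, hloc⟩ := local_approx j hj A hA
  set lam : ℕ → ℝ := fun i => (1 - L) / 4 / 2 ^ i with hlam
  have hlam0 : ∀ i, 0 < lam i := fun i => by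
    have : 0 < 1 - L := by linarith
    simp only [hlam]; positivity
  have hlam1 : ∀ i, lam i ≤ (1 - L) / 4 := fun i => by
    have : 0 < 1 - L := by linarith
    simp only [hlam]
    exact div_le_self (by positivity) (one_le_pow₀ (by norm_num))
  choose p hp1 hp2 using fun i => hkey (8 * σ * lam i) (by have := hlam0 i; positivity)
  set δ : ℕ → ℝ := fun i => m (p i) * (8 * σ * lam i) ^ (p i) * (1 / 2) ^ (p i) with hδd
  have hδ0 : ∀ i, 0 < δ i := fun i => by
    have := hm (p i); have := hlam0 i
    simp only [hδd]; positivity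
  have hδ2 : ∀ i, δ i ≤ (1 / 2) ^ (p i) := fun i => by
    have := hp1 i (p i) le_rfl
    simp only [hδd]
    exact mul_le_of_le_one_left (by positivity) this
  have hδ1 : ∀ i, δ i ≤ 1 := fun i => (hδ2 i).trans (pow_le_one₀ (by norm_num) (by norm_num))
  set s : ℝ := 1 / (16 * (j:ℝ) * (j + 1)) with hs
  have hs0 : 0 < s := by positivity
  set C2 : ℝ := 1 + 1 / (2 * s * Real.log 2) with hC2
  have hC20 : 0 < C2 := by
    have : 0 < Real.log 2 := Real.log_pos (by norm_num)
    positivity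
  have hpe : ∀ i, (1 + p i) * δ i ^ (2 * s) ≤ C2 := fun i =>
    poly_exp_bound (2 * s) (by positivity) (p i) (δ i) (hδ0 i) (hδ2 i)
  set l0 : ℝ := (1 - L) / 16 with hl0d
  have hl0 : 0 < l0 := by rw [hl0d]; linarith
  have hrad : ∀ i : ℕ, lam i / 4 = l0 / 2 ^ i := fun i => by
    simp only [hlam, hl0d]; field_simp; norm_num
  set E : ℝ := 32 * D * σ with hE
  have hE0 : 0 < E := by positivity
  have hDt : ∀ i : ℕ, D * (8 * σ * lam i) = E * (l0 / 2 ^ i) := fun i => by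
    rw [← hrad, hE]; ring
  have hδs : ∀ i a, δ i ^ s ≤ (w a * (E * (l0 / 2 ^ i)) ^ a) ^ 2 := by
    intro i a
    have hX0 : 0 < w a * (E * (l0 / 2 ^ i)) ^ a := by have := hw a; positivity
    set X := w a * (E * (l0 / 2 ^ i)) ^ a with hX
    have h1 : δ i ≤ X ^ q := by
      have := hp2 i a
      rw [hDt] at this
      refine le_trans ?_ this
      simp only [hδd]
      refine mul_le_of_le_one_right ?_ (pow_le_one₀ (by norm_num) (by norm_num))
      have := hm (p i); have := hlam0 i
      positivity
    have hqr : 32 * ((j:ℝ) * (j + 1)) ≤ q := by exact_mod_cast hq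
    have hq0 : (0:ℝ) < q := by nlinarith
    have h2 : 2 / (q:ℝ) ≤ s := by
      rw [hs, div_le_div_iff₀ hq0 (by positivity)]; linarith
    calc δ i ^ s ≤ δ i ^ (2 / (q:ℝ)) := Real.rpow_le_rpow_of_exponent_ge (hδ0 i) (hδ1 i) h2
      _ ≤ (X ^ q) ^ (2 / (q:ℝ)) := Real.rpow_le_rpow (hδ0 i).le h1 (by positivity)
      _ = X ^ 2 := by
        rw [← Real.rpow_natCast X q, ← Real.rpow_mul hX0.le, mul_div_cancel₀ _ hq0.ne']
        exact_mod_cast Real.rpow_natCast X 2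
  set τ : ℝ := 1 / (4 * (j:ℝ) * (j + 1)) with hτ
  have hτs : τ = 2 * s + (s + s) := by rw [hτ, hs]; field_simp; norm_num
  set e : ℕ → ℝ := fun i => C * (1 + p i) * δ i ^ τ with he
  have he_eq : ∀ i, e i = C * ((1 + p i) * δ i ^ (2 * s)) * (δ i ^ s * δ i ^ s) := by
    intro i
    simp only [he]
    rw [hτs, Real.rpow_add (hδ0 i), Real.rpow_add (hδ0 i)]; ring
  have he0 : ∀ i, 0 ≤ e i := fun i => by
    have := hδ0 i
    simp only [he]; positivity
  have heb : ∀ i, e i ≤ C * C2 * (δ i ^ s * δ i ^ s) := fun i => by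
    have := hδ0 i
    rw [he_eq]
    gcongr
    exact hpe i
  set K : ℝ := C * (1 + C2) with hK
  have hK0 : 0 < K := by positivity
  have hCC2 : 0 < C * C2 := by positivity
  have heK : ∀ i, e i ≤ K := fun i => by
    have h1 : δ i ^ s ≤ 1 := Real.rpow_le_one (hδ0 i).le (hδ1 i) hs0.le
    have h0 : 0 ≤ δ i ^ s := Real.rpow_nonneg (hδ0 i).le _
    have h2 : C * C2 * (δ i ^ s * δ i ^ s) ≤ C * C2 :=
      mul_le_of_le_one_right hCC2.le (mul_le_one₀ h1 h0 h1)
    have := heb i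
    rw [hK]; linarith
  set C' : ℝ := Real.sqrt (C * C2) * (w 1 * E * l0) with hC'
  have hC'0 : 0 < C' := by
    have := hw 1
    have : 0 < Real.sqrt (C * C2) := Real.sqrt_pos.2 hCC2
    positivity
  have hH2 : ∀ i a, e i ≤ (C' * (1 / 2) ^ i * (w a * (E * (l0 / 2 ^ i)) ^ a)) ^ 2 := by
    intro i a
    have h0 : 0 ≤ δ i ^ s := Real.rpow_nonneg (hδ0 i).le _
    calc e i ≤ C * C2 * (δ i ^ s * δ i ^ s) := heb i
      _ ≤ C * C2 * ((w 1 * (E * (l0 / 2 ^ i)) ^ 1) ^ 2 * (w a * (E * (l0 / 2 ^ i)) ^ a) ^ 2) := by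
        gcongr
        · exact hδs i 1
        · exact hδs i a
      _ = _ := by
        rw [hC', mul_pow _ (w a * _) 2, mul_pow _ ((1 / 2) ^ i) 2, mul_pow (Real.sqrt _),
          Real.sq_sqrt hCC2.le, pow_one, one_div, inv_pow]
        field_simp
  have hfA : ∀ x ∈ Ioo (-1:ℝ) 1, ‖f x‖ ≤ A := by
    intro x hx
    have h1 := hbg 0 x hx
    rw [hg0, norm_pow] at h1
    simp only [pow_zero, Nat.factorial_zero, Nat.cast_one, hm0, mul_one] at h1
    by_contra hcon
    push Not at hcon
    have : ‖f x‖ ≤ ‖f x‖ ^ j := le_self_pow₀ (by linarith) (by omega)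
    linarith
  have hin : ∀ (i : ℕ) (x : ℝ), |x| < L → ∀ y : ℝ, |y| ≤ 2 → x + lam i * y ∈ Ioo (-1:ℝ) 1 := by
    intro i x hx y hy
    have h1 := hlam1 i
    have h2 := hlam0 i
    have h3 : |lam i * y| ≤ (1 - L) / 4 * 2 := by
      rw [abs_mul, abs_of_pos h2]; gcongr
    have h4 := abs_lt.1 hx
    have h5 := abs_le.1 h3
    constructor <;> linarith [h4.1, h4.2, h5.1, h5.2]
  obtain ⟨r1, r2⟩ := assembly f L l0 K C' E hl0 hK0 hC'0 hE0 w hw e he0 heK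
    (fun i x hx => by
      have hx1 : x ∈ Ioo (-1:ℝ) 1 := by
        have := hin i x hx 0 (by norm_num); simpa using this
      obtain ⟨g1, g2⟩ := taylor_local g A σ m (by linarith) hσ hm hm0 hg hbg x (lam i) hx1 (hlam0 i)
        (p i) (hp1 i)
      obtain ⟨h1, h2⟩ := taylor_local h A σ m (by linarith) hσ hm hm0 hh hbh x (lam i) hx1 (hlam0 i)
        (p i) (hp1 i)
      obtain ⟨G, G1, G2, G3⟩ := hloc f x (lam i) (p i) (δ i) _ _ (hlam0 i) (hδ0 i) (hδ1 i) g1 h1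
        (fun y hy => hfA _ (hin i x hx y hy))
        (fun y hy => by
          have := g2 y hy (hin i x hx y hy)
          rwa [hg0] at this)
        (fun y hy => by
          have := h2 y hy (hin i x hx y hy)
          rwa [hh0] at this)
      rw [hrad] at G1 G2 G3
      refine ⟨G, G1, fun z hz => (G2 z hz).trans ?_, fun y hy => G3 y hy⟩
      rw [hK]
      nlinarith)
    hH2
  refine ⟨K + 4 * Real.sqrt K * C', 2 / l0, by positivity, by positivity, r1, ?_⟩
  intro a x hx
  refine (r2 a x hx).trans ?_
  have hwa := hw a
  have e8 : 8 * E = 256 * D * σ := by rw [hE]; ring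
  rw [e8]
  have t1 : 0 ≤ K * a.factorial * (w a * (256 * D * σ) ^ a) := by positivity
  have t2 : 0 ≤ 4 * Real.sqrt K * C' * a.factorial * (2 / l0) ^ a := by positivity
  linarith


lemma root_absorb (w : ℕ → ℝ) (hw : ∀ k, 0 < w k) (hr : RootTendsToInfty w) (r : ℝ) (hr0 : 0 < r) :
    ∃ C : ℝ, 0 < C ∧ ∀ a, r ^ a ≤ C * w a := by
  obtain ⟨N, hN⟩ := eventually_atTop.1 (hr.eventually_ge_atTop r)
  refine ⟨1 + ∑ i ∈ Finset.range (N + 1), r ^ i / w i, ?_, ?_⟩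
  · have : 0 ≤ ∑ i ∈ Finset.range (N + 1), r ^ i / w i :=
      Finset.sum_nonneg fun i _ => by have := hw i; positivity
    linarith
  · intro a
    have hwa := hw a
    by_cases ha : a ≤ N
    · have h1 : r ^ a / w a ≤ ∑ i ∈ Finset.range (N + 1), r ^ i / w i :=
        Finset.single_le_sum (f := fun i => r ^ i / w i)
          (fun i _ => by have := hw i; positivity) (Finset.mem_range.2 (by omega))
      rw [← div_le_iff₀ hwa]
      linarith
    · push Not at ha
      have h1 := hN a ha.le
      have ha0 : (a:ℝ) ≠ 0 := by
        have : a ≠ 0 := by omega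
        exact_mod_cast this
      have h2 : r ^ a ≤ w a := by
        calc r ^ a ≤ (w a ^ (1 / (a:ℝ))) ^ a := by gcongr
          _ = w a := by
            rw [← Real.rpow_natCast, ← Real.rpow_mul hwa.le, one_div, inv_mul_cancel₀ ha0,
              Real.rpow_one]
      have : 0 ≤ ∑ i ∈ Finset.range (N + 1), r ^ i / w i :=
        Finset.sum_nonneg fun i _ => by have := hw i; positivity
      nlinarith

lemma itd_hasDerivAt (F : ℝ → ℂ) (hF : ContDiffOn ℝ (⊤ : ℕ∞) F (Ioo (-1:ℝ) 1)) (k : ℕ) (x : ℝ)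
    (hx : x ∈ Ioo (-1:ℝ) 1) :
    HasDerivAt (iteratedDerivWithin k F (Ioo (-1:ℝ) 1))
      (iteratedDerivWithin (k + 1) F (Ioo (-1:ℝ) 1) x) x := by
  have h1 := hF.differentiableOn_iteratedDerivWithin (m := k)
    (by exact_mod_cast ENat.natCast_lt_top k) (uniqueDiffOn_Ioo (-1:ℝ) 1) x hx
  rw [iteratedDerivWithin_succ]
  exact h1.hasDerivWithinAt.hasDerivAt (Ioo_mem_nhds hx.1 hx.2)

lemma core16 (j : ℕ) (hj : 1 ≤ j) (k : ℕ)
    (hk : k = Nat.clog 2 (j * (j + 1)) + 7)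
    (M : ℕ → ℕ → ℝ)
    (hws : ∀ i : ℕ, 1 ≤ i → i ≤ k → IsWeightSeq (M i))
    (hroot : ∀ i : ℕ, 1 ≤ i → i ≤ k → RootTendsToInfty (mseq (M i)))
    (hB : ∃ B : ℝ, 1 ≤ B ∧
      ∀ t : ℝ, 0 < t → GammaBar (mseq (M 2)) (B * t) ≤ GammaLow (mseq (M 1)) t)
    (hmg : ∀ i : ℕ, 2 ≤ i → i ≤ k - 1 → MgFinite (M i) (M (i + 1)))
    (f : ℝ → ℂ)
    (hf1 : ContDiffOn ℝ (⊤ : ℕ∞) (f ^ j) (Ioo (-1 : ℝ) 1))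
    (hf2 : ContDiffOn ℝ (⊤ : ℕ∞) (f ^ (j + 1)) (Ioo (-1 : ℝ) 1)) :
    ∃ D : ℝ, 0 < D ∧ ∀ σ A : ℝ, 0 < σ →
      (∀ x ∈ Ioo (-1 : ℝ) 1, ∀ ℓ : ℕ,
        ‖iteratedFDerivWithin ℝ ℓ (f ^ j) (Ioo (-1 : ℝ) 1) x‖ ≤ A * σ ^ ℓ * M 1 ℓ) →
      (∀ x ∈ Ioo (-1 : ℝ) 1, ∀ ℓ : ℕ,
        ‖iteratedFDerivWithin ℝ ℓ (f ^ (j + 1)) (Ioo (-1 : ℝ) 1) x‖ ≤ A * σ ^ ℓ * M 1 ℓ) →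
      ContDiffOn ℝ (⊤ : ℕ∞) f (Ioo (-1 : ℝ) 1) ∧
      ∀ V : Set ℝ, IsCompact (closure V) → closure V ⊆ Ioo (-1 : ℝ) 1 →
        ∃ C : ℝ, 0 < C ∧ ∀ x ∈ V, ∀ a : ℕ,
          ‖iteratedFDerivWithin ℝ a f (Ioo (-1 : ℝ) 1) x‖ ≤ C * (D * σ) ^ a * M k a := by
  have hk2 : 2 ≤ k := by omega
  obtain ⟨D, hD, hkey⟩ := seq_main k hk2 M hws hroot hB hmg
  have hq : 32 * (j * (j + 1)) ≤ 2 ^ (k - 2) := by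
    have h1 : j * (j + 1) ≤ 2 ^ Nat.clog 2 (j * (j + 1)) := Nat.le_pow_clog (by norm_num) _
    have h2 : k - 2 = Nat.clog 2 (j * (j + 1)) + 5 := by omega
    rw [h2, pow_add]
    omega
  have hM1 := (hws 1 (by omega) (by omega)).2.1
  have hMk := (hws k (by omega) (by omega)).2.1
  have hm : ∀ a, 0 < mseq (M 1) a := fun a => by
    have := hM1 a
    unfold mseq; positivity
  have hw : ∀ a, 0 < mseq (M k) a := fun a => by
    have := hMk a
    unfold mseq; positivity
  have hm0 : mseq (M 1) 0 = 1 := by simp [mseq, (hws 1 (by omega) (by omega)).1]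
  have hfm : ∀ (N : ℕ → ℝ) (a : ℕ), (a.factorial : ℝ) * mseq N a = N a := fun N a => by
    have : (a.factorial : ℝ) ≠ 0 := by exact_mod_cast a.factorial_ne_zero
    unfold mseq; field_simp
  refine ⟨256 * D, by positivity, ?_⟩
  intro σ A hσ hb1 hb2
  have hbd : ∀ F : ℝ → ℂ, (∀ x ∈ Ioo (-1 : ℝ) 1, ∀ ℓ : ℕ,
        ‖iteratedFDerivWithin ℝ ℓ F (Ioo (-1 : ℝ) 1) x‖ ≤ A * σ ^ ℓ * M 1 ℓ) →
      ∀ a, ∀ x ∈ Ioo (-1:ℝ) 1, ‖iteratedDerivWithin a F (Ioo (-1:ℝ) 1) x‖ ≤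
        max 1 A * σ ^ a * (a.factorial * mseq (M 1) a) := by
    intro F hF a x hx
    rw [hfm, ← norm_iteratedFDerivWithin_eq_norm_iteratedDerivWithin]
    refine (hF x hx a).trans ?_
    have := hM1 a
    gcongr
    exact le_max_right _ _
  have main := fun L hL1 => propD j hj (2 ^ (k - 2)) hq (mseq (M 1)) (mseq (M k)) hm hm0 hw D hD hkey f
    (fun a => iteratedDerivWithin a (f ^ j) (Ioo (-1:ℝ) 1))
    (fun a => iteratedDerivWithin a (f ^ (j + 1)) (Ioo (-1:ℝ) 1))
    (fun x => by simp) (fun x => by simp)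
    (fun a x hx => itd_hasDerivAt _ hf1 a x hx) (fun a x hx => itd_hasDerivAt _ hf2 a x hx)
    (max 1 A) σ (le_max_left _ _) hσ (hbd _ hb1) (hbd _ hb2) L hL1
  constructor
  · intro x hx
    have hx1 : |x| < 1 := abs_lt.2 hx
    obtain ⟨_, _, _, _, hc, _⟩ := main ((|x| + 1) / 2) (by linarith)
    have hmem : x ∈ {y : ℝ | |y| < (|x| + 1) / 2} := by
      show |x| < (|x| + 1) / 2
      linarith
    have hopen : IsOpen {y : ℝ | |y| < (|x| + 1) / 2} := isOpen_lt continuous_abs continuous_const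
    exact (hc.contDiffAt (hopen.mem_nhds hmem)).contDiffWithinAt
  · intro V hVc hVs
    obtain ⟨L, hL1, hVL⟩ : ∃ L : ℝ, L < 1 ∧ ∀ x ∈ V, |x| < L := by
      rcases (closure V).eq_empty_or_nonempty with h0 | hne
      · refine ⟨0, by norm_num, fun x hx => ?_⟩
        have := subset_closure hx
        rw [h0] at this
        exact absurd this (notMem_empty x)
      · obtain ⟨x0, hx0, hmax⟩ := hVc.exists_isMaxOn hne continuous_abs.continuousOn
        have h1 : |x0| < 1 := abs_lt.2 (hVs hx0)
        refine ⟨(|x0| + 1) / 2, by linarith, fun x hx => ?_⟩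
        have : |x| ≤ |x0| := hmax (subset_closure hx)
        linarith
    obtain ⟨C0, ρ0, hC0, hρ0, -, hest⟩ := main L hL1
    have hDσ : 0 < 256 * D * σ := by positivity
    obtain ⟨C1, hC1, habs⟩ := root_absorb (mseq (M k)) hw (hroot k (by omega) le_rfl)
      (ρ0 / (256 * D * σ)) (by positivity)
    refine ⟨C0 * (C1 + 1), by positivity, ?_⟩
    intro x hx a
    rw [iteratedFDerivWithin_of_isOpen a isOpen_Ioo (hVs (subset_closure hx)),
      norm_iteratedFDeriv_eq_norm_iteratedDeriv]
    refine (hest a x (hVL x hx)).trans ?_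
    have h1 : ρ0 ^ a ≤ C1 * mseq (M k) a * (256 * D * σ) ^ a := by
      have := habs a
      rwa [div_pow, div_le_iff₀ (by positivity)] at this
    calc C0 * a.factorial * (ρ0 ^ a + mseq (M k) a * (256 * D * σ) ^ a)
        ≤ C0 * a.factorial * (C1 * mseq (M k) a * (256 * D * σ) ^ a +
            mseq (M k) a * (256 * D * σ) ^ a) := by gcongr
      _ = C0 * (C1 + 1) * (256 * D * σ) ^ a * (a.factorial * mseq (M k) a) := by ring
      _ = _ := by rw [hfm]

/-- the core division lemma: if `f^j` and `f^{j+1}` belong to the class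
given by `M 1` on `(-1,1)` (with `k = ⌈log₂ (j (j+1))⌉ + 7` suitably related weight
sequences `M 1, …, M k`), then `f` is of class `E^{M k}` (Roumieu case), resp.
`E^{(M k)}` (Beurling case), on `(-1,1)`. -/
theorem statement16 (j : ℕ) (hj : 1 ≤ j) (k : ℕ)
    (hk : k = Nat.clog 2 (j * (j + 1)) + 7)
    (M : ℕ → ℕ → ℝ)
    (hws : ∀ i : ℕ, 1 ≤ i → i ≤ k → IsWeightSeq (M i))
    (hroot : ∀ i : ℕ, 1 ≤ i → i ≤ k → RootTendsToInfty (mseq (M i)))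
    (hB : ∃ B : ℝ, 1 ≤ B ∧
      ∀ t : ℝ, 0 < t → GammaBar (mseq (M 2)) (B * t) ≤ GammaLow (mseq (M 1)) t)
    (hmg : ∀ i : ℕ, 2 ≤ i → i ≤ k - 1 → MgFinite (M i) (M (i + 1)))
    (f : ℝ → ℂ) :
    ((∃ σ : ℝ, 0 < σ ∧ ∃ A : ℝ,
        ContDiffOn ℝ (⊤ : ℕ∞) (f ^ j) (Ioo (-1 : ℝ) 1) ∧
        ContDiffOn ℝ (⊤ : ℕ∞) (f ^ (j + 1)) (Ioo (-1 : ℝ) 1) ∧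
        (∀ x ∈ Ioo (-1 : ℝ) 1, ∀ ℓ : ℕ,
          ‖iteratedFDerivWithin ℝ ℓ (f ^ j) (Ioo (-1 : ℝ) 1) x‖ ≤ A * σ ^ ℓ * M 1 ℓ) ∧
        (∀ x ∈ Ioo (-1 : ℝ) 1, ∀ ℓ : ℕ,
          ‖iteratedFDerivWithin ℝ ℓ (f ^ (j + 1)) (Ioo (-1 : ℝ) 1) x‖ ≤
            A * σ ^ ℓ * M 1 ℓ)) →
      RoumieuOn (M k) f (Ioo (-1 : ℝ) 1)) ∧
    ((ContDiffOn ℝ (⊤ : ℕ∞) (f ^ j) (Ioo (-1 : ℝ) 1) ∧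
        ContDiffOn ℝ (⊤ : ℕ∞) (f ^ (j + 1)) (Ioo (-1 : ℝ) 1) ∧
        ∀ σ : ℝ, 0 < σ → ∃ A : ℝ,
          (∀ x ∈ Ioo (-1 : ℝ) 1, ∀ ℓ : ℕ,
            ‖iteratedFDerivWithin ℝ ℓ (f ^ j) (Ioo (-1 : ℝ) 1) x‖ ≤
              A * σ ^ ℓ * M 1 ℓ) ∧
          (∀ x ∈ Ioo (-1 : ℝ) 1, ∀ ℓ : ℕ,
            ‖iteratedFDerivWithin ℝ ℓ (f ^ (j + 1)) (Ioo (-1 : ℝ) 1) x‖ ≤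
              A * σ ^ ℓ * M 1 ℓ)) →
      BeurlingOn (M k) f (Ioo (-1 : ℝ) 1)) := by
  constructor
  · rintro ⟨σ, hσ, A, hf1, hf2, hb1, hb2⟩
    obtain ⟨D, hD, hmain⟩ := core16 j hj k hk M hws hroot hB hmg f hf1 hf2
    obtain ⟨hc, hV⟩ := hmain σ A hσ hb1 hb2
    refine ⟨hc, fun V _ hVc hVs => ?_⟩
    obtain ⟨C, hC, hest⟩ := hV V hVc hVs
    exact ⟨C, D * σ, hC, by positivity, hest⟩
  · rintro ⟨hf1, hf2, hb⟩
    obtain ⟨D, hD, hmain⟩ := core16 j hj k hk M hws hroot hB hmg f hf1 hf2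
    obtain ⟨A1, hA1, hA2⟩ := hb 1 one_pos
    refine ⟨(hmain 1 A1 one_pos hA1 hA2).1, fun V _ hVc hVs σ hσ => ?_⟩
    obtain ⟨A, hb1, hb2⟩ := hb (σ / D) (by positivity)
    obtain ⟨C, hC, hest⟩ := (hmain (σ / D) A (by positivity) hb1 hb2).2 V hVc hVs
    refine ⟨C, hC, ?_⟩
    rwa [mul_div_cancel₀ σ hD.ne'] at hest
end
end

section
/- Let ω be a non-quasianalytic concave weight function and let f : [0,∞) → [0,∞) be any function satisfying ω(t) = o(f(t)) as t → ∞. Then there exists a non-quasianalytic concave weight function ω̃ satisfying ω(t) = o(ω̃(t)) and ω̃(t) = o(f(t)) as t → ∞. -/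
open Filter Set Asymptotics MeasureTheory

noncomputable section

lemma aux_subgrad {S : Set ℝ} {f : ℝ → ℝ} {x : ℝ} (hf : ConvexOn ℝ S f)
    (hx : x ∈ interior S) : ∃ p : ℝ, ∀ y ∈ S, f x + p * (y - x) ≤ f y := by
  refine ⟨derivWithin f (Ioi x) x, fun y hy => ?_⟩
  rcases lt_trichotomy x y with h | h | h
  · have := hf.rightDeriv_le_slope_of_mem_interior hx hy h
    rw [slope_def_field, le_div_iff₀ (by linarith)] at this
    linarith
  · subst h; simp
  · have h1 := hf.slope_le_leftDeriv_of_mem_interior hy hx h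
    have h2 := hf.leftDeriv_le_rightDeriv_of_mem_interior hx
    have h3 := h1.trans h2
    rw [slope_def_field, div_le_iff₀ (by linarith)] at h3
    linarith

lemma aux_glue {S : Set ℝ} (hS : Convex ℝ S) {f g : ℝ → ℝ} {a p : ℝ} (ha : a ∈ S)
    (hf : ConvexOn ℝ (S ∩ Iic a) f) (hg : ConvexOn ℝ (S ∩ Ici a) g)
    (hf' : ∀ x ∈ S, x ≤ a → f a + p * (x - a) ≤ f x)
    (hg' : ∀ x ∈ S, a ≤ x → g a + p * (x - a) ≤ g x) :
    ConvexOn ℝ S (fun t => f (min t a) + g (max t a)) := by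
  have hmin : ∀ x ∈ S, min x a ∈ S ∩ Iic a := fun x hx => by
    refine ⟨?_, mem_Iic.2 (min_le_right _ _)⟩
    rcases min_choice x a with h | h <;> rw [h] <;> assumption
  have hmax : ∀ x ∈ S, max x a ∈ S ∩ Ici a := fun x hx => by
    refine ⟨?_, mem_Ici.2 (le_max_right _ _)⟩
    rcases max_choice x a with h | h <;> rw [h] <;> assumption
  have hlin : ∀ T : Set ℝ, Convex ℝ T → ConvexOn ℝ T (fun x => - (p * x)) := fun T hT =>
    ⟨hT, fun x _ y _ u v _ _ _ => by simp only [smul_eq_mul]; linarith⟩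
  have hF : ConvexOn ℝ (S ∩ Iic a) (fun x => f x + - (p * x)) := hf.add (hlin _ hf.1)
  have hG : ConvexOn ℝ (S ∩ Ici a) (fun x => g x + - (p * x)) := hg.add (hlin _ hg.1)
  have hFanti : ∀ x ∈ S ∩ Iic a, ∀ y ∈ S ∩ Iic a, x ≤ y → f y + - (p * y) ≤ f x + - (p * x) := by
    intro x hx y hy hxy
    have h := hF.le_max_of_mem_Icc hx (⟨ha, le_refl a⟩ : a ∈ S ∩ Iic a) (z := y) ⟨hxy, hy.2⟩
    have h2 := hf' x hx.1 hx.2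
    refine h.trans (max_le le_rfl (by linarith))
  have hGmono : ∀ x ∈ S ∩ Ici a, ∀ y ∈ S ∩ Ici a, x ≤ y → g x + - (p * x) ≤ g y + - (p * y) := by
    intro x hx y hy hxy
    have h := hG.le_max_of_mem_Icc (⟨ha, le_refl a⟩ : a ∈ S ∩ Ici a) hy (z := x) ⟨hx.2, hxy⟩
    have h2 := hg' y hy.1 hy.2
    refine h.trans (max_le (by linarith) le_rfl)
  refine ⟨hS, fun x hx y hy u v hu hv huv => ?_⟩
  have hz := hS hx hy hu hv huv
  have hX := hF.1 (hmin x hx) (hmin y hy) hu hv huv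
  have hY := hG.1 (hmax x hx) (hmax y hy) hu hv huv
  have e1 := hf.2 (hmin x hx) (hmin y hy) hu hv huv
  have e2 := hg.2 (hmax x hx) (hmax y hy) hu hv huv
  simp only [smul_eq_mul] at *
  have hXle : u * min x a + v * min y a ≤ min (u * x + v * y) a := by
    refine le_min ?_ hX.2
    gcongr <;> exact min_le_left _ _
  have hYle : max (u * x + v * y) a ≤ u * max x a + v * max y a := by
    refine max_le ?_ hY.2
    gcongr <;> exact le_max_left _ _
  have h1 := hFanti _ hX _ (hmin _ hz) hXle
  have h2 := hGmono _ (hmax _ hz) _ hY hYle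
  have s1 := min_add_max x a
  have s2 := min_add_max y a
  have s3 := min_add_max (u * x + v * y) a
  have s4 : u * min x a + v * min y a + (u * max x a + v * max y a) =
      min (u * x + v * y) a + max (u * x + v * y) a := by
    rw [s3]
    have : a = (u + v) * a := by rw [huv, one_mul]
    have e : u * min x a + v * min y a + (u * max x a + v * max y a)
      = u * (min x a + max x a) + v * (min y a + max y a) := by ring
    rw [e, s1, s2]
    linear_combination -this
  have s5 := congrArg (fun r => p * r) s4
  simp only [mul_add] at *
  linarith

/-- The properties of the building blocks. -/
structure AuxBlock (ω h : ℝ → ℝ) (ε : ℝ) : Prop where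
  cont : ContinuousOn h (Ici 0)
  mono : MonotoneOn h (Ici 0)
  nonneg : ∀ t, 0 ≤ t → 0 ≤ h t
  zero : h 0 = 0
  conc : ConcaveOn ℝ (Ici 0) h
  conv : ConvexOn ℝ (Ici 0) fun t => h (Real.exp t)
  le : ∀ t, 0 ≤ t → h t ≤ ω t
  lin : ∀ t, 0 ≤ t → h t ≤ ε * t
  big : ∀ᶠ t in atTop, ω t ≤ 2 * h t

lemma aux_tendsto {ω : ℝ → ℝ} (hω : IsWeightFunction ω) : Tendsto ω atTop atTop := by
  obtain ⟨_, _, hnn, _, _, hlog, _⟩ := hω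
  have h := hlog.bound (show (0 : ℝ) < 1 by norm_num)
  refine tendsto_atTop_mono' _ ?_ Real.tendsto_log_atTop
  filter_upwards [h, eventually_ge_atTop (0 : ℝ)] with t ht h0
  rw [Real.norm_eq_abs, Real.norm_eq_abs, abs_of_nonneg (hnn t h0), one_mul] at ht
  exact (le_abs_self _).trans ht

lemma aux_block {ω : ℝ → ℝ} (hω : IsWeightFunction ω) (hconc : ConcaveOn ℝ (Ici 0) ω)
    {ε : ℝ} (hε : 0 < ε) : ∃ h, AuxBlock ω h ε := by
  have htop := aux_tendsto hω
  obtain ⟨hcont, hmono, hnn, _, hot, _, hconv⟩ := hω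
  obtain ⟨a, ha1, hasm⟩ := ((eventually_gt_atTop (1 : ℝ)).and (hot.bound hε)).exists
  have ha0 : 0 < a := by linarith
  rw [Real.norm_eq_abs, Real.norm_eq_abs, abs_of_nonneg (hnn a ha0.le), abs_of_pos ha0] at hasm
  obtain ⟨d, hd⟩ := aux_subgrad (neg_convexOn_iff.2 hconc) (x := a) (by simpa using ha0)
  obtain ⟨c, rfl⟩ : ∃ c, d = -c := ⟨-d, by ring⟩
  have hc : ∀ t, 0 ≤ t → ω t ≤ ω a + c * (t - a) := fun t ht => by
    have := hd t ht
    simp only [Pi.neg_apply] at this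
    linarith
  have hα : 0 < Real.log a := Real.log_pos ha1
  have hea : Real.exp (Real.log a) = a := Real.exp_log ha0
  obtain ⟨p, hp⟩ := aux_subgrad hconv (x := Real.log a) (by simpa using hα)
  rw [hea] at hp
  have hpc : p = c * a := by
    have hmin : IsLocalMin (fun τ => c * (Real.exp τ - a) - p * (τ - Real.log a)) (Real.log a) := by
      filter_upwards [Ioi_mem_nhds hα] with τ hτ
      have h1 := hp τ (mem_Ici.2 (le_of_lt hτ))
      have h2 := hc _ (Real.exp_pos τ).le
      simp only [hea, sub_self, mul_zero]
      linarith
    have hder : HasDerivAt (fun τ => c * (Real.exp τ - a) - p * (τ - Real.log a))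
        (c * Real.exp (Real.log a) - p * 1) (Real.log a) :=
      (((Real.hasDerivAt_exp _).sub_const a).const_mul c).sub
        (((hasDerivAt_id _).sub_const _).const_mul p)
    have := hmin.hasDerivAt_eq_zero hder
    rw [hea] at this
    linarith
  have hc0 : 0 ≤ c := by
    have h1 := hc (a + 1) (by linarith)
    have h2 := hmono (mem_Ici.2 ha0.le) (mem_Ici.2 (by linarith : (0:ℝ) ≤ a + 1)) (by linarith)
    linarith
  have hca : c * a ≤ ω a := by
    have h1 := hc 0 le_rfl
    have := hnn 0 (mem_Ici.2 le_rfl)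
    linarith
  have hcε : c ≤ ε := by
    by_contra! h
    have := mul_lt_mul_of_pos_right h ha0
    linarith
  have hlin : ∀ t, 0 ≤ t → c * min t a + (ω (max t a) - ω a) ≤ c * t := by
    intro t ht
    rcases le_total t a with h | h
    · rw [min_eq_left h, max_eq_right h]; linarith
    · rw [min_eq_right h, max_eq_left h]; have := hc t ht; linarith
  refine ⟨fun t => c * min t a + (ω (max t a) - ω a), ?_, ?_, ?_, ?_, ?_, ?_, ?_, ?_, ?_⟩
  · refine ContinuousOn.add (by fun_prop) (ContinuousOn.sub ?_ continuousOn_const)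
    exact hcont.comp (by fun_prop) (fun x hx => mem_Ici.2 (ha0.le.trans (le_max_right _ _)))
  · intro x hx y hy hxy
    have h1 : min x a ≤ min y a := min_le_min_right _ hxy
    have h2 := hmono (mem_Ici.2 (ha0.le.trans (le_max_right x a)))
      (mem_Ici.2 (ha0.le.trans (le_max_right y a))) (max_le_max_right a hxy)
    have := mul_le_mul_of_nonneg_left h1 hc0
    linarith
  · intro t ht
    have h2 := hmono (mem_Ici.2 ha0.le)
      (mem_Ici.2 (ha0.le.trans (le_max_right t a))) (le_max_right t a)
    have := mul_nonneg hc0 (le_min ht ha0.le)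
    linarith
  · simp [ha0.le]
  · have := aux_glue (S := Ici 0) (f := fun t => -(c * t)) (g := fun t => - ω t + ω a) (a := a)
      (p := -c) (convex_Ici 0) ha0.le
      ⟨(convex_Ici _).inter (convex_Iic _), fun x _ y _ u v _ _ _ => by
        simp only [smul_eq_mul]; linarith⟩
      (((neg_convexOn_iff.2 hconc).subset inter_subset_left
        ((convex_Ici _).inter (convex_Ici _))).add_const (ω a))
      (fun x hx _ => by linarith)
      (fun x hx _ => by have := hc x hx; linarith)
    rw [← neg_convexOn_iff]
    refine this.congr fun t _ => ?_
    simp only [Pi.neg_apply]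
    ring
  · have := aux_glue (S := Ici 0) (f := fun t => c * Real.exp t)
      (g := fun t => ω (Real.exp t) + - ω a) (a := Real.log a)
      (p := c * a) (convex_Ici 0) hα.le
      ((convexOn_exp.subset (subset_univ _) ((convex_Ici _).inter (convex_Iic _))).smul hc0)
      ((hconv.subset inter_subset_left ((convex_Ici _).inter (convex_Ici _))).add_const (- ω a))
      (fun x hx _ => by
        have := Real.add_one_le_exp (x - Real.log a)
        rw [Real.exp_sub, hea, le_div_iff₀ ha0] at this
        have := mul_le_mul_of_nonneg_left this hc0
        rw [hea]
        linarith)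
      (fun x hx _ => by have := hp x hx; rw [hea]; rw [hpc] at this; linarith)
    convert this using 2 with t
    rw [Real.exp_monotone.map_min, Real.exp_monotone.map_max, hea]
    ring
  · intro t ht
    rcases le_total t a with h | h
    · simp only [min_eq_left h, max_eq_right h]
      have h3 := hconc.2 (mem_Ici.2 ha0.le) (mem_Ici.2 (le_refl (0:ℝ))) (div_nonneg ht ha0.le)
        (sub_nonneg.2 ((div_le_one ha0).2 h)) (by ring)
      simp only [smul_eq_mul, mul_zero, add_zero, div_mul_cancel₀ _ ha0.ne'] at h3
      have h4 := mul_le_mul_of_nonneg_left hca (div_nonneg ht ha0.le)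
      have h5 : t / a * (c * a) = c * t := by field_simp
      have h6 := mul_nonneg (sub_nonneg.2 ((div_le_one ha0).2 h)) (hnn 0 (mem_Ici.2 le_rfl))
      linarith
    · simp only [min_eq_right h, max_eq_left h]; linarith
  · exact fun t ht => (hlin t ht).trans (mul_le_mul_of_nonneg_right hcε ht)
  · filter_upwards [eventually_ge_atTop a, htop.eventually_ge_atTop (2 * ω a)] with t h h2
    simp only [min_eq_right h, max_eq_left h]
    have := mul_nonneg hc0 ha0.le
    linarith

lemma aux_meas {h : ℝ → ℝ} (hc : ContinuousOn h (Ici 0)) :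
    AEStronglyMeasurable (fun t => h t / t ^ 2) (volume.restrict (Ici 1)) := by
  refine ContinuousOn.aestronglyMeasurable ?_ measurableSet_Ici
  refine ContinuousOn.div (hc.mono (Ici_subset_Ici.2 zero_le_one)) (by fun_prop) ?_
  intro x hx
  have : (1 : ℝ) ≤ x := hx
  positivity

lemma aux_block2 {ω : ℝ → ℝ} (hω : IsWeightFunction ω) (hconc : ConcaveOn ℝ (Ici 0) ω)
    (hnq : NonQuasianalyticW ω) {δ : ℝ} (hδ : 0 < δ) :
    ∃ h, AuxBlock ω h δ ∧ ∫⁻ t in Ici (1:ℝ), ENNReal.ofReal (h t / t ^ 2) ≤ ENNReal.ofReal δ := by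
  choose H hH using fun k : ℕ => aux_block hω hconc (ε := 1 / ((k : ℝ) + 1)) (by positivity)
  have hint : ∀ k, IntegrableOn (fun t => H k t / t ^ 2) (Ici 1) := fun k => by
    refine Integrable.mono' hnq (aux_meas (hH k).cont) ?_
    filter_upwards [ae_restrict_mem measurableSet_Ici] with t ht
    have ht : (1 : ℝ) ≤ t := ht
    have h0 := (hH k).nonneg t (by linarith)
    rw [Real.norm_of_nonneg (by positivity)]
    have := (hH k).le t (by linarith)
    gcongr
  have hlim : Tendsto (fun k => ∫ t in Ici (1:ℝ), H k t / t ^ 2) atTop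
      (nhds (∫ t in Ici (1:ℝ), (0:ℝ))) := by
    refine tendsto_integral_of_dominated_convergence (fun t => ω t / t ^ 2)
      (fun k => aux_meas (hH k).cont) hnq (fun k => ?_) ?_
    · filter_upwards [ae_restrict_mem measurableSet_Ici] with t ht
      have ht : (1 : ℝ) ≤ t := ht
      have h0 := (hH k).nonneg t (by linarith)
      rw [Real.norm_of_nonneg (by positivity)]
      have := (hH k).le t (by linarith)
      gcongr
    · filter_upwards [ae_restrict_mem measurableSet_Ici] with t ht
      have ht : (1 : ℝ) ≤ t := ht
      have hb : Tendsto (fun k : ℕ => 1 / ((k : ℝ) + 1) * t / t ^ 2) atTop (nhds 0) := by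
        have := (tendsto_one_div_add_atTop_nhds_zero_nat (𝕜 := ℝ)).mul_const t |>.div_const (t ^ 2)
        simpa using this
      refine squeeze_zero (fun k => ?_) (fun k => ?_) hb
      · have h0 := (hH k).nonneg t (by linarith)
        positivity
      · have := (hH k).lin t (by linarith)
        gcongr
  simp only [integral_zero] at hlim
  have e1 := hlim.eventually (gt_mem_nhds hδ)
  have e2 := (tendsto_one_div_add_atTop_nhds_zero_nat (𝕜 := ℝ)).eventually (gt_mem_nhds hδ)
  obtain ⟨k, h1, h2⟩ := (e1.and e2).exists
  refine ⟨H k, ?_, ?_⟩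
  · exact { hH k with
      lin := fun t ht => ((hH k).lin t ht).trans (mul_le_mul_of_nonneg_right h2.le ht) }
  · rw [← ofReal_integral_eq_lintegral_ofReal (hint k)]
    · exact ENNReal.ofReal_le_ofReal h1.le
    · filter_upwards [ae_restrict_mem measurableSet_Ici] with t ht
      have ht : (1 : ℝ) ≤ t := ht
      have h0 := (hH k).nonneg t (by linarith)
      simp only [Pi.zero_apply]
      positivity

/-- for a non-quasianalytic concave weight function `ω` and any
`f : [0,∞) → [0,∞)` with `ω = o(f)`, there is a non-quasianalytic concave weight
function `ω̃` with `ω = o(ω̃)` and `ω̃ = o(f)` at `∞`. -/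
theorem statement17 (ω : ℝ → ℝ) (hω : IsWeightFunction ω)
    (hnq : NonQuasianalyticW ω) (hconc : ConcaveOn ℝ (Ici 0) ω)
    (f : ℝ → ℝ) (hf0 : ∀ t ∈ Ici (0 : ℝ), 0 ≤ f t) (hof : ω =o[atTop] f) :
    ∃ ωt : ℝ → ℝ, IsWeightFunction ωt ∧ NonQuasianalyticW ωt ∧
      ConcaveOn ℝ (Ici 0) ωt ∧ ω =o[atTop] ωt ∧ ωt =o[atTop] f := by
  have htop := aux_tendsto hω
  have hftop : Tendsto f atTop atTop := by
    refine tendsto_atTop_mono' _ ?_ htop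
    filter_upwards [hof.bound (show (0 : ℝ) < 1 by norm_num), eventually_ge_atTop (0 : ℝ)]
      with t ht h0
    rw [Real.norm_eq_abs, Real.norm_eq_abs, abs_of_nonneg (hf0 t h0), one_mul] at ht
    exact (le_abs_self _).trans ht
  have hR : ∀ n : ℕ, ∃ R : ℝ, 0 ≤ R ∧ ∀ t, R ≤ t → ω t ≤ (1 / 2 : ℝ) ^ n * f t := fun n => by
    have h1 := (hof.bound (show (0 : ℝ) < (1 / 2) ^ n by positivity)).and
      (eventually_ge_atTop (0 : ℝ))
    obtain ⟨R, hR⟩ := eventually_atTop.1 h1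
    refine ⟨max R 0, le_max_right _ _, fun t ht => ?_⟩
    obtain ⟨h2, h0⟩ := hR t ((le_max_left _ _).trans ht)
    rw [Real.norm_eq_abs, Real.norm_eq_abs, abs_of_nonneg (hf0 t h0)] at h2
    exact (le_abs_self _).trans h2
  choose R hR0 hR using hR
  choose H hH hHint using fun n : ℕ => aux_block2 hω hconc hnq
    (δ := (1 / 2 : ℝ) ^ n / (R n + 1)) (by have := hR0 n; positivity)
  have hsum2 : Summable fun n : ℕ => (1 / 2 : ℝ) ^ n := summable_geometric_two
  have hδ : ∀ n, (1 / 2 : ℝ) ^ n / (R n + 1) ≤ (1 / 2 : ℝ) ^ n := fun n =>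
    div_le_self (by positivity) (by linarith [hR0 n])
  have hlin : ∀ n t, 0 ≤ t → H n t ≤ (1 / 2 : ℝ) ^ n * t := fun n t ht =>
    ((hH n).lin t ht).trans (mul_le_mul_of_nonneg_right (hδ n) ht)
  have hbd : ∀ n t, 0 ≤ t → H n t ≤ (1 / 2 : ℝ) ^ n * (1 + f t) := fun n t ht => by
    have hp : (0 : ℝ) < (1 / 2) ^ n := by positivity
    have hf := hf0 t ht
    rcases le_total (R n) t with h | h
    · have h1 := (hH n).le t ht
      have h2 := hR n t h
      linarith
    · have h1 := (hH n).lin t ht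
      have h3 := hR0 n
      have h2 : (1 / 2 : ℝ) ^ n / (R n + 1) * t ≤ (1 / 2 : ℝ) ^ n := by
        rw [div_mul_eq_mul_div, div_le_iff₀ (by linarith)]
        gcongr
        linarith
      have := mul_nonneg hp.le hf
      linarith
  have hS : ∀ t, 0 ≤ t → Summable fun n => H n t := fun t ht =>
    Summable.of_nonneg_of_le (fun n => (hH n).nonneg t ht) (fun n => hlin n t ht)
      (hsum2.mul_right t)
  set W : ℝ → ℝ := fun t => ∑' n, H n t with hW
  have hWnn : ∀ t, 0 ≤ t → 0 ≤ W t := fun t ht => tsum_nonneg fun n => (hH n).nonneg t ht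
  have hWcont : ContinuousOn W (Ici 0) := by
    intro x hx
    have hx : 0 ≤ x := hx
    have hc : ContinuousOn W (Icc 0 (x + 1)) := by
      refine continuousOn_tsum (u := fun n => (1 / 2 : ℝ) ^ n * (x + 1))
        (fun n => (hH n).cont.mono Icc_subset_Ici_self) (hsum2.mul_right _) ?_
      intro n t ht
      rw [Real.norm_of_nonneg ((hH n).nonneg t ht.1)]
      refine (hlin n t ht.1).trans ?_
      have := ht.2
      gcongr
    refine (hc x ⟨hx, by linarith⟩).mono_of_mem_nhdsWithin ?_
    rw [← Ici_inter_Iic]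
    exact inter_mem self_mem_nhdsWithin (mem_nhdsWithin_of_mem_nhds (Iic_mem_nhds (by linarith)))
  have hWmono : MonotoneOn W (Ici 0) := fun x hx y hy hxy =>
    (hS x hx).tsum_le_tsum (fun n => (hH n).mono hx hy hxy) (hS y hy)
  have hWconc : ConcaveOn ℝ (Ici 0) W := by
    refine ⟨convex_Ici 0, fun x hx y hy u v hu hv huv => ?_⟩
    have hz : u • x + v • y ∈ Ici (0 : ℝ) := convex_Ici 0 hx hy hu hv huv
    simp only [hW, smul_eq_mul] at *
    rw [← tsum_mul_left, ← tsum_mul_left,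
      ← ((hS x hx).mul_left u).tsum_add ((hS y hy).mul_left v)]
    refine (((hS x hx).mul_left u).add ((hS y hy).mul_left v)).tsum_le_tsum (fun n => ?_) (hS _ hz)
    exact (hH n).conc.2 hx hy hu hv huv
  have hWconv : ConvexOn ℝ (Ici 0) fun t => W (Real.exp t) := by
    refine ⟨convex_Ici 0, fun x hx y hy u v hu hv huv => ?_⟩
    have hE := fun s => hS (Real.exp s) (Real.exp_pos s).le
    simp only [hW, smul_eq_mul]
    rw [← tsum_mul_left, ← tsum_mul_left,
      ← ((hE x).mul_left u).tsum_add ((hE y).mul_left v)]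
    refine (hE _).tsum_le_tsum (fun n => ?_) (((hE x).mul_left u).add ((hE y).mul_left v))
    exact (hH n).conv.2 hx hy hu hv huv
  have hωW : ω =o[atTop] W := by
    rw [isLittleO_iff_nat_mul_le]
    intro N
    have hev : ∀ᶠ t in atTop, ∀ n ∈ Finset.range (2 * N), ω t ≤ 2 * H n t :=
      (Finset.eventually_all _).2 fun n _ => (hH n).big
    filter_upwards [hev, eventually_ge_atTop (0 : ℝ)] with t ht h0
    rw [Real.norm_of_nonneg (hω.2.2.1 t h0), Real.norm_of_nonneg (hWnn t h0)]
    have h1 := (hS t h0).sum_le_tsum (Finset.range (2 * N)) (fun n _ => (hH n).nonneg t h0)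
    have h2 := Finset.sum_le_sum ht
    rw [← Finset.mul_sum] at h2
    simp only [Finset.sum_const, Finset.card_range, nsmul_eq_mul] at h2
    push_cast at h2
    have h3 : ∑ n ∈ Finset.range (2 * N), H n t ≤ W t := h1
    linarith
  have hWt : W =o[atTop] fun t : ℝ => t := by
    refine isLittleO_of_tendsto' ?_ ?_
    · filter_upwards [eventually_gt_atTop (0 : ℝ)] with t ht h
      exact absurd h ht.ne'
    · have := tendsto_tsum_of_dominated_convergence (𝓕 := (atTop : Filter ℝ))
        (f := fun t n => H n t / t) (g := fun _ : ℕ => (0 : ℝ)) hsum2 ?_ ?_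
      · simpa only [tsum_zero, tsum_div_const] using this
      · intro n
        have hb := hω.2.2.2.2.1.tendsto_div_nhds_zero
        refine squeeze_zero' ?_ ?_ hb
        · filter_upwards [eventually_gt_atTop (0 : ℝ)] with t ht
          exact div_nonneg ((hH n).nonneg t ht.le) ht.le
        · filter_upwards [eventually_gt_atTop (0 : ℝ)] with t ht
          have := (hH n).le t ht.le
          gcongr
      · filter_upwards [eventually_gt_atTop (0 : ℝ)] with t ht n
        rw [Real.norm_of_nonneg (div_nonneg ((hH n).nonneg t ht.le) ht.le), div_le_iff₀ ht]
        exact hlin n t ht.le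
  have hWf : W =o[atTop] f := by
    refine isLittleO_of_tendsto' ?_ ?_
    · filter_upwards [hftop.eventually_gt_atTop 0] with t ht h
      exact absurd h ht.ne'
    · have := tendsto_tsum_of_dominated_convergence (𝓕 := (atTop : Filter ℝ))
        (f := fun t n => H n t / f t) (g := fun _ : ℕ => (0 : ℝ)) (hsum2.mul_right 2) ?_ ?_
      · simpa only [tsum_zero, tsum_div_const] using this
      · intro n
        have hb := hof.tendsto_div_nhds_zero
        refine squeeze_zero' ?_ ?_ hb
        · filter_upwards [eventually_gt_atTop (0 : ℝ)] with t ht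
          exact div_nonneg ((hH n).nonneg t ht.le) (hf0 t ht.le)
        · filter_upwards [eventually_gt_atTop (0 : ℝ)] with t ht
          have := (hH n).le t ht.le
          have := hf0 t ht.le
          gcongr
      · filter_upwards [eventually_gt_atTop (0 : ℝ), hftop.eventually_ge_atTop 1] with t ht h1 n
        rw [Real.norm_of_nonneg (div_nonneg ((hH n).nonneg t ht.le) (hf0 t ht.le)),
          div_le_iff₀ (by linarith)]
        refine (hbd n t ht.le).trans ?_
        rw [mul_assoc]
        gcongr
        linarith
  have hW2 : (fun t => W (2 * t)) =O[atTop] W := by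
    refine IsBigO.of_bound 2 ?_
    filter_upwards [eventually_ge_atTop (0 : ℝ)] with t ht
    rw [Real.norm_of_nonneg (hWnn _ (by linarith)), Real.norm_of_nonneg (hWnn t ht)]
    have h3 := hWconc.2 (mem_Ici.2 (by linarith : 0 ≤ 2 * t)) (mem_Ici.2 (le_refl (0:ℝ)))
      (by norm_num : (0:ℝ) ≤ 1 / 2) (by norm_num : (0:ℝ) ≤ 1 / 2) (by norm_num)
    have h0 := hWnn 0 le_rfl
    have e : (1 / 2 : ℝ) • (2 * t) + (1 / 2 : ℝ) • (0 : ℝ) = t := by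
      simp only [smul_eq_mul]; ring
    rw [e] at h3
    simp only [smul_eq_mul] at h3
    linarith
  refine ⟨W, ⟨hWcont, hWmono, hWnn, hW2, hWt, hω.2.2.2.2.2.1.trans hωW, hWconv⟩, ?_, hWconc,
    hωW, hWf⟩
  refine ⟨aux_meas hWcont, ?_⟩
  rw [hasFiniteIntegral_iff_ofReal]
  · have heq : ∫⁻ t in Ici (1:ℝ), ENNReal.ofReal (W t / t ^ 2)
        = ∫⁻ t in Ici (1:ℝ), ∑' n, ENNReal.ofReal (H n t / t ^ 2) := by
      refine lintegral_congr_ae ?_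
      filter_upwards [ae_restrict_mem measurableSet_Ici] with t ht
      have ht : (0 : ℝ) ≤ t := zero_le_one.trans ht
      rw [← ENNReal.ofReal_tsum_of_nonneg
        (fun n => div_nonneg ((hH n).nonneg t ht) (by positivity)) ((hS t ht).div_const _),
        tsum_div_const]
    rw [heq, lintegral_tsum (fun n => (aux_meas (hH n).cont).aemeasurable.ennreal_ofReal)]
    refine lt_of_le_of_lt (ENNReal.tsum_le_tsum fun n =>
      (hHint n).trans (ENNReal.ofReal_le_ofReal (hδ n))) ?_
    rw [← ENNReal.ofReal_tsum_of_nonneg (fun n => by positivity) hsum2]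
    exact ENNReal.ofReal_lt_top
  · filter_upwards [ae_restrict_mem measurableSet_Ici] with t ht
    exact div_nonneg (hWnn t (zero_le_one.trans ht)) (by positivity)
end
end
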